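/- arXiv:1701.04699 — 7 statements merged into one kernel-verified Lean document; each statement's English description precedes it below -/
import Mathlib

section
/- Let Γ ⊂ ℝ^d be a Delone set. Then there exist positive constants c₁, c₂ such that for every nonnegative continuous function f : ℝ^d → ℝ with compact support one has c₁·∫_{ℝ^d} f(x) dx ≤ liminf_{ε→0⁺} Σ_{z∈Γ} ε^d f(εz) ≤ limsup_{ε→0⁺} Σ_{z∈Γ} ε^d f(εz) ≤ c₂·∫_{ℝ^d} f(x) dx. -/
open Filter MeasureTheory Set

lemma delone_finite_inter {d : ℕ} {Γ : Set (EuclideanSpace ℝ (Fin d))} {r : ℝ} (hr : 0 < r)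
    (h : ∀ x : EuclideanSpace ℝ (Fin d), (Γ ∩ Metric.ball x r).Subsingleton)
    {K : Set (EuclideanSpace ℝ (Fin d))} (hK : IsCompact K) : (Γ ∩ K).Finite := by
  obtain ⟨t, -, htf, htc⟩ := hK.finite_cover_balls hr
  refine (htf.biUnion (fun x _ => (h x).finite)).subset ?_
  rintro z ⟨hz, hzK⟩
  obtain ⟨x, hx, hzx⟩ := mem_iUnion₂.1 (htc hzK)
  exact mem_iUnion₂.2 ⟨x, hx, hz, hzx⟩

lemma delone_integrable_ind {d : ℕ} (x : EuclideanSpace ℝ (Fin d)) (ρ c : ℝ) :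
    Integrable ((Metric.ball x ρ).indicator (fun _ => c)) :=
  (integrable_indicator_iff Metric.isOpen_ball.measurableSet).2
    (integrableOn_const Metric.isBounded_ball.measure_lt_top.ne)

lemma delone_integral {d : ℕ} (T : Finset (EuclideanSpace ℝ (Fin d)))
    (f : EuclideanSpace ℝ (Fin d) → ℝ) {ε ρ : ℝ} (hε : 0 < ε) :
    ∫ y, ∑ z ∈ T, (Metric.ball (ε • z) (ε * ρ)).indicator (fun _ => f (ε • z)) y =
      volume.real (Metric.ball (0 : EuclideanSpace ℝ (Fin d)) ρ) *
        ∑ z ∈ T, ε ^ d * f (ε • z) := by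
  rw [integral_finsetSum _ (fun z _ => delone_integrable_ind _ _ _), Finset.mul_sum]
  refine Finset.sum_congr rfl fun z _ => ?_
  rw [integral_indicator Metric.isOpen_ball.measurableSet, setIntegral_const,
    measureReal_def, Measure.addHaar_ball_mul_of_pos _ _ hε, measureReal_def]
  simp [ENNReal.toReal_mul, hε.le]
  ring

lemma delone_main {d : ℕ} {Γ : Set (EuclideanSpace ℝ (Fin d))} {r R : ℝ} (hr : 0 < r)
    (hR : 0 < R)
    (hrel : ∀ x : EuclideanSpace ℝ (Fin d), ∃ z ∈ Γ, dist x z < R)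
    (hdisc : ∀ x : EuclideanSpace ℝ (Fin d), (Γ ∩ Metric.ball x r).Subsingleton)
    {f : EuclideanSpace ℝ (Fin d) → ℝ} (hf : Continuous f) (hc : HasCompactSupport f)
    (h0 : ∀ x, 0 ≤ f x) :
    ∃ M : ℝ, 0 ≤ M ∧ ∀ η > 0, ∀ᶠ ε in nhdsWithin (0:ℝ) (Set.Ioi 0),
      (∫ x, f x) - η * M ≤ volume.real (Metric.ball (0 : EuclideanSpace ℝ (Fin d)) R) *
        ∑ᶠ z ∈ Γ, ε ^ d * f (ε • z) ∧
      volume.real (Metric.ball (0 : EuclideanSpace ℝ (Fin d)) r) *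
        ∑ᶠ z ∈ Γ, ε ^ d * f (ε • z) ≤ (∫ x, f x) + η * M := by
  set K := Metric.cthickening 1 (tsupport f) with hKdef
  have hKc : IsCompact K := IsCompact.cthickening hc
  have hfK : ∀ y, f y ≠ 0 → y ∈ K := fun y hy =>
    Metric.self_subset_cthickening _ (subset_tsupport f hy)
  have hint : Integrable f := hf.integrable_of_hasCompactSupport hc
  have hintK : ∀ η : ℝ, Integrable (K.indicator (fun _ => η)) := fun η =>
    (integrable_indicator_iff hKc.measurableSet).2 (integrableOn_const hKc.measure_lt_top.ne)
  have hIK : ∀ η : ℝ, ∫ y, K.indicator (fun _ => η) y = η * volume.real K := fun η => by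
    rw [integral_indicator hKc.measurableSet, setIntegral_const, smul_eq_mul, mul_comm]
  refine ⟨volume.real K, measureReal_nonneg, fun η hη => ?_⟩
  obtain ⟨δ, hδ, huc⟩ := Metric.uniformContinuous_iff.1
    (hc.uniformContinuous_of_continuous hf) η hη
  have hsmall : ∀ᶠ ε in nhdsWithin (0:ℝ) (Set.Ioi 0), ε < min δ 1 / (r + R) :=
    nhdsWithin_le_nhds (Iio_mem_nhds (by positivity))
  filter_upwards [hsmall, self_mem_nhdsWithin] with ε hs hε
  replace hε : 0 < ε := hε
  rw [lt_div_iff₀ (by positivity), lt_min_iff] at hs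
  obtain ⟨hs1, hs2⟩ := hs
  have her : 0 < ε * r := by positivity
  have heR : 0 < ε * R := by positivity
  have hT : (Γ ∩ {z | ε • z ∈ tsupport f}).Finite := by
    refine delone_finite_inter hr hdisc ?_
    exact (Homeomorph.smulOfNeZero ε hε.ne').isClosedEmbedding.isCompact_preimage hc
  have hsum : ∑ᶠ z ∈ Γ, ε ^ d * f (ε • z) = ∑ z ∈ hT.toFinset, ε ^ d * f (ε • z) := by
    refine finsum_mem_eq_sum_of_inter_support_eq _ ?_
    ext z
    simp only [mem_inter_iff, Function.mem_support, Finite.coe_toFinset, mem_ofPred_eq]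
    refine ⟨fun ⟨a, b⟩ => ⟨⟨a, subset_tsupport f (right_ne_zero_of_mul b)⟩, b⟩,
      fun ⟨a, b⟩ => ⟨a.1, b⟩⟩
  have hdist : ∀ y z : EuclideanSpace ℝ (Fin d), dist y (ε • z) = ε * dist (ε⁻¹ • y) z := by
    intro y z
    conv_lhs => rw [← smul_inv_smul₀ hε.ne' y]
    rw [dist_smul₀, Real.norm_of_nonneg hε.le]
  have hterm : ∀ y z ρ, 0 ≤ (Metric.ball (ε • z) (ε * ρ)).indicator (fun _ => f (ε • z)) y :=
    fun y z ρ => indicator_nonneg (fun _ _ => h0 _) _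
  have hKn : ∀ y, 0 ≤ K.indicator (fun _ => η) y := fun y => indicator_nonneg (fun _ _ => hη.le) _
  have hintS : ∀ ρ, Integrable (fun y => ∑ z ∈ hT.toFinset,
      (Metric.ball (ε • z) (ε * ρ)).indicator (fun _ => f (ε • z)) y) := fun ρ =>
    integrable_finsetSum _ (fun z _ => delone_integrable_ind _ _ _)
  rw [hsum, ← delone_integral _ _ hε, ← delone_integral _ _ hε, ← hIK, ← integral_sub hint (hintK η),
    ← integral_add hint (hintK η)]
  constructor
  · refine integral_mono (hint.sub (hintK η)) (hintS R) fun y => ?_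
    show f y - K.indicator (fun _ => η) y ≤ ∑ z ∈ hT.toFinset,
      (Metric.ball (ε • z) (ε * R)).indicator (fun _ => f (ε • z)) y
    have hnn := Finset.sum_nonneg (s := hT.toFinset) (fun z _ => hterm y z R)
    by_cases hy : f y = 0
    · linarith [hKn y]
    rw [indicator_of_mem (hfK y hy)]
    obtain ⟨z, hz, hyz⟩ := hrel (ε⁻¹ • y)
    have hd : dist y (ε • z) < ε * R := by
      rw [hdist]; exact mul_lt_mul_of_pos_left hyz hε
    have h1 := huc (a := y) (b := ε • z) (by linarith)
    rw [Real.dist_eq, abs_lt] at h1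
    by_cases hzT : z ∈ hT.toFinset
    · have := Finset.single_le_sum (fun z _ => hterm y z R) hzT
      rw [indicator_of_mem (Metric.mem_ball.2 hd)] at this
      linarith
    · have : f (ε • z) = 0 := by
        by_contra hne
        exact hzT (hT.mem_toFinset.2 ⟨hz, subset_tsupport f hne⟩)
      linarith
  · refine integral_mono (hintS r) (hint.add (hintK η)) fun y => ?_
    show ∑ z ∈ hT.toFinset,
      (Metric.ball (ε • z) (ε * r)).indicator (fun _ => f (ε • z)) y
        ≤ f y + K.indicator (fun _ => η) y
    by_cases hex : ∃ z ∈ hT.toFinset, y ∈ Metric.ball (ε • z) (ε * r)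
    · obtain ⟨z, hzT, hyz⟩ := hex
      have hball : ∀ w, y ∈ Metric.ball (ε • w) (ε * r) → w ∈ Metric.ball (ε⁻¹ • y) r := by
        intro w hw
        rw [Metric.mem_ball, hdist] at hw
        rw [Metric.mem_ball, dist_comm]
        exact lt_of_mul_lt_mul_left hw hε.le
      rw [Finset.sum_eq_single z, indicator_of_mem hyz]
      · rw [Metric.mem_ball] at hyz
        have h1 := huc (a := y) (b := ε • z) (by linarith)
        rw [Real.dist_eq, abs_lt] at h1
        have hyK : y ∈ K := Metric.mem_cthickening_of_dist_le y (ε • z) 1 _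
          (hT.mem_toFinset.1 hzT).2 (by linarith)
        rw [indicator_of_mem hyK]
        linarith
      · intro w hw hwz
        refine indicator_of_notMem (fun hyw => hwz ?_) _
        exact hdisc _ ⟨(hT.mem_toFinset.1 hw).1, hball w hyw⟩
          ⟨(hT.mem_toFinset.1 hzT).1, hball z hyz⟩
      · exact fun h => absurd hzT h
    · push Not at hex
      rw [Finset.sum_eq_zero fun z hz => indicator_of_notMem (hex z hz) _]
      linarith [hKn y, h0 y]

/-- **Delone sets and Riemann sums.**  If `Γ ⊆ ℝ^d` is a Delone set (relatively dense and
uniformly discrete), then there exist positive constants `c₁, c₂` such that for every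
nonnegative continuous compactly supported `f : ℝ^d → ℝ`,
`c₁ ∫ f ≤ liminf_{ε→0⁺} Σ_{z∈Γ} ε^d f(εz) ≤ limsup_{ε→0⁺} Σ_{z∈Γ} ε^d f(εz) ≤ c₂ ∫ f`. -/
theorem delone_riemann_sum_bounds (d : ℕ) (Γ : Set (EuclideanSpace ℝ (Fin d)))
    (hrel : ∃ R > (0:ℝ), ∀ x : EuclideanSpace ℝ (Fin d), ∃ z ∈ Γ, dist x z ≤ R)
    (hdisc : ∃ r > (0:ℝ), ∀ x : EuclideanSpace ℝ (Fin d),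
      (Γ ∩ Metric.ball x r).Subsingleton) :
    ∃ c₁ > (0:ℝ), ∃ c₂ > (0:ℝ),
      ∀ f : EuclideanSpace ℝ (Fin d) → ℝ, Continuous f → HasCompactSupport f →
        (∀ x, 0 ≤ f x) →
        c₁ * ∫ x, f x ≤
            liminf (fun ε : ℝ => ∑ᶠ z ∈ Γ, ε ^ d * f (ε • z)) (nhdsWithin 0 (Set.Ioi 0)) ∧
        liminf (fun ε : ℝ => ∑ᶠ z ∈ Γ, ε ^ d * f (ε • z)) (nhdsWithin 0 (Set.Ioi 0)) ≤
            limsup (fun ε : ℝ => ∑ᶠ z ∈ Γ, ε ^ d * f (ε • z)) (nhdsWithin 0 (Set.Ioi 0)) ∧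
        limsup (fun ε : ℝ => ∑ᶠ z ∈ Γ, ε ^ d * f (ε • z)) (nhdsWithin 0 (Set.Ioi 0)) ≤
            c₂ * ∫ x, f x := by
  obtain ⟨R₀, hR₀, hrel⟩ := hrel
  obtain ⟨r, hr, hdisc⟩ := hdisc
  set R := R₀ + 1 with hRdef
  have hR : 0 < R := by positivity
  have hpos : ∀ ρ > 0, 0 < volume.real (Metric.ball (0 : EuclideanSpace ℝ (Fin d)) ρ) :=
    fun ρ hρ => ENNReal.toReal_pos (Metric.measure_ball_pos _ _ hρ).ne'
      Metric.isBounded_ball.measure_lt_top.ne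
  have hW := hpos R hR
  have hV := hpos r hr
  refine ⟨_, inv_pos.2 hW, _, inv_pos.2 hV, fun f hf hc h0 => ?_⟩
  obtain ⟨M, hM, hmain⟩ := delone_main (Γ := Γ) hr hR
    (fun x => (hrel x).imp fun z hz => ⟨hz.1, by linarith [hz.2]⟩) hdisc hf hc h0
  set W := volume.real (Metric.ball (0 : EuclideanSpace ℝ (Fin d)) R)
  set V := volume.real (Metric.ball (0 : EuclideanSpace ℝ (Fin d)) r)
  set S := fun ε : ℝ => ∑ᶠ z ∈ Γ, ε ^ d * f (ε • z) with hS
  set I := ∫ x, f x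
  have hup : ∀ η > 0, ∀ᶠ ε in nhdsWithin (0:ℝ) (Set.Ioi 0), S ε ≤ V⁻¹ * (I + η * M) :=
    fun η hη => (hmain η hη).mono fun ε h => by
      rw [inv_mul_eq_div, le_div_iff₀ hV, mul_comm]; exact h.2
  have hlo : ∀ η > 0, ∀ᶠ ε in nhdsWithin (0:ℝ) (Set.Ioi 0), W⁻¹ * (I - η * M) ≤ S ε :=
    fun η hη => (hmain η hη).mono fun ε h => by
      rw [inv_mul_eq_div, div_le_iff₀ hW, mul_comm (S ε)]; exact h.1
  have hba : IsBoundedUnder (· ≤ ·) (nhdsWithin (0:ℝ) (Set.Ioi 0)) S :=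
    isBoundedUnder_of_eventually_le (hup 1 one_pos)
  have hbb : IsBoundedUnder (· ≥ ·) (nhdsWithin (0:ℝ) (Set.Ioi 0)) S :=
    isBoundedUnder_of_eventually_ge (hlo 1 one_pos)
  refine ⟨?_, liminf_le_limsup hba hbb, ?_⟩
  · have ht : Tendsto (fun η : ℝ => W⁻¹ * (I - η * M)) (nhdsWithin 0 (Set.Ioi 0))
        (nhds (W⁻¹ * I)) := by
      have : Continuous (fun η : ℝ => W⁻¹ * (I - η * M)) := by fun_prop
      simpa using (this.tendsto 0).mono_left nhdsWithin_le_nhds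
    refine le_of_tendsto ht ?_
    filter_upwards [self_mem_nhdsWithin] with η hη
    exact le_liminf_of_le hba.isCoboundedUnder_ge (hlo η hη)
  · have ht : Tendsto (fun η : ℝ => V⁻¹ * (I + η * M)) (nhdsWithin 0 (Set.Ioi 0))
        (nhds (V⁻¹ * I)) := by
      have : Continuous (fun η : ℝ => V⁻¹ * (I + η * M)) := by fun_prop
      simpa using (this.tendsto 0).mono_left nhdsWithin_le_nhds
    refine ge_of_tendsto ht ?_
    filter_upwards [self_mem_nhdsWithin] with η hη
    exact limsup_le_of_le hbb.isCoboundedUnder_le (hup η hη)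
end

section
/- The probability that two randomly chosen positive integers are coprime is 6/π²; precisely, lim_{N→∞} (1/N²)·|{(a,b) ∈ ℕ×ℕ : gcd(a,b) = 1, 1 ≤ a ≤ N, 1 ≤ b ≤ N}| = 6/π². -/
open Filter

open ArithmeticFunction in
lemma cpd_indicator (g : ℕ) :
    ∑ d ∈ g.divisors, moebius d = if g = 1 then 1 else 0 := by
  rw [← coe_mul_zeta_apply, moebius_mul_coe_zeta, one_apply]

open ArithmeticFunction in
lemma cpd_count (N : ℕ) :
    ({p : ℕ × ℕ | Nat.gcd p.1 p.2 = 1 ∧ 1 ≤ p.1 ∧ p.1 ≤ N ∧ 1 ≤ p.2 ∧ p.2 ≤ N}.ncard : ℤ)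
      = ∑ d ∈ Finset.Ioc 0 N, moebius d * ((N / d : ℕ) : ℤ) ^ 2 := by
  have h1 : {p : ℕ × ℕ | Nat.gcd p.1 p.2 = 1 ∧ 1 ≤ p.1 ∧ p.1 ≤ N ∧ 1 ≤ p.2 ∧ p.2 ≤ N}
      = ((Finset.Ioc 0 N ×ˢ Finset.Ioc 0 N).filter (fun p => Nat.gcd p.1 p.2 = 1) :
        Finset (ℕ × ℕ)) := by
    ext p
    simp only [Set.mem_ofPred_eq, Finset.coe_filter, Finset.mem_product, Finset.mem_Ioc]
    constructor
    · rintro ⟨a, b, c, d, e⟩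
      exact ⟨⟨⟨b, c⟩, d, e⟩, a⟩
    · rintro ⟨⟨⟨b, c⟩, d, e⟩, a⟩
      exact ⟨a, b, c, d, e⟩
  rw [h1, Set.ncard_coe_finset, Finset.card_filter]
  simp only [Nat.cast_sum, Nat.cast_ite, Nat.cast_one, Nat.cast_zero]
  have h2 : ∀ p ∈ Finset.Ioc 0 N ×ˢ Finset.Ioc 0 N,
      (if Nat.gcd p.1 p.2 = 1 then (1 : ℤ) else 0)
        = ∑ d ∈ Finset.Ioc 0 N, if d ∣ p.1 ∧ d ∣ p.2 then moebius d else 0 := by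
    intro p hp
    simp only [Finset.mem_product, Finset.mem_Ioc] at hp
    have hg : 0 < Nat.gcd p.1 p.2 := Nat.gcd_pos_of_pos_left _ hp.1.1
    rw [← cpd_indicator, ← Finset.sum_filter]
    apply Finset.sum_congr _ (fun _ _ => rfl)
    ext d
    simp only [Nat.mem_divisors, Finset.mem_filter, Finset.mem_Ioc, Nat.dvd_gcd_iff]
    constructor
    · rintro ⟨h, -⟩
      exact ⟨⟨Nat.pos_of_dvd_of_pos h.1 hp.1.1, (Nat.le_of_dvd hp.1.1 h.1).trans hp.1.2⟩, h⟩
    · rintro ⟨-, h⟩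
      exact ⟨h, hg.ne'⟩
  rw [Finset.sum_congr rfl h2, Finset.sum_comm]
  refine Finset.sum_congr rfl fun d _ => ?_
  rw [← Finset.sum_filter, Finset.sum_const, Finset.filter_product, Finset.card_product,
    Nat.Ioc_filter_dvd_card_eq_div]
  simp only [nsmul_eq_mul, Nat.cast_mul]
  ring

open ArithmeticFunction in
lemma cpd_tsum : ∑' d : ℕ, (moebius d : ℝ) * (1 / (d : ℝ)) ^ 2 = 6 / Real.pi ^ 2 := by
  have h := LSeries_zeta_mul_Lseries_moebius (s := 2) (by norm_num)
  rw [LSeries_zeta_eq_riemannZeta (by norm_num), riemannZeta_two] at h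
  have h2 : LSeries (fun n => ((moebius n : ℤ) : ℂ)) 2
      = ((∑' d : ℕ, (moebius d : ℝ) * (1 / (d : ℝ)) ^ 2 : ℝ) : ℂ) := by
    rw [Complex.ofReal_tsum, LSeries]
    refine tsum_congr fun d => ?_
    rcases eq_or_ne d 0 with rfl | hd
    · simp
    · rw [LSeries.term_of_ne_zero hd]
      have : (d : ℂ) ^ (2 : ℂ) = (d : ℂ) ^ (2 : ℕ) := by
        rw [← Complex.cpow_natCast]; norm_num
      rw [this]
      push_cast
      rw [div_pow, one_pow, mul_one_div]
  rw [h2] at h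
  have h3 : Real.pi ^ 2 / 6 * (∑' d : ℕ, (moebius d : ℝ) * (1 / (d : ℝ)) ^ 2) = 1 := by
    exact_mod_cast h
  have hp := Real.pi_pos
  field_simp at h3 ⊢
  linarith

/-- **Chebyshev's problem / Gauss's diary entry.**  The probability that two randomly chosen
positive integers are coprime is `6/π²`:
`lim_{N→∞} (1/N²)·|{(a,b) : gcd(a,b)=1, 1 ≤ a,b ≤ N}| = 6/π²`. -/
theorem coprime_pairs_density :
    Tendsto
      (fun N : ℕ =>
        (1 : ℝ) / N ^ 2 *
          ({p : ℕ × ℕ | Nat.gcd p.1 p.2 = 1 ∧ 1 ≤ p.1 ∧ p.1 ≤ N ∧ 1 ≤ p.2 ∧ p.2 ≤ N}.ncard : ℝ))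
      atTop (nhds (6 / Real.pi ^ 2)) := by
  have key : ∀ N : ℕ, (1 : ℝ) / N ^ 2 *
      ({p : ℕ × ℕ | Nat.gcd p.1 p.2 = 1 ∧ 1 ≤ p.1 ∧ p.1 ≤ N ∧ 1 ≤ p.2 ∧ p.2 ≤ N}.ncard : ℝ)
      = ∑' d : ℕ, (ArithmeticFunction.moebius d : ℝ) * (((N / d : ℕ) : ℝ) / N) ^ 2 := by
    intro N
    have h := congrArg (Int.cast : ℤ → ℝ) (cpd_count N)
    simp only [Int.cast_natCast, Int.cast_sum, Int.cast_mul, Int.cast_pow] at h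
    rw [h, tsum_eq_sum (s := Finset.Ioc 0 N), Finset.mul_sum]
    · refine Finset.sum_congr rfl fun d _ => ?_
      rw [div_pow]
      ring
    · intro d hd
      rcases Nat.eq_zero_or_pos d with rfl | h0
      · simp
      · have : N < d := by
          by_contra hc
          exact hd (Finset.mem_Ioc.2 ⟨h0, not_lt.1 hc⟩)
        simp [Nat.div_eq_of_lt this]
  simp_rw [key]
  rw [← cpd_tsum]
  refine tendsto_tsum_of_dominated_convergence (bound := fun d : ℕ => (1 : ℝ) / (d : ℝ) ^ 2)
    hasSum_zeta_two.summable ?_ ?_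
  · intro d
    refine Tendsto.const_mul _ (Tendsto.pow ?_ 2)
    have h := (tendsto_nat_floor_mul_div_atTop (R := ℝ) (a := 1 / (d : ℝ)) (by positivity)).comp
      tendsto_natCast_atTop_atTop
    refine h.congr fun N => ?_
    simp only [Function.comp]
    rw [one_div_mul_eq_div, Nat.floor_div_eq_div]
  · refine Eventually.of_forall fun N d => ?_
    rw [norm_mul, norm_pow]
    have h1 : ‖(ArithmeticFunction.moebius d : ℝ)‖ ≤ 1 := by
      rw [Real.norm_eq_abs]
      exact_mod_cast ArithmeticFunction.abs_moebius_le_one (n := d)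
    have h2 : ‖((N / d : ℕ) : ℝ) / N‖ ≤ 1 / (d : ℝ) := by
      rw [Real.norm_of_nonneg (by positivity)]
      rcases Nat.eq_zero_or_pos N with rfl | h0
      · simp
      · have h0' : (0 : ℝ) < N := by exact_mod_cast h0
        rw [div_le_iff₀ h0', one_div_mul_eq_div]
        exact Nat.cast_div_le
    calc _ ≤ 1 * (1 / (d : ℝ)) ^ 2 := by gcongr
      _ = _ := by rw [one_mul, div_pow, one_pow]
end

section
/- Let ℤ²,*_prim = {(m,n) ∈ ℤ² : gcd(m,n) = 1 and m − n is odd}. For every continuous function f : ℝ² → ℝ with compact support, lim_{ε→0⁺} Σ_{z∈ℤ²,*_prim} ε² f(εz) = (4/π²) · ∫_{ℝ²} f(x) dx; that is, ℤ²,*_prim has constant density 4/π². -/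
open Filter MeasureTheory

/-- `ℤ²,*_prim`: pairs of coprime integers `(m,n)` with `m - n` odd. -/
def ZPrimStar : Set (ℤ × ℤ) :=
  {p | Int.gcd p.1 p.2 = 1 ∧ Odd (p.1 - p.2)}

lemma odd_sq_sum : HasSum (fun d : ℕ => if Odd d then (1:ℝ) / (d:ℝ)^2 else 0) (Real.pi^2/8) := by
  have h := hasSum_zeta_two
  have h2 : HasSum (fun d : ℕ => if Even d then (1:ℝ) / (d:ℝ)^2 else 0) (Real.pi^2/6/4) := by
    have inj : Function.Injective (fun k : ℕ => 2 * k) := fun a b h => by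
      simpa using h
    rw [← inj.hasSum_iff]
    · have := h.div_const 4
      convert! this using 1
      funext k
      simp
      ring
    · intro x hx
      rw [if_neg]
      rintro ⟨k, hk⟩
      exact hx ⟨k, by simp; omega⟩
  convert! h.sub h2 using 1
  · funext d
    by_cases hd : Even d
    · simp [hd]
    · simp [hd, Nat.not_even_iff_odd.1 hd]
  · ring

lemma odd_moebius_sum :
    ∑' d : ℕ, (if Odd d then (ArithmeticFunction.moebius d : ℝ) / (d:ℝ)^2 else 0)
      = 8 / Real.pi^2 := by
  have h := DirichletCharacter.LSeries.mul_mu_eq_one (1 : DirichletCharacter ℂ 2)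
    (s := 2) (by norm_num)
  have hchi : ∀ n : ℕ, (1 : DirichletCharacter ℂ 2) (n : ZMod 2) = if Odd n then 1 else 0 := by
    intro n
    split_ifs with hn
    · rw [ZMod.natCast_eq_one_iff_odd.2 hn]; simp
    · rw [ZMod.natCast_eq_zero_iff_even.2 (Nat.not_odd_iff_even.1 hn)]
      exact MulChar.map_zero _
  have e1 : LSeries (fun n : ℕ => (1 : DirichletCharacter ℂ 2) (n : ZMod 2)) 2
      = ((Real.pi^2/8 : ℝ) : ℂ) := by
    rw [← odd_sq_sum.tsum_eq, Complex.ofReal_tsum]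
    unfold LSeries
    congr 1
    funext n
    rw [LSeries.term_def, hchi]
    rcases eq_or_ne n 0 with rfl | h0
    · simp
    · rw [if_neg h0]; split_ifs <;> simp
  have e2 : LSeries ((fun n : ℕ => (1 : DirichletCharacter ℂ 2) (n : ZMod 2)) *
      (fun n : ℕ => ((ArithmeticFunction.moebius n : ℤ) : ℂ))) 2
      = ((∑' d : ℕ, (if Odd d then (ArithmeticFunction.moebius d : ℝ) / (d:ℝ)^2 else 0) : ℝ) : ℂ) := by
    rw [Complex.ofReal_tsum]
    unfold LSeries
    congr 1
    funext n
    rw [LSeries.term_def, Pi.mul_apply, hchi]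
    rcases eq_or_ne n 0 with rfl | h0
    · simp
    · rw [if_neg h0]; split_ifs <;> simp
  rw [e1, e2] at h
  have h' := (by exact_mod_cast h : Real.pi^2/8 * (∑' d : ℕ, (if Odd d then (ArithmeticFunction.moebius d : ℝ) / (d:ℝ)^2 else 0)) = 1)
  have := Real.pi_pos
  field_simp at h' ⊢
  linarith

lemma int_step (h : ℤ × ℤ → ℝ) (a b : ℝ) (ha : 0 < a) (hb : 0 < b)
    (hi : Integrable (fun x : ℝ × ℝ => h (⌊x.1 / a⌋, ⌊x.2 / b⌋))) :
    ∫ x : ℝ × ℝ, h (⌊x.1 / a⌋, ⌊x.2 / b⌋) = a * b * ∑' z, h z := by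
  set φ : ℝ × ℝ → ℤ × ℤ := fun x => (⌊x.1 / a⌋, ⌊x.2 / b⌋) with hφ
  have hs : ∀ z : ℤ × ℤ, φ ⁻¹' {z} =
      Set.Ico (a * z.1) (a * z.1 + a) ×ˢ Set.Ico (b * z.2) (b * z.2 + b) := by
    rintro ⟨m, n⟩
    ext ⟨x, y⟩
    simp only [hφ, Set.mem_preimage, Set.mem_singleton_iff, Prod.mk.injEq, Int.floor_eq_iff,
      Set.mem_prod, Set.mem_Ico, le_div_iff₀ ha, div_lt_iff₀ ha, le_div_iff₀ hb, div_lt_iff₀ hb,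
      add_mul, one_mul, mul_comm a, mul_comm b]
  have hm : ∀ z, MeasurableSet (φ ⁻¹' {z}) := fun z => by
    rw [hs]; exact measurableSet_Ico.prod measurableSet_Ico
  have key := hasSum_integral_iUnion (μ := volume) (f := fun x => h (φ x)) hm
    (fun i j hij => by
      refine Disjoint.preimage _ ?_
      simpa using hij) hi.integrableOn
  have hu : (⋃ z, φ ⁻¹' {z}) = Set.univ := by
    ext x; simp
  rw [hu, setIntegral_univ] at key
  rw [← key.tsum_eq, ← tsum_mul_left]
  congr 1
  funext z
  rw [setIntegral_congr_fun (g := fun _ => h z) (hm z)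
    (fun x hx => by simp only [Set.mem_preimage, Set.mem_singleton_iff] at hx; simp [hx])]
  rw [setIntegral_const, hs, Measure.volume_eq_prod, measureReal_prod_prod]
  simp [ha.le, hb.le]

noncomputable def gridPt (w : ℤ × ℤ) : ℤ × ℤ := (2 * w.1 + if Even w.2 then 1 else 0, w.2)

noncomputable def scaled (f : ℝ × ℝ → ℝ) (ε : ℝ) (z : ℤ × ℤ) : ℝ :=
  f (ε * (z.1 : ℝ), ε * (z.2 : ℝ))

noncomputable def oddSum (f : ℝ × ℝ → ℝ) (ε : ℝ) : ℝ :=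
  ∑' z : ℤ × ℤ, if Odd (z.1 - z.2) then ε ^ 2 * scaled f ε z else 0

noncomputable def stepPt (ε : ℝ) (x : ℝ × ℝ) : ℝ × ℝ :=
  (ε * ((gridPt (⌊x.1 / (2 * ε)⌋, ⌊x.2 / ε⌋)).1 : ℝ),
    ε * ((gridPt (⌊x.1 / (2 * ε)⌋, ⌊x.2 / ε⌋)).2 : ℝ))

lemma stepPt_close (ε : ℝ) (hε : 0 < ε) (x : ℝ × ℝ) : ‖stepPt ε x - x‖ ≤ 2 * ε := by
  have h2 : 0 < 2 * ε := by positivity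
  have a1 := Int.floor_le (x.1 / (2 * ε))
  have a2 := Int.lt_floor_add_one (x.1 / (2 * ε))
  have b1 := Int.floor_le (x.2 / ε)
  have b2 := Int.lt_floor_add_one (x.2 / ε)
  rw [le_div_iff₀ h2] at a1
  rw [div_lt_iff₀ h2] at a2
  rw [le_div_iff₀ hε] at b1
  rw [div_lt_iff₀ hε] at b2
  rw [Prod.norm_def]
  refine max_le ?_ ?_
  · simp only [stepPt, gridPt, Prod.fst_sub, Real.norm_eq_abs, abs_le]
    split_ifs <;> push_cast <;> constructor <;> nlinarith
  · simp only [stepPt, gridPt, Prod.snd_sub, Real.norm_eq_abs, abs_le]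
    constructor <;> nlinarith

lemma stepPt_meas (f : ℝ × ℝ → ℝ) (ε : ℝ) : Measurable (fun x => f (stepPt ε x)) := by
  have : (fun x => f (stepPt ε x)) =
      (fun w : ℤ × ℤ => f (ε * ((gridPt w).1 : ℝ), ε * ((gridPt w).2 : ℝ))) ∘
      (fun x : ℝ × ℝ => (⌊x.1 / (2 * ε)⌋, ⌊x.2 / ε⌋)) := rfl
  rw [this]
  refine (measurable_of_countable _).comp ?_
  exact ((measurable_fst.div_const _).floor).prodMk ((measurable_snd.div_const _).floor)

lemma gridPt_inj : Function.Injective gridPt := by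
  rintro ⟨a, b⟩ ⟨c, d⟩ h
  simp only [gridPt, Prod.mk.injEq] at h ⊢
  obtain ⟨h1, rfl⟩ := h
  refine ⟨?_, rfl⟩
  omega

lemma gridPt_odd (w : ℤ × ℤ) : Odd ((gridPt w).1 - (gridPt w).2) := by
  simp only [gridPt]
  split_ifs with h <;> [skip; rw [Int.not_even_iff_odd] at h] <;>
  · obtain ⟨k, hk⟩ := h
    rw [Int.odd_iff]; omega

lemma mem_range_gridPt (z : ℤ × ℤ) (h : Odd (z.1 - z.2)) : z ∈ Set.range gridPt := by
  obtain ⟨a, b⟩ := z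
  rw [Int.odd_iff] at h
  simp only at h
  by_cases hb : Even b
  · refine ⟨((a - 1) / 2, b), ?_⟩
    rw [gridPt]
    simp only [hb, if_true, Prod.mk.injEq, and_true]
    rw [Int.even_iff] at hb
    omega
  · refine ⟨(a / 2, b), ?_⟩
    rw [gridPt]
    simp only [hb, if_false, Prod.mk.injEq, and_true]
    rw [Int.even_iff] at hb
    omega

lemma oddSum_eq (f : ℝ × ℝ → ℝ) (ε : ℝ) (hε : 0 < ε)
    (hi : Integrable (fun x => f (stepPt ε x))) :
    oddSum f ε = 1 / 2 * ∫ x, f (stepPt ε x) := by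
  have h := int_step (fun w => scaled f ε (gridPt w)) (2 * ε) ε (by positivity) hε hi
  have h' : ∫ x, f (stepPt ε x) = 2 * ε * ε * ∑' w, scaled f ε (gridPt w) := h
  rw [h', oddSum, ← gridPt_inj.tsum_eq]
  · simp only [gridPt_odd, if_true]
    rw [tsum_mul_left]
    ring
  · intro z hz
    apply mem_range_gridPt
    by_contra hn
    simp [hn] at hz


lemma step_bound (f : ℝ × ℝ → ℝ) (R M : ℝ) (hR : ∀ x, f x ≠ 0 → ‖x‖ ≤ R) (hM : ∀ x, ‖f x‖ ≤ M)
    (ε : ℝ) (hε : 0 < ε) (hεR : ε ≤ R) (x : ℝ × ℝ) :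
    ‖f (stepPt ε x)‖ ≤ (Metric.closedBall (0 : ℝ × ℝ) (3 * R)).indicator (fun _ => M) x := by
  by_cases hx : x ∈ Metric.closedBall (0 : ℝ × ℝ) (3 * R)
  · rw [Set.indicator_of_mem hx]; exact hM _
  · rw [Set.indicator_of_notMem hx]
    by_contra hne
    have h0 : f (stepPt ε x) ≠ 0 := by
      intro h0; rw [h0] at hne; simp at hne
    have h1 := hR _ h0
    have h2 := stepPt_close ε hε x
    apply hx
    rw [mem_closedBall_zero_iff]
    have h3 : ‖x‖ ≤ ‖stepPt ε x‖ + ‖stepPt ε x - x‖ := by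
      have := norm_sub_le (stepPt ε x) (stepPt ε x - x)
      simpa using this
    linarith

lemma bound_integrable (R M : ℝ) : Integrable
    ((Metric.closedBall (0 : ℝ × ℝ) (3 * R)).indicator (fun _ => M)) := by
  rw [integrable_indicator_iff measurableSet_closedBall]
  exact integrableOn_const measure_closedBall_lt_top.ne

lemma step_integrable (f : ℝ × ℝ → ℝ) (R M : ℝ) (hR : ∀ x, f x ≠ 0 → ‖x‖ ≤ R)
    (hM : ∀ x, ‖f x‖ ≤ M) (ε : ℝ) (hε : 0 < ε) (hεR : ε ≤ R) :
    Integrable (fun x => f (stepPt ε x)) :=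
  (bound_integrable R M).mono' (stepPt_meas f ε).aestronglyMeasurable
    (ae_of_all _ (step_bound f R M hR hM ε hε hεR))

lemma one_le_norm_of_ne (z : ℤ × ℤ) (hz : z ≠ 0) : 1 ≤ ‖((z.1 : ℝ), (z.2 : ℝ))‖ := by
  rw [Prod.norm_def]
  by_cases h1 : z.1 = 0
  · have h2 : z.2 ≠ 0 := fun h2 => hz (Prod.ext h1 h2)
    refine le_max_of_le_right ?_
    simp only [Real.norm_eq_abs]
    exact_mod_cast Int.one_le_abs h2
  · refine le_max_of_le_left ?_
    simp only [Real.norm_eq_abs]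
    exact_mod_cast Int.one_le_abs h1

lemma ne_zero_of_odd (z : ℤ × ℤ) (hz : Odd (z.1 - z.2)) : z ≠ 0 := by
  rintro rfl; simp at hz

lemma scaled_ne (f : ℝ × ℝ → ℝ) (R : ℝ) (hR : ∀ x, f x ≠ 0 → ‖x‖ ≤ R)
    (ε : ℝ) (hε : 0 < ε) (z : ℤ × ℤ) (h : scaled f ε z ≠ 0) :
    ε * ‖((z.1 : ℝ), (z.2 : ℝ))‖ ≤ R := by
  have := hR _ h
  have e : (ε * (z.1 : ℝ), ε * (z.2 : ℝ)) = ε • ((z.1 : ℝ), (z.2 : ℝ)) := by simp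
  rwa [e, norm_smul, Real.norm_of_nonneg hε.le] at this

lemma oddSum_bound (f : ℝ × ℝ → ℝ) (R M : ℝ) (hR : ∀ x, f x ≠ 0 → ‖x‖ ≤ R)
    (hM : ∀ x, ‖f x‖ ≤ M) : ∃ C, ∀ ε : ℝ, 0 < ε → ‖oddSum f ε‖ ≤ C := by
  refine ⟨max 0 (1 / 2 * ∫ x, (Metric.closedBall (0 : ℝ × ℝ) (3 * R)).indicator (fun _ => M) x), ?_⟩
  intro ε hε
  by_cases hεR : ε ≤ R
  · refine le_max_of_le_right ?_
    rw [oddSum_eq f ε hε (step_integrable f R M hR hM ε hε hεR), norm_mul]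
    have := norm_integral_le_of_norm_le (bound_integrable R M)
      (ae_of_all _ (step_bound f R M hR hM ε hε hεR))
    have e : ‖(1 / 2 : ℝ)‖ = 1 / 2 := by norm_num
    rw [e]
    linarith
  · refine le_max_of_le_left ?_
    have : oddSum f ε = 0 := by
      rw [oddSum]
      convert! tsum_zero with z
      split_ifs with hz
      · by_contra hne
        have h1 := scaled_ne f R hR ε hε z (right_ne_zero_of_mul hne)
        have h2 := one_le_norm_of_ne z (ne_zero_of_odd z hz)
        nlinarith
      · rfl
    simp [this]

lemma oddSum_tendsto (f : ℝ × ℝ → ℝ) (hf : Continuous f) (R M : ℝ) (hR0 : 0 < R)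
    (hR : ∀ x, f x ≠ 0 → ‖x‖ ≤ R) (hM : ∀ x, ‖f x‖ ≤ M) :
    Tendsto (oddSum f) (nhdsWithin 0 (Set.Ioi 0)) (nhds (1 / 2 * ∫ x, f x)) := by
  have hev : ∀ᶠ ε : ℝ in nhdsWithin 0 (Set.Ioi 0), 0 < ε ∧ ε ≤ R := by
    filter_upwards [Ioc_mem_nhdsGT hR0] with ε h using h
  have h1 : Tendsto (fun ε => ∫ x, f (stepPt ε x)) (nhdsWithin 0 (Set.Ioi 0))
      (nhds (∫ x, f x)) := by
    refine tendsto_integral_filter_of_dominated_convergence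
      ((Metric.closedBall (0 : ℝ × ℝ) (3 * R)).indicator (fun _ => M)) ?_ ?_
      (bound_integrable R M) ?_
    · exact Eventually.of_forall fun ε => (stepPt_meas f ε).aestronglyMeasurable
    · filter_upwards [hev] with ε h
      exact ae_of_all _ (step_bound f R M hR hM ε h.1 h.2)
    · refine ae_of_all _ fun x => ?_
      refine (hf.tendsto x).comp ?_
      rw [tendsto_iff_norm_sub_tendsto_zero]
      refine squeeze_zero' (g := fun ε => 2 * ε) (Eventually.of_forall fun _ => norm_nonneg _) ?_ ?_
      · filter_upwards [hev] with ε h using stepPt_close ε h.1 x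
      · refine tendsto_nhdsWithin_of_tendsto_nhds ?_
        have : Continuous (fun ε : ℝ => 2 * ε) := by fun_prop
        simpa using this.tendsto 0
  refine (h1.const_mul (1 / 2)).congr' ?_
  filter_upwards [hev] with ε h
  exact (oddSum_eq f ε h.1 (step_integrable f R M hR hM ε h.1 h.2)).symm

lemma scaled_finite (f : ℝ × ℝ → ℝ) (R : ℝ) (hR : ∀ x, f x ≠ 0 → ‖x‖ ≤ R)
    (ε : ℝ) (hε : 0 < ε) : {z | scaled f ε z ≠ 0}.Finite := by
  have hsub : {z | scaled f ε z ≠ 0} ⊆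
      (Set.Icc (-⌈R / ε⌉) ⌈R / ε⌉) ×ˢ (Set.Icc (-⌈R / ε⌉) ⌈R / ε⌉) := by
    intro z hz
    have h := scaled_ne f R hR ε hε z hz
    rw [mul_comm, ← le_div_iff₀ hε] at h
    have h' := h.trans (Int.le_ceil _)
    rw [Prod.norm_def, max_le_iff] at h'
    simp only [Real.norm_eq_abs] at h'
    have h1 : |z.1| ≤ ⌈R / ε⌉ := by exact_mod_cast h'.1
    have h2 : |z.2| ≤ ⌈R / ε⌉ := by exact_mod_cast h'.2
    exact ⟨abs_le.1 h1, abs_le.1 h2⟩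
  exact ((Set.finite_Icc _ _).prod (Set.finite_Icc _ _)).subset hsub

lemma moebius_divisors (n : ℕ) :
    ∑ d ∈ n.divisors, (ArithmeticFunction.moebius d : ℝ) = if n = 1 then 1 else 0 := by
  have h := congrArg (fun g => g n) ArithmeticFunction.moebius_mul_coe_zeta
  simp only [ArithmeticFunction.one_apply,
    ArithmeticFunction.coe_mul_zeta_apply] at h
  exact_mod_cast h

lemma inner_lattice_sum (f : ℝ × ℝ → ℝ) (ε : ℝ) (d : ℕ) :
    ∑' z : ℤ × ℤ, (if Odd (z.1 - z.2) ∧ d ∣ Int.gcd z.1 z.2 then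
        (ArithmeticFunction.moebius d : ℝ) * (ε ^ 2 * scaled f ε z) else 0) =
      (if Odd d then (ArithmeticFunction.moebius d : ℝ) / (d:ℝ)^2 else 0) * oddSum f (d * ε) := by
  by_cases hd : Odd d
  · have hd0 : (d : ℤ) ≠ 0 := by
      have := hd.pos
      omega
    have hdr : (d : ℝ) ≠ 0 := by exact_mod_cast hd0
    have inj : Function.Injective (fun w : ℤ × ℤ => ((d : ℤ) * w.1, (d : ℤ) * w.2)) := by
      rintro ⟨a, b⟩ ⟨c, e⟩ h
      have hdn : d ≠ 0 := by exact_mod_cast hd0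
      simpa [hdn] using h
    rw [if_pos hd, oddSum, ← inj.tsum_eq, ← tsum_mul_left]
    · congr 1
      funext w
      have hdd : Odd (d : ℤ) := by exact_mod_cast hd
      have e1 : Odd ((d : ℤ) * w.1 - d * w.2) ↔ Odd (w.1 - w.2) := by
        rw [← mul_sub, Int.odd_mul]; simp [hdd]
      have e2 : d ∣ Int.gcd (d * w.1) (d * w.2) := by
        rw [Int.gcd_mul_left]; simp
      simp only [e1, e2, and_true]
      split_ifs
      · have : scaled f ε (d * w.1, d * w.2) = scaled f (d * ε) w := by
          simp only [scaled]
          push_cast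
          congr 2 <;> ring
        rw [this]
        field_simp
      · simp
    · intro z hz
      have hz' : Odd (z.1 - z.2) ∧ d ∣ Int.gcd z.1 z.2 := by
        by_contra hn
        simp [hn] at hz
      have h2 : (d : ℤ) ∣ (Int.gcd z.1 z.2 : ℤ) := by exact_mod_cast hz'.2
      obtain ⟨a, ha⟩ := h2.trans (Int.gcd_dvd_left z.1 z.2)
      obtain ⟨b, hb⟩ := h2.trans (Int.gcd_dvd_right z.1 z.2)
      exact ⟨(a, b), Prod.ext ha.symm hb.symm⟩
  · rw [if_neg hd, zero_mul]
    convert! tsum_zero with z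
    rw [if_neg]
    rintro ⟨h1, h2⟩
    have h2 : (d : ℤ) ∣ (Int.gcd z.1 z.2 : ℤ) := by exact_mod_cast h2
    have h3 : (d : ℤ) ∣ z.1 - z.2 :=
      dvd_sub (h2.trans (Int.gcd_dvd_left z.1 z.2)) (h2.trans (Int.gcd_dvd_right z.1 z.2))
    apply hd
    obtain ⟨k, hk⟩ := h3
    rw [hk] at h1
    have := (Int.odd_mul.1 h1).1
    exact_mod_cast this

lemma primSum_eq (f : ℝ × ℝ → ℝ) (R : ℝ) (hR : ∀ x, f x ≠ 0 → ‖x‖ ≤ R)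
    (ε : ℝ) (hε : 0 < ε) :
    ∑ᶠ z ∈ ZPrimStar, ε ^ 2 * f (ε * (z.1 : ℝ), ε * (z.2 : ℝ)) =
      ∑' d : ℕ, (if Odd d then (ArithmeticFunction.moebius d : ℝ) / (d:ℝ)^2 else 0) *
        oddSum f (d * ε) := by
  classical
  have hfin := scaled_finite f R hR ε hε
  have e0 : ∑ᶠ z ∈ ZPrimStar, ε ^ 2 * f (ε * (z.1 : ℝ), ε * (z.2 : ℝ)) =
      ∑' z, ZPrimStar.indicator (fun z => ε ^ 2 * scaled f ε z) z := by
    rw [finsum_mem_def, tsum_eq_finsum]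
    · rfl
    · refine hfin.subset ?_
      intro z hz h0
      apply hz
      rw [Set.indicator_apply]
      split_ifs
      · simp [h0]
      · rfl
  let H : ℕ → ℤ × ℤ → ℝ := fun d z => if Odd (z.1 - z.2) ∧ d ∣ Int.gcd z.1 z.2 then
        (ArithmeticFunction.moebius d : ℝ) * (ε ^ 2 * scaled f ε z) else 0
  have hH : Summable (Function.uncurry H) := by
    refine summable_of_hasFiniteSupport ?_
    refine Set.Finite.subset (hfin.biUnion fun z _ =>
      ((Int.gcd z.1 z.2).divisors.finite_toSet.prod (Set.finite_singleton z))) ?_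
    rintro ⟨d, z⟩ hz
    have hz : H d z ≠ 0 := hz
    by_cases hc : Odd (z.1 - z.2) ∧ d ∣ Int.gcd z.1 z.2
    · simp only [H, if_pos hc] at hz
      simp only [Set.mem_iUnion]
      refine ⟨z, right_ne_zero_of_mul (right_ne_zero_of_mul hz), ?_, rfl⟩
      simp only [Finset.mem_coe, Nat.mem_divisors]
      refine ⟨hc.2, fun h0 => ne_zero_of_odd z hc.1 ?_⟩
      rw [Int.gcd_eq_zero_iff] at h0
      exact Prod.ext h0.1 h0.2
    · simp only [H, if_neg hc] at hz
      exact absurd rfl hz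
  have e1 : ∀ z, ∑' d, H d z = ZPrimStar.indicator (fun z => ε ^ 2 * scaled f ε z) z := by
    intro z
    by_cases ho : Odd (z.1 - z.2)
    · have hg : Int.gcd z.1 z.2 ≠ 0 := fun h0 => ne_zero_of_odd z ho (by
        rw [Int.gcd_eq_zero_iff] at h0
        exact Prod.ext h0.1 h0.2)
      rw [tsum_eq_sum (s := (Int.gcd z.1 z.2).divisors)]
      · have : ∀ d ∈ (Int.gcd z.1 z.2).divisors, H d z =
            (ArithmeticFunction.moebius d : ℝ) * (ε ^ 2 * scaled f ε z) := by
          intro d hd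
          simp only [H]
          rw [if_pos ⟨ho, Nat.dvd_of_mem_divisors hd⟩]
        rw [Finset.sum_congr rfl this, ← Finset.sum_mul, moebius_divisors, Set.indicator_apply]
        simp only [ZPrimStar, Set.mem_ofPred_eq, ho, and_true]
        split_ifs <;> simp
      · intro d hd
        simp only [H]
        rw [if_neg]
        rintro ⟨_, h⟩
        exact hd (Nat.mem_divisors.2 ⟨h, hg⟩)
    · simp [H, ho, ZPrimStar]
  rw [e0]
  simp_rw [← e1]
  rw [hH.tsum_comm]
  exact tsum_congr fun d => inner_lattice_sum f ε d

/-- **`ℤ²,*_prim` has constant density `4/π²`** : for every continuous compactly supported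
`f : ℝ² → ℝ`, `lim_{ε→0⁺} Σ_{z ∈ ℤ²,*_prim} ε² f(εz) = (4/π²) ∫_{ℝ²} f(x) dx`. -/
theorem ZPrimStar_constant_density (f : ℝ × ℝ → ℝ)
    (hf : Continuous f) (hf' : HasCompactSupport f) :
    Tendsto
      (fun ε : ℝ => ∑ᶠ z ∈ ZPrimStar, ε ^ 2 * f (ε * (z.1 : ℝ), ε * (z.2 : ℝ)))
      (nhdsWithin 0 (Set.Ioi 0))
      (nhds (4 / Real.pi ^ 2 * ∫ x : ℝ × ℝ, f x)) := by
  obtain ⟨M, hM⟩ := hf'.exists_bound_of_continuous hf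
  obtain ⟨R, hR0, hR⟩ : ∃ R : ℝ, 0 < R ∧ ∀ x, f x ≠ 0 → ‖x‖ ≤ R := by
    obtain ⟨R, hR0, hR⟩ := hf'.isCompact.isBounded.exists_pos_norm_le
    exact ⟨R, hR0, fun x hx => hR x (subset_tsupport f hx)⟩
  obtain ⟨C, hC⟩ := oddSum_bound f R M hR hM
  have hpos : ∀ᶠ ε : ℝ in nhdsWithin 0 (Set.Ioi 0), 0 < ε := self_mem_nhdsWithin
  have hlim : 4 / Real.pi ^ 2 * ∫ x : ℝ × ℝ, f x =
      ∑' d : ℕ, (if Odd d then (ArithmeticFunction.moebius d : ℝ) / (d:ℝ)^2 else 0) *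
        (1 / 2 * ∫ x : ℝ × ℝ, f x) := by
    rw [tsum_mul_right, odd_moebius_sum]
    ring
  have hmain : Tendsto (fun ε : ℝ =>
      ∑' d : ℕ, (if Odd d then (ArithmeticFunction.moebius d : ℝ) / (d:ℝ)^2 else 0) *
        oddSum f (d * ε)) (nhdsWithin 0 (Set.Ioi 0))
      (nhds (4 / Real.pi ^ 2 * ∫ x : ℝ × ℝ, f x)) := by
    rw [hlim]
    refine tendsto_tsum_of_dominated_convergence
      (bound := fun d : ℕ => (if Odd d then (1:ℝ) / (d:ℝ)^2 else 0) * C)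
      (odd_sq_sum.summable.mul_right C) ?_ ?_
    · intro d
      by_cases hd : Odd d
      · refine Tendsto.const_mul _ ((oddSum_tendsto f hf R M hR0 hR hM).comp ?_)
        have hdp : (0 : ℝ) < d := by exact_mod_cast hd.pos
        refine tendsto_nhdsWithin_iff.2 ⟨?_, ?_⟩
        · refine tendsto_nhdsWithin_of_tendsto_nhds ?_
          have : Continuous (fun ε : ℝ => d * ε) := by fun_prop
          simpa using this.tendsto 0
        · filter_upwards [hpos] with ε h using mul_pos hdp h
      · simp [hd]
    · filter_upwards [hpos] with ε h d
      by_cases hd : Odd d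
      · have hdp : (0 : ℝ) < d := by exact_mod_cast hd.pos
        simp only [hd, if_true]
        rw [norm_mul]
        refine mul_le_mul ?_ (hC _ (mul_pos hdp h)) (norm_nonneg _) (by positivity)
        rw [norm_div, Real.norm_of_nonneg (by positivity : (0:ℝ) ≤ (d:ℝ)^2)]
        gcongr
        rw [Real.norm_eq_abs]
        exact_mod_cast ArithmeticFunction.abs_moebius_le_one
      · simp [hd]
  refine hmain.congr' ?_
  filter_upwards [hpos] with ε h
  exact (primSum_eq f R hR ε h).symm
end

section
/- lim_{N→∞} (1/N)·|{(m,n) ∈ ℕ×ℕ : gcd(m,n) = 1, m > n ≥ 1, m² + n² ≤ N, and m − n is odd}| = 1/(2π). Equivalently, the number of primitive Pythagorean triples (x,y,z) with hypotenuse z ≤ N (not distinguishing (x,y,z) from (y,x,z)) is asymptotic to N/(2π). -/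
open Filter

noncomputable section
def Aset (N : ℕ) : Finset (ℕ × ℕ) :=
  (Finset.range (N+1) ×ˢ Finset.range (N+1)).filter
    (fun p => 1 ≤ p.2 ∧ p.2 < p.1 ∧ p.1^2 + p.2^2 ≤ N ∧ Odd (p.1 + p.2))
def Tset (N : ℕ) : Finset (ℕ × ℕ) :=
  (Finset.range (N+1) ×ˢ Finset.range (N+1)).filter
    (fun p => 1 ≤ p.2 ∧ p.2 < p.1 ∧ p.1^2 + p.2^2 ≤ N)
def cc (d : ℕ) : ℤ := if Odd d then ArithmeticFunction.moebius d else 0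
end

lemma mem_Aset {N : ℕ} {p : ℕ × ℕ} : p ∈ Aset N ↔
    1 ≤ p.2 ∧ p.2 < p.1 ∧ p.1^2 + p.2^2 ≤ N ∧ Odd (p.1 + p.2) := by
  simp only [Aset, Finset.mem_filter, Finset.mem_product, Finset.mem_range]
  constructor
  · exact fun h => h.2
  · intro h
    refine ⟨⟨?_, ?_⟩, h⟩ <;> nlinarith [h.1, h.2.1, h.2.2.1]

lemma mem_Tset {N : ℕ} {p : ℕ × ℕ} : p ∈ Tset N ↔
    1 ≤ p.2 ∧ p.2 < p.1 ∧ p.1^2 + p.2^2 ≤ N := by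
  simp only [Tset, Finset.mem_filter, Finset.mem_product, Finset.mem_range]
  constructor
  · exact fun h => h.2
  · intro h
    refine ⟨⟨?_, ?_⟩, h⟩ <;> nlinarith [h.1, h.2.1, h.2.2]

lemma P_eq (N : ℕ) : {p : ℕ × ℕ | Nat.gcd p.1 p.2 = 1 ∧ 1 ≤ p.2 ∧ p.2 < p.1 ∧
    p.1 ^ 2 + p.2 ^ 2 ≤ N ∧ Odd (p.1 - p.2)}.ncard =
    ((Aset N).filter (fun p => Nat.gcd p.1 p.2 = 1)).card := by
  rw [← Set.ncard_coe_finset]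
  congr 1
  ext p
  simp only [Set.mem_ofPred_eq, Finset.coe_filter, mem_Aset]
  constructor
  · rintro ⟨h1, h2, h3, h4, h5⟩
    refine ⟨⟨h2, h3, h4, ?_⟩, h1⟩
    rw [Nat.odd_iff] at *; omega
  · rintro ⟨⟨h2, h3, h4, h5⟩, h1⟩
    refine ⟨h1, h2, h3, h4, ?_⟩
    rw [Nat.odd_iff] at *; omega

lemma A_dvd (N d : ℕ) (hd : Odd d) :
    ((Aset N).filter (fun p => d ∣ Nat.gcd p.1 p.2)).card = (Aset (N / d^2)).card := by
  have hd0 : 0 < d := hd.pos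
  symm
  apply Finset.card_bij (fun p _ => (d * p.1, d * p.2))
  · intro p hp
    rw [mem_Aset] at hp
    simp only [Finset.mem_filter, mem_Aset]
    obtain ⟨h1, h2, h3, h4⟩ := hp
    refine ⟨⟨Nat.mul_pos hd0 h1, Nat.mul_lt_mul_of_pos_left h2 hd0, ?_, ?_⟩, ?_⟩
    · rw [Nat.le_div_iff_mul_le (by positivity)] at h3
      nlinarith
    · rw [← mul_add]; exact hd.mul h4
    · exact Nat.dvd_gcd (dvd_mul_right _ _) (dvd_mul_right _ _)
  · intro a _ b _ h
    simp only [Prod.mk.injEq] at h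
    exact Prod.ext (Nat.eq_of_mul_eq_mul_left hd0 h.1) (Nat.eq_of_mul_eq_mul_left hd0 h.2)
  · rintro ⟨x, y⟩ hp
    simp only [Finset.mem_filter, mem_Aset] at hp
    obtain ⟨⟨h1, h2, h3, h4⟩, h5⟩ := hp
    obtain ⟨a, rfl⟩ := h5.trans (Nat.gcd_dvd_left _ _)
    obtain ⟨b, rfl⟩ := h5.trans (Nat.gcd_dvd_right _ _)
    refine ⟨(a, b), ?_, rfl⟩
    rw [mem_Aset]
    refine ⟨Nat.pos_of_mul_pos_left h1, Nat.lt_of_mul_lt_mul_left h2, ?_, ?_⟩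
    · rw [Nat.le_div_iff_mul_le (by positivity)]
      nlinarith
    · rw [← mul_add] at h4; exact (Nat.odd_mul.1 h4).2

lemma P_sum (N : ℕ) : (((Aset N).filter (fun p => Nat.gcd p.1 p.2 = 1)).card : ℤ) =
    ∑ d ∈ Finset.range (N+1), cc d * ((Aset (N / d^2)).card : ℤ) := by
  have h1 : ∀ p ∈ Aset N, (if Nat.gcd p.1 p.2 = 1 then (1:ℤ) else 0) =
      ∑ d ∈ Finset.range (N+1), if d ∣ Nat.gcd p.1 p.2 then cc d else 0 := by
    intro p hp
    rw [mem_Aset] at hp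
    obtain ⟨h1, h2, h3, h4⟩ := hp
    have hg : 0 < Nat.gcd p.1 p.2 := Nat.gcd_pos_of_pos_right _ h1
    have hgN : Nat.gcd p.1 p.2 ≤ N := by
      have := Nat.le_of_dvd h1 (Nat.gcd_dvd_right p.1 p.2)
      nlinarith
    have hodd : Odd (Nat.gcd p.1 p.2) := by
      by_contra h
      rw [Nat.not_odd_iff_even] at h
      have := h.two_dvd
      have a := this.trans (Nat.gcd_dvd_left p.1 p.2)
      have b := this.trans (Nat.gcd_dvd_right p.1 p.2)
      rw [Nat.odd_iff] at h4; omega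
    rw [← Finset.sum_filter]
    have : (Finset.range (N+1)).filter (fun d => d ∣ Nat.gcd p.1 p.2) = (Nat.gcd p.1 p.2).divisors := by
      ext d
      simp only [Finset.mem_filter, Finset.mem_range, Nat.mem_divisors]
      constructor
      · exact fun h => ⟨h.2, hg.ne'⟩
      · exact fun h => ⟨by have := Nat.le_of_dvd hg h.1; omega, h.1⟩
    rw [this]
    have e : ∑ d ∈ (Nat.gcd p.1 p.2).divisors, cc d =
        ∑ d ∈ (Nat.gcd p.1 p.2).divisors, ArithmeticFunction.moebius d := by
      apply Finset.sum_congr rfl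
      intro d hd
      have := hodd.of_dvd_nat (Nat.dvd_of_mem_divisors hd)
      simp [cc, this]
    rw [e, ← ArithmeticFunction.coe_mul_zeta_apply, ArithmeticFunction.moebius_mul_coe_zeta,
      ArithmeticFunction.one_apply]
  rw [Finset.card_filter]
  push_cast
  rw [Finset.sum_congr rfl h1, Finset.sum_comm]
  apply Finset.sum_congr rfl
  intro d _
  by_cases hd : Odd d
  · rw [← A_dvd N d hd, Finset.card_filter]
    push_cast
    rw [Finset.mul_sum]
    apply Finset.sum_congr rfl
    intro p _
    simp
  · simp [cc, hd]

lemma A_T (N : ℕ) : (Aset N).card + (Tset (N/2)).card = (Tset N).card := by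
  have h := Finset.card_filter_add_card_filter_not (s := Tset N) (fun p => Odd (p.1 + p.2))
  rw [← h]
  congr 1
  · congr 1
    ext p
    simp only [mem_Aset, Finset.mem_filter, mem_Tset]
    tauto
  · apply Finset.card_bij (fun p _ => (p.1 + p.2, p.1 - p.2))
    · rintro ⟨a, b⟩ hp
      simp only [mem_Tset, Finset.mem_filter] at hp ⊢
      obtain ⟨h1, h2, h3⟩ := hp
      obtain ⟨c, rfl⟩ := Nat.exists_eq_add_of_lt h2
      rw [Nat.le_div_iff_mul_le (by positivity)] at h3
      have : b + c + 1 - b = c + 1 := by omega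
      rw [this]
      refine ⟨⟨by omega, by omega, by nlinarith⟩, ?_⟩
      rw [Nat.odd_iff]; omega
    · rintro ⟨a, b⟩ hp ⟨a', b'⟩ hp' h
      simp only [mem_Tset, Prod.mk.injEq] at *
      omega
    · rintro ⟨x, y⟩ hp
      simp only [mem_Tset, Finset.mem_filter] at hp
      obtain ⟨⟨h1, h2, h3⟩, h4⟩ := hp
      rw [Nat.odd_iff] at h4
      obtain ⟨c, rfl⟩ : ∃ c, x = y + 2 * c := ⟨(x - y)/2, by omega⟩
      refine ⟨(y + c, c), ?_, ?_⟩
      · simp only [mem_Tset]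
        rw [Nat.le_div_iff_mul_le (by positivity)]
        refine ⟨by omega, by omega, by nlinarith⟩
      · simp only [Prod.mk.injEq]; omega

lemma T_le (N : ℕ) : (Tset N).card ≤ N := by
  have : Tset N ⊆ (Finset.Icc 1 N.sqrt) ×ˢ (Finset.Icc 1 N.sqrt) := by
    intro p hp
    rw [mem_Tset] at hp
    simp only [Finset.mem_product, Finset.mem_Icc, Nat.le_sqrt']
    obtain ⟨h1, h2, h3⟩ := hp
    refine ⟨⟨by omega, by nlinarith⟩, by omega, by nlinarith⟩
  calc _ ≤ _ := Finset.card_le_card this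
    _ = N.sqrt * N.sqrt := by simp
    _ ≤ N := Nat.sqrt_le N

lemma A_le (N : ℕ) : (Aset N).card ≤ N := by
  have := A_T N; have := T_le N; omega

open Complex in
lemma hasSum_cc : HasSum (fun d : ℕ => (cc d : ℝ) / (d:ℝ)^2) (8 / Real.pi^2) := by
  have h2 : 1 < (2:ℂ).re := by norm_num
  have e : LSeries (fun n => ((1 : DirichletCharacter ℂ 2) n : ℂ)) 2 = Real.pi^2/8 := by
    have := DirichletCharacter.LFunctionTrivChar_eq_mul_riemannZeta (N := 2) (s := 2) (by norm_num)
    rw [DirichletCharacter.LFunctionTrivChar, DirichletCharacter.LFunction_eq_LSeries _ h2] at this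
    rw [this, riemannZeta_two, Nat.prime_two.primeFactors]
    rw [Finset.prod_singleton]
    have : ((2:ℕ):ℂ)^(-2:ℂ) = 1/4 := by
      rw [show (-2:ℂ) = ((-2:ℤ):ℂ) by norm_num, Complex.cpow_intCast]; norm_num
    rw [this]; ring
  have hm := DirichletCharacter.LSeries.mul_mu_eq_one (1 : DirichletCharacter ℂ 2) h2
  rw [e] at hm
  have hs := (DirichletCharacter.LSeriesSummable_mul (1 : DirichletCharacter ℂ 2)
    (ArithmeticFunction.LSeriesSummable_moebius_iff.2 h2)).LSeriesHasSum
  have hpi : (Real.pi : ℂ) ≠ 0 := by exact_mod_cast Real.pi_ne_zero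
  have hv := eq_div_of_mul_eq (c := (Real.pi^2/8 : ℂ)) (by simpa using hpi) ((mul_comm _ _).trans hm)
  rw [hv] at hs
  rw [← Complex.hasSum_ofReal]
  unfold LSeriesHasSum at hs
  convert hs using 1
  · ext d
    rcases eq_or_ne d 0 with rfl | hd
    · simp
    rw [LSeries.term_of_ne_zero hd]
    have : (d:ℂ)^(2:ℂ) = (d:ℂ)^2 := by
      rw [show (2:ℂ) = ((2:ℕ):ℂ) by norm_num, Complex.cpow_natCast]
    rw [this]
    push_cast
    congr 1
    by_cases ho : Odd d
    · have : IsUnit ((d : ZMod 2)) := by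
        rw [ZMod.isUnit_iff_coprime]; exact Nat.coprime_two_right.2 ho
      simp [cc, ho, MulChar.one_apply this]
    · have : ¬ IsUnit ((d : ZMod 2)) := by
        rw [ZMod.isUnit_iff_coprime]; exact fun h => ho (Nat.coprime_two_right.1 h)
      simp [cc, ho, MulChar.map_nonunit _ this]
  · push_cast; field_simp

open MeasureTheory in
lemma sector_vol_prod : volume.real {x : ℝ × ℝ | 0 < x.2 ∧ x.2 < x.1 ∧ x.1^2 + x.2^2 ≤ 1}
    = Real.pi / 8 := by
  set s := {x : ℝ × ℝ | 0 < x.2 ∧ x.2 < x.1 ∧ x.1^2 + x.2^2 ≤ 1} with hs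
  have hms : MeasurableSet s := by
    refine MeasurableSet.inter (measurableSet_lt measurable_const measurable_snd)
      (MeasurableSet.inter (measurableSet_lt measurable_snd measurable_fst)
      (measurableSet_le (f := fun x : ℝ × ℝ => x.1^2 + x.2^2) (by fun_prop) measurable_const))
  have hpi := Real.pi_pos
  rw [← integral_indicator_one hms, ← integral_comp_polarCoord_symm]
  have key : ∀ p ∈ polarCoord.target,
      p.1 • s.indicator (1 : ℝ × ℝ → ℝ) (polarCoord.symm p) =
      (Set.Ioc (0:ℝ) 1 ×ˢ Set.Ioo (0:ℝ) (Real.pi/4)).indicator (fun p => p.1 * 1) p := by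
    rintro ⟨r, t⟩ hp
    simp only [polarCoord, Set.mem_prod, Set.mem_Ioi, Set.mem_Ioo] at hp
    obtain ⟨hr, ht1, ht2⟩ := hp
    have iff : polarCoord.symm (r, t) ∈ s ↔
        (r, t) ∈ (Set.Ioc (0:ℝ) 1 ×ˢ Set.Ioo (0:ℝ) (Real.pi/4)) := by
      simp only [polarCoord_symm_apply, hs, Set.mem_ofPred_eq, Set.mem_prod, Set.mem_Ioc,
        Set.mem_Ioo]
      have e : (r * Real.cos t)^2 + (r * Real.sin t)^2 = r^2 := by
        have := Real.sin_sq_add_cos_sq t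
        linear_combination r^2 * this
      rw [e, mul_pos_iff_of_pos_left hr, mul_lt_mul_iff_right₀ hr, sq_le_one_iff₀ hr.le]
      constructor
      · rintro ⟨h1, h2, h3⟩
        have h0 : 0 < t := by
          by_contra h
          push Not at h
          have := Real.sin_nonpos_of_nonpos_of_neg_pi_le h ht1.le
          linarith
        refine ⟨⟨hr, h3⟩, h0, ?_⟩
        by_contra h
        push Not at h
        rcases le_total t (Real.pi/2) with h' | h'
        · rw [← Real.sin_pi_div_two_sub] at h2
          have := Real.sin_le_sin_of_le_of_le_pi_div_two (x := Real.pi/2 - t) (y := t)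
            (by linarith) h' (by linarith)
          linarith
        · have := Real.cos_nonpos_of_pi_div_two_le_of_le h' (by linarith)
          linarith
      · rintro ⟨⟨_, h3⟩, h0, h1⟩
        refine ⟨Real.sin_pos_of_pos_of_lt_pi h0 ht2, ?_, h3⟩
        rw [← Real.sin_pi_div_two_sub]
        exact Real.sin_lt_sin_of_lt_of_le_pi_div_two (by linarith) (by linarith) (by linarith)
    by_cases h : polarCoord.symm (r, t) ∈ s
    · rw [Set.indicator_of_mem h, Set.indicator_of_mem (iff.1 h)]; simp
    · rw [Set.indicator_of_notMem h, Set.indicator_of_notMem (fun h' => h (iff.2 h'))]; simp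
  rw [setIntegral_congr_fun polarCoord.open_target.measurableSet key,
    setIntegral_indicator (measurableSet_Ioc.prod measurableSet_Ioo)]
  have : polarCoord.target ∩ (Set.Ioc (0:ℝ) 1 ×ˢ Set.Ioo (0:ℝ) (Real.pi/4)) =
      (Set.Ioc (0:ℝ) 1 ×ˢ Set.Ioo (0:ℝ) (Real.pi/4)) := by
    apply Set.inter_eq_right.2
    rintro ⟨r, t⟩ ⟨⟨h1, h2⟩, h3, h4⟩
    simp only [polarCoord, Set.mem_prod, Set.mem_Ioi, Set.mem_Ioo] at *
    refine ⟨h1, by linarith, by linarith⟩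
  rw [this, Measure.volume_eq_prod, setIntegral_prod_mul (fun x : ℝ => x) (fun _ : ℝ => (1:ℝ))]
  rw [← intervalIntegral.integral_of_le (by norm_num), integral_id]
  simp
  rw [max_eq_left (by positivity)]
  ring

def sect : Set (Fin 2 → ℝ) := {x | 0 < x 1 ∧ x 1 < x 0 ∧ x 0^2 + x 1^2 ≤ 1}

lemma sect_meas : MeasurableSet sect := by
  refine MeasurableSet.inter (measurableSet_lt measurable_const (measurable_pi_apply _))
      (MeasurableSet.inter (measurableSet_lt (measurable_pi_apply _) (measurable_pi_apply _))
      (measurableSet_le (f := fun x : Fin 2 → ℝ => x 0^2 + x 1^2) (by fun_prop) measurable_const))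

open MeasureTheory in
lemma sect_vol : volume.real sect = Real.pi / 8 := by
  rw [← sector_vol_prod, Measure.real, Measure.real]
  congr 1
  have h := volume_preserving_finTwoArrow ℝ
  have := h.measure_preimage_equiv {x : ℝ × ℝ | 0 < x.2 ∧ x.2 < x.1 ∧ x.1^2 + x.2^2 ≤ 1}
  rw [← this]
  rfl

lemma sect_convex : Convex ℝ sect := by
  intro x hx y hy a b ha hb hab
  obtain ⟨h1, h2, h3⟩ := hx
  obtain ⟨h4, h5, h6⟩ := hy
  simp only [sect, Set.mem_ofPred_eq, Pi.add_apply, Pi.smul_apply, smul_eq_mul]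
  have hb' : b = 1 - a := by linarith
  have hpos : ∀ u v : ℝ, 0 < u → 0 < v → 0 < a * u + b * v := by
    intro u v hu hv
    rcases ha.eq_or_lt with rfl | ha
    · have : b = 1 := by linarith
      simp [this, hv]
    · have := mul_pos ha hu
      have := mul_nonneg hb hv.le
      linarith
  refine ⟨hpos _ _ h1 h4, ?_, ?_⟩
  · have := hpos (x 0 - x 1) (y 0 - y 1) (by linarith) (by linarith)
    linarith
  · have hab2 := mul_nonneg ha hb
    have e : (a * x 0 + b * y 0)^2 + (a * x 1 + b * y 1)^2 =
      a * (x 0^2 + x 1^2) + b * (y 0^2 + y 1^2) - a * b * ((x 0 - y 0)^2 + (x 1 - y 1)^2) := by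
      subst hb'; ring
    rw [e]
    have := mul_nonneg hab2 (add_nonneg (sq_nonneg (x 0 - y 0)) (sq_nonneg (x 1 - y 1)))
    have := mul_le_mul_of_nonneg_left h3 ha
    have := mul_le_mul_of_nonneg_left h6 hb
    linarith

lemma sect_bdd : Bornology.IsBounded sect := by
  apply (Metric.isBounded_Icc (0 : Fin 2 → ℝ) 1).subset
  rintro x ⟨h1, h2, h3⟩
  constructor
  · intro i; fin_cases i <;> simp <;> linarith
  · intro i; fin_cases i <;> simp <;> nlinarith

open Pointwise in
lemma sect_mem_smul {c : ℝ} (hc : 0 < c) (x : Fin 2 → ℝ) :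
    x ∈ c • sect ↔ 0 < x 1 ∧ x 1 < x 0 ∧ x 0^2 + x 1^2 ≤ c^2 := by
  rw [Set.mem_smul_set_iff_inv_smul_mem₀ hc.ne']
  simp only [sect, Set.mem_ofPred_eq, Pi.smul_apply, smul_eq_mul]
  have hc' := inv_pos.2 hc
  rw [mul_pos_iff_of_pos_left hc', mul_lt_mul_iff_right₀ hc', mul_pow, mul_pow, ← mul_add,
    inv_pow, inv_mul_le_iff₀ (by positivity), mul_one]

open Pointwise in
lemma card_T (N : ℕ) (hN : 0 < N) :
    Nat.card ↑(sect ∩ (√(N:ℝ))⁻¹ • (Submodule.span ℤ (Set.range (Pi.basisFun ℝ (Fin 2))) : Set (Fin 2 → ℝ)))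
      = (Tset N).card := by
  have hc : 0 < √(N:ℝ) := Real.sqrt_pos.2 (by exact_mod_cast hN)
  have hset : sect ∩ (√(N:ℝ))⁻¹ • (Submodule.span ℤ (Set.range (Pi.basisFun ℝ (Fin 2))) : Set (Fin 2 → ℝ))
      = (fun p : ℕ × ℕ => (√(N:ℝ))⁻¹ • (![(p.1 : ℝ), (p.2 : ℝ)] : Fin 2 → ℝ)) '' (Tset N : Set (ℕ × ℕ)) := by
    ext x
    constructor
    · rintro ⟨hx, y, hy, rfl⟩
      have hy' : y ∈ √(N:ℝ) • sect := by
        rw [Set.mem_smul_set_iff_inv_smul_mem₀ hc.ne']; exact hx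
      rw [sect_mem_smul hc, Real.sq_sqrt (by positivity)] at hy'
      obtain ⟨h1, h2, h3⟩ := hy'
      rw [SetLike.mem_coe, Module.Basis.mem_span_iff_repr_mem] at hy
      obtain ⟨a, ha⟩ := hy 0
      obtain ⟨b, hb⟩ := hy 1
      simp only [Pi.basisFun_repr, algebraMap_int_eq, Int.coe_castRingHom] at ha hb
      rw [← ha, ← hb] at h3 h2
      rw [← hb] at h1
      have h1' : 0 < b := by exact_mod_cast h1
      have h2' : b < a := by exact_mod_cast h2
      have h3' : a^2 + b^2 ≤ N := by exact_mod_cast h3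
      lift b to ℕ using h1'.le
      lift a to ℕ using by omega
      refine ⟨(a, b), ?_, ?_⟩
      · rw [Finset.mem_coe, mem_Tset]
        refine ⟨by simp at h1' ⊢; omega, by simpa using h2', by exact_mod_cast h3'⟩
      · simp only
        congr 1
        ext i; fin_cases i
        · simpa using ha
        · simpa using hb
    · rintro ⟨⟨a, b⟩, hp, rfl⟩
      rw [Finset.mem_coe, mem_Tset] at hp
      obtain ⟨h1, h2, h3⟩ := hp
      simp only at h1 h2 h3 ⊢
      refine ⟨?_, Set.smul_mem_smul_set ?_⟩
      · rw [← Set.mem_smul_set_iff_inv_smul_mem₀ hc.ne', sect_mem_smul hc,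
          Real.sq_sqrt (by positivity)]
        simp only [Matrix.cons_val_zero, Matrix.cons_val_one]
        refine ⟨by exact_mod_cast h1, by exact_mod_cast h2, by exact_mod_cast h3⟩
      · rw [SetLike.mem_coe, Module.Basis.mem_span_iff_repr_mem]
        intro i
        fin_cases i
        · exact ⟨a, by simp⟩
        · exact ⟨b, by simp⟩
  rw [hset, Nat.card_coe_set_eq, Set.ncard_image_of_injective, Set.ncard_coe_finset]
  rintro ⟨a, b⟩ ⟨a', b'⟩ h
  have h' := smul_right_injective (Fin 2 → ℝ) (inv_ne_zero hc.ne') h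
  have e0 := congrFun h' 0
  have e1 := congrFun h' 1
  simp at e0 e1
  rw [e0, e1]

lemma T_lim : Tendsto (fun N : ℕ => ((Tset N).card : ℝ) / N) atTop (nhds (Real.pi/8)) := by
  have h := tendsto_card_div_pow_atTop_volume' sect sect_bdd sect_meas
    (sect_convex.addHaar_frontier MeasureTheory.volume) (by
      intro x y hx hxy z hz
      rw [sect_mem_smul hx] at hz
      rw [sect_mem_smul (hx.trans_le hxy)]
      refine ⟨hz.1, hz.2.1, hz.2.2.trans (by gcongr)⟩)
  rw [sect_vol] at h
  have h2 := h.comp (Real.tendsto_sqrt_atTop.comp (tendsto_natCast_atTop_atTop (R := ℝ)))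
  refine h2.congr' ?_
  filter_upwards [eventually_gt_atTop 0] with N hN
  simp only [Function.comp]
  rw [card_T N hN, Fintype.card_fin, Real.sq_sqrt (by positivity)]

lemma T_lim_div (k : ℕ) (hk : 0 < k) :
    Tendsto (fun N : ℕ => ((Tset (N / k)).card : ℝ) / N) atTop (nhds (Real.pi/8 * (1/k))) := by
  have h1 : Tendsto (fun N : ℕ => N / k) atTop atTop := Nat.tendsto_div_const_atTop hk.ne'
  have h2 : Tendsto (fun N : ℕ => ((N / k : ℕ) : ℝ) / N) atTop (nhds (1 / k)) := by
    have := (tendsto_nat_floor_mul_div_atTop (R := ℝ) (a := 1 / k) (by positivity)).comp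
      (tendsto_natCast_atTop_atTop (R := ℝ))
    refine this.congr ?_
    intro N
    simp only [Function.comp]
    rw [one_div_mul_eq_div, Nat.floor_div_eq_div]
  refine ((T_lim.comp h1).mul h2).congr ?_
  intro N
  simp only [Function.comp]
  rcases Nat.eq_zero_or_pos (N / k) with h | h
  · have := T_le (N / k)
    rw [h] at this ⊢
    have : (Tset 0).card = 0 := by omega
    simp [this]
  · have : ((N / k : ℕ) : ℝ) ≠ 0 := by positivity
    field_simp

lemma A_lim_div (k : ℕ) (hk : 0 < k) :
    Tendsto (fun N : ℕ => ((Aset (N / k)).card : ℝ) / N) atTop (nhds (Real.pi/16 * (1/k))) := by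
  have := (T_lim_div k hk).sub (T_lim_div (k * 2) (by omega))
  convert this using 1
  · ext N
    have := A_T (N / k)
    rw [Nat.div_div_eq_div_mul] at this
    rw [← this]
    push_cast; ring
  · congr 1; push_cast; field_simp; norm_num

lemma cc_abs (d : ℕ) : |(cc d : ℝ)| ≤ 1 := by
  have : |cc d| ≤ 1 := by
    unfold cc
    split_ifs
    · exact ArithmeticFunction.abs_moebius_le_one
    · simp
  exact_mod_cast this

/-- **Counting primitive Pythagorean triples.**  The number of pairs of coprime positive
integers `m > n ≥ 1` of different parity with `m² + n² ≤ N` — equivalently, the number of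
primitive Pythagorean triples with hypotenuse at most `N` (not distinguishing `(x,y,z)`
from `(y,x,z)`) — is asymptotic to `N/(2π)`. -/
theorem primitive_pythagorean_triples_count :
    Tendsto
      (fun N : ℕ =>
        (1 : ℝ) / N *
          ({p : ℕ × ℕ | Nat.gcd p.1 p.2 = 1 ∧ 1 ≤ p.2 ∧ p.2 < p.1 ∧
              p.1 ^ 2 + p.2 ^ 2 ≤ N ∧ Odd (p.1 - p.2)}.ncard : ℝ))
      atTop (nhds (1 / (2 * Real.pi))) := by
  have hlim := tendsto_tsum_of_dominated_convergence (𝓕 := atTop)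
    (f := fun (N d : ℕ) => (cc d : ℝ) * (((Aset (N / d^2)).card : ℝ) / N))
    (g := fun d : ℕ => Real.pi/16 * ((cc d : ℝ) / (d:ℝ)^2))
    (bound := fun d : ℕ => 1 / (d:ℝ)^2)
    (Real.summable_one_div_nat_pow.2 (by norm_num)) (by
      intro d
      rcases Nat.eq_zero_or_pos d with rfl | hd
      · simp [cc]
      · have := (A_lim_div (d^2) (by positivity)).const_mul (cc d : ℝ)
        convert this using 2
        push_cast; ring) (by
      refine Eventually.of_forall fun N d => ?_
      rw [Real.norm_eq_abs, abs_mul, abs_of_nonneg (a := _ / _) (by positivity)]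
      refine (mul_le_of_le_one_left (by positivity) (cc_abs d)).trans ?_
      rcases Nat.eq_zero_or_pos N with rfl | hN
      · simp
      rcases Nat.eq_zero_or_pos d with rfl | hd
      · have := A_le (N / 0^2)
        simp at this ⊢
        simp [this]
      have h1 : ((Aset (N / d^2)).card : ℝ) ≤ (N : ℝ) / (d:ℝ)^2 := by
        have : ((Aset (N / d^2)).card : ℝ) ≤ ((N / d^2 : ℕ) : ℝ) := by exact_mod_cast A_le _
        refine this.trans ?_
        exact_mod_cast Nat.cast_div_le (α := ℝ) (m := N) (n := d^2)
      have hN' : (0:ℝ) < N := by exact_mod_cast hN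
      rw [div_le_iff₀ hN']
      refine h1.trans (le_of_eq ?_)
      ring)
  rw [tsum_mul_left, hasSum_cc.tsum_eq] at hlim
  have hv : Real.pi / 16 * (8 / Real.pi^2) = 1 / (2 * Real.pi) := by
    have := Real.pi_ne_zero
    field_simp; norm_num
  rw [hv] at hlim
  refine hlim.congr ?_
  intro N
  rw [P_eq, tsum_eq_sum (s := Finset.range (N+1))]
  · have := P_sum N
    have h' : (((Aset N).filter (fun p => Nat.gcd p.1 p.2 = 1)).card : ℝ) =
      ∑ d ∈ Finset.range (N+1), (cc d : ℝ) * ((Aset (N / d^2)).card : ℝ) := by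
      exact_mod_cast this
    rw [h', Finset.mul_sum]
    refine Finset.sum_congr rfl fun d _ => ?_
    ring
  · intro d hd
    have hd' : N < d := by simpa using hd
    have h0 : N / d^2 = 0 := Nat.div_eq_of_lt (by nlinarith)
    have := A_le 0
    have h1 : (Aset 0).card = 0 := by omega
    rw [h0, h1]; simp
end

section
/- (Lehmer) Let C(M) = |{(m,n) ∈ ℕ×ℕ : gcd(m,n) = 1, m > n ≥ 1, m² + n² ≤ M, m − n odd}|, the number of primitive Pythagorean triples with hypotenuse at most M. Let z : ℕ_{≥1} → ℕ be the nondecreasing enumeration with multiplicity of the hypotenuses of primitive Pythagorean triples, i.e. z is monotone nondecreasing and |{N ≥ 1 : z(N) ≤ M}| = C(M) for every M. Then lim_{N→∞} z(N)/N = 2π. -/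
open Filter

/-- `C M` = the number of primitive Pythagorean triples with hypotenuse at most `M`,
counted as `|{(m,n) : gcd(m,n)=1, m > n ≥ 1, m² + n² ≤ M, m - n odd}|`. -/
noncomputable def pptCount (M : ℕ) : ℕ :=
  {p : ℕ × ℕ | Nat.gcd p.1 p.2 = 1 ∧ 1 ≤ p.2 ∧ p.2 < p.1 ∧
      p.1 ^ 2 + p.2 ^ 2 ≤ M ∧ Odd (p.1 - p.2)}.ncard


lemma tsum_odd_moebius :
    ∑' d : ℕ, (if Odd d then (ArithmeticFunction.moebius d : ℝ) / (d:ℝ)^2 else 0)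
      = 8 / Real.pi ^ 2 := by
  have h1 : (1:ℝ) < (2:ℂ).re := by norm_num
  have h := DirichletCharacter.LSeries.mul_mu_eq_one (1 : DirichletCharacter ℂ 2) h1
  rw [← DirichletCharacter.LFunction_eq_LSeries _ h1] at h
  have h2 := DirichletCharacter.LFunctionTrivChar_eq_mul_riemannZeta (N := 2) (s := 2) (by norm_num)
  rw [DirichletCharacter.LFunctionTrivChar] at h2
  rw [h2, riemannZeta_two, Nat.Prime.primeFactors Nat.prime_two] at h
  simp only [Finset.prod_singleton] at h
  have h3 : ((2:ℕ):ℂ) ^ (-(2:ℂ)) = 1/4 := by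
    rw [Complex.cpow_neg]; norm_num
  rw [h3] at h
  have h4 : LSeries (((fun n : ℕ => (1 : DirichletCharacter ℂ 2) n)) * (fun n : ℕ => ((ArithmeticFunction.moebius n : ℤ) : ℂ))) 2
      = ((∑' d : ℕ, (if Odd d then (ArithmeticFunction.moebius d : ℝ) / (d:ℝ)^2 else 0) : ℝ) : ℂ) := by
    rw [LSeries, Complex.ofReal_tsum]
    congr 1
    ext d
    rcases Nat.eq_zero_or_pos d with rfl | hd
    · simp
    rw [LSeries.term_of_ne_zero hd.ne']
    by_cases ho : Odd d
    · have : IsUnit (d : ZMod 2) := by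
        rw [ZMod.isUnit_iff_coprime]; exact ho.coprime_two_right
      simp [ho, MulChar.one_apply this]
    · have : ¬ IsUnit (d : ZMod 2) := by
        rw [ZMod.isUnit_iff_coprime]; simpa using ho
      simp [ho, MulChar.map_nonunit _ this]
  rw [h4] at h
  have hpi := Real.pi_ne_zero
  generalize (∑' d : ℕ, (if Odd d then (ArithmeticFunction.moebius d : ℝ) / (d:ℝ)^2 else 0)) = t at h ⊢
  have h' : (1 - 1/4 : ℝ) * (Real.pi ^ 2 / 6) * t = 1 := by
    have e : (((1 - 1/4 : ℝ) * (Real.pi ^ 2 / 6) * t : ℝ) : ℂ) = ((1 : ℝ) : ℂ) := by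
      push_cast; exact h
    exact Complex.ofReal_injective e
  field_simp at h' ⊢
  linarith

lemma final_step (C : ℕ → ℕ) (z : ℕ → ℕ)
    (hC : Tendsto (fun M : ℕ => (C M : ℝ) / M) atTop (nhds (1 / (2 * Real.pi))))
    (hmono : ∀ N M : ℕ, 1 ≤ N → N ≤ M → z N ≤ z M)
    (hcount : ∀ M : ℕ, {N : ℕ | 1 ≤ N ∧ z N ≤ M}.ncard = C M) :
    Tendsto (fun N : ℕ => (z N : ℝ) / N) atTop (nhds (2 * Real.pi)) := by
  have hpos : 0 < 1 / (2 * Real.pi) := by positivity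
  have hev : ∀ᶠ M : ℕ in atTop, 0 < C M := by
    filter_upwards [hC.eventually (lt_mem_nhds hpos)] with M hM
    rcases Nat.eq_zero_or_pos (C M) with h | h
    · simp [h] at hM
    · exact h
  have hfin : ∀ M : ℕ, {N : ℕ | 1 ≤ N ∧ z N ≤ M}.Finite := by
    intro M
    obtain ⟨M', h1, h2⟩ := (hev.and (eventually_ge_atTop M)).exists
    refine (Set.finite_of_ncard_pos (s := {N : ℕ | 1 ≤ N ∧ z N ≤ M'}) ?_).subset ?_
    · rw [hcount]; exact h1
    · intro N hN; exact ⟨hN.1, hN.2.trans h2⟩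
  have hz : Tendsto z atTop atTop := by
    rw [tendsto_atTop]
    intro b
    obtain ⟨B, hB⟩ := (hfin b).bddAbove
    filter_upwards [eventually_gt_atTop B, eventually_ge_atTop 1] with N h1 h2
    by_contra hc
    exact absurd (hB ⟨h2, by omega⟩) (by omega)
  have hup : ∀ N, 1 ≤ N → N ≤ C (z N) := by
    intro N hN
    rw [← hcount]
    have : (Set.Icc 1 N).ncard ≤ {K : ℕ | 1 ≤ K ∧ z K ≤ z N}.ncard :=
      Set.ncard_le_ncard (fun K hK => ⟨hK.1, hmono _ _ hK.1 hK.2⟩) (hfin _)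
    simpa [Set.ncard_eq_toFinset_card'] using this
  have hlo : ∀ N, 1 ≤ N → 1 ≤ z N → C (z N - 1) ≤ N := by
    intro N hN hz
    rw [← hcount]
    have : {K : ℕ | 1 ≤ K ∧ z K ≤ z N - 1}.ncard ≤ (Set.Icc 1 N).ncard :=
      Set.ncard_le_ncard (fun K hK => ⟨hK.1, by
        by_contra hc
        have := hmono N K hN (by omega)
        have := hK.2
        omega⟩) (Set.finite_Icc _ _)
    simpa [Set.ncard_eq_toFinset_card'] using this
  have hu := hC.comp hz
  have hl : Tendsto (fun M : ℕ => (C (M-1) : ℝ) / M) atTop (nhds (1 / (2 * Real.pi))) := by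
    rw [← tendsto_add_atTop_iff_nat 1]
    have h1 := hC.mul (tendsto_natCast_div_add_atTop (1:ℝ))
    rw [mul_one] at h1
    refine h1.congr' ?_
    filter_upwards [eventually_ge_atTop 1] with M hM
    have : (M:ℝ) ≠ 0 := by positivity
    simp
    field_simp
  have hl' := hl.comp hz
  have hsq : Tendsto (fun N : ℕ => (N : ℝ) / z N) atTop (nhds (1 / (2 * Real.pi))) := by
    refine tendsto_of_tendsto_of_tendsto_of_le_of_le' hl' hu ?_ ?_
    · filter_upwards [eventually_ge_atTop 1, hz.eventually_ge_atTop 1] with N h1 h2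
      simp only [Function.comp]
      gcongr
      exact hlo N h1 h2
    · filter_upwards [eventually_ge_atTop 1] with N h1
      simp only [Function.comp]
      gcongr
      exact hup N h1
  have := hsq.inv₀ hpos.ne'
  simpa using this

/-- All pairs. -/
noncomputable def pairsAll (M : ℕ) : Finset (ℕ × ℕ) :=
  ((Finset.range (M+1)) ×ˢ (Finset.range (M+1))).filter
    (fun p => 1 ≤ p.2 ∧ p.2 < p.1 ∧ p.1 ^ 2 + p.2 ^ 2 ≤ M)

lemma mem_pairsAll {M : ℕ} {p : ℕ × ℕ} :
    p ∈ pairsAll M ↔ 1 ≤ p.2 ∧ p.2 < p.1 ∧ p.1 ^ 2 + p.2 ^ 2 ≤ M := by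
  simp only [pairsAll, Finset.mem_filter, Finset.mem_product, Finset.mem_range, and_iff_right_iff_imp]
  rintro ⟨h1, h2, h3⟩
  constructor <;> nlinarith

noncomputable def pairsOdd (M : ℕ) : Finset (ℕ × ℕ) :=
  (pairsAll M).filter (fun p => Odd (p.1 - p.2))

lemma mem_pairsOdd {M : ℕ} {p : ℕ × ℕ} :
    p ∈ pairsOdd M ↔ (1 ≤ p.2 ∧ p.2 < p.1 ∧ p.1 ^ 2 + p.2 ^ 2 ≤ M) ∧ Odd (p.1 - p.2) := by
  rw [pairsOdd, Finset.mem_filter, mem_pairsAll]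

lemma card_pairsAll_le (M : ℕ) : (pairsAll M).card ≤ M := by
  have h : pairsAll M ⊆ Finset.Icc 1 (Nat.sqrt M) ×ˢ Finset.Icc 1 (Nat.sqrt M) := by
    intro p hp
    rw [mem_pairsAll] at hp
    simp only [Finset.mem_product, Finset.mem_Icc, Nat.le_sqrt']
    obtain ⟨h1, h2, h3⟩ := hp
    refine ⟨⟨by omega, by nlinarith⟩, h1, by nlinarith⟩
  refine (Finset.card_le_card h).trans ?_
  simp only [Finset.card_product, Nat.card_Icc, Nat.add_sub_cancel]
  exact Nat.sqrt_le M

lemma card_pairsOdd_le (M : ℕ) : (pairsOdd M).card ≤ M :=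
  (Finset.card_le_card (Finset.filter_subset _ _)).trans (card_pairsAll_le M)

lemma card_pairs (M : ℕ) : (pairsOdd M).card + (pairsAll (M/2)).card = (pairsAll M).card := by
  rw [pairsOdd, ← Finset.card_filter_add_card_filter_not (s := pairsAll M) (fun p => Odd (p.1 - p.2))]
  congr 1
  refine Finset.card_bij' (fun p _ => (p.1 + p.2, p.1 - p.2))
    (fun p _ => ((p.1 + p.2)/2, (p.1 - p.2)/2)) ?_ ?_ ?_ ?_
  · rintro ⟨a, b⟩ hp
    rw [mem_pairsAll, Nat.le_div_iff_mul_le (y := M) (by norm_num)] at hp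
    rw [Finset.mem_filter, mem_pairsAll]
    obtain ⟨h1, h2, h3⟩ := hp
    simp only at h1 h2 h3 ⊢
    obtain ⟨c, rfl⟩ := Nat.exists_eq_add_of_lt h2
    have e : b + c + 1 - b = c + 1 := by omega
    rw [e]
    refine ⟨⟨by omega, by omega, by nlinarith⟩, ?_⟩
    rw [Nat.not_odd_iff_even]
    exact ⟨b, by omega⟩
  · rintro ⟨a, b⟩ hp
    rw [Finset.mem_filter, mem_pairsAll, Nat.not_odd_iff_even] at hp
    rw [mem_pairsAll, Nat.le_div_iff_mul_le (y := M) (by norm_num)]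
    obtain ⟨⟨h1, h2, h3⟩, c, h4⟩ := hp
    simp only at h1 h2 h3 h4 ⊢
    obtain rfl : a = b + c + c := by omega
    have e1 : (b + c + c + b)/2 = b + c := by omega
    have e2 : (b + c + c - b)/2 = c := by omega
    rw [e1, e2]
    exact ⟨by omega, by omega, by nlinarith⟩
  · rintro ⟨a, b⟩ hp
    rw [mem_pairsAll] at hp
    obtain ⟨h1, h2, h3⟩ := hp
    simp only at h1 h2 h3 ⊢
    ext <;> simp only <;> omega
  · rintro ⟨a, b⟩ hp
    rw [Finset.mem_filter, mem_pairsAll, Nat.not_odd_iff_even] at hp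
    obtain ⟨⟨h1, h2, h3⟩, c, h4⟩ := hp
    simp only at h1 h2 h3 h4 ⊢
    ext <;> simp only <;> omega

lemma card_dvd (M d : ℕ) (hd : 0 < d) :
    ((pairsOdd M).filter (fun p => d ∣ Nat.gcd p.1 p.2)).card =
      if Odd d then (pairsOdd (M / d^2)).card else 0 := by
  split_ifs with ho
  · symm
    refine Finset.card_bij' (fun p _ => (d * p.1, d * p.2)) (fun p _ => (p.1 / d, p.2 / d)) ?_ ?_ ?_ ?_
    · rintro ⟨a, b⟩ hp
      rw [mem_pairsOdd, Nat.le_div_iff_mul_le (y := M) (by positivity)] at hp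
      rw [Finset.mem_filter, mem_pairsOdd]
      obtain ⟨⟨h1, h2, h3⟩, h4⟩ := hp
      simp only at h1 h2 h3 h4 ⊢
      refine ⟨⟨⟨Nat.mul_pos hd h1, Nat.mul_lt_mul_of_pos_left h2 hd, by nlinarith⟩, ?_⟩, ?_⟩
      · rw [← Nat.mul_sub]; exact ho.mul h4
      · exact Nat.dvd_gcd (dvd_mul_right _ _) (dvd_mul_right _ _)
    · rintro ⟨a, b⟩ hp
      rw [Finset.mem_filter, mem_pairsOdd, Nat.dvd_gcd_iff] at hp
      rw [mem_pairsOdd, Nat.le_div_iff_mul_le (y := M) (by positivity)]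
      obtain ⟨⟨⟨h1, h2, h3⟩, h4⟩, ⟨a, rfl⟩, ⟨b, rfl⟩⟩ := hp
      simp only [Nat.mul_div_cancel_left _ hd] at h1 h2 h3 h4 ⊢
      rw [← Nat.mul_sub] at h4
      refine ⟨⟨Nat.pos_of_mul_pos_left h1, lt_of_mul_lt_mul_left h2 hd.le, by nlinarith⟩, ?_⟩
      exact (Nat.odd_mul.1 h4).2
    · rintro ⟨a, b⟩ hp
      simp [Nat.mul_div_cancel_left _ hd]
    · rintro ⟨a, b⟩ hp
      rw [Finset.mem_filter, Nat.dvd_gcd_iff] at hp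
      ext
      · exact Nat.mul_div_cancel' hp.2.1
      · exact Nat.mul_div_cancel' hp.2.2
  · rw [Finset.card_eq_zero, Finset.filter_eq_empty_iff]
    rintro ⟨a, b⟩ hp hdv
    rw [Nat.dvd_gcd_iff] at hdv
    rw [mem_pairsOdd] at hp
    exact ho (hp.2.of_dvd_nat (Nat.dvd_sub hdv.1 hdv.2))

lemma pptCount_eq (M : ℕ) :
    pptCount M = ((pairsOdd M).filter (fun p => Nat.gcd p.1 p.2 = 1)).card := by
  rw [pptCount, ← Set.ncard_coe_finset]
  congr 1
  ext p
  simp only [Finset.coe_filter, mem_pairsOdd, Set.mem_ofPred_eq]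
  tauto

lemma sum_moebius (n N : ℕ) (hn : 0 < n) (hN : n ≤ N) :
    (∑ d ∈ Finset.Icc 1 N, if d ∣ n then (ArithmeticFunction.moebius d : ℤ) else 0)
      = if n = 1 then 1 else 0 := by
  have h := congrArg (fun f => f n) ArithmeticFunction.moebius_mul_coe_zeta
  simp only [ArithmeticFunction.coe_mul_zeta_apply, ArithmeticFunction.one_apply] at h
  rw [← h, ← Finset.sum_filter]
  apply Finset.sum_congr _ (fun _ _ => rfl)
  ext d
  simp only [Finset.mem_filter, Finset.mem_Icc, Nat.mem_divisors]
  constructor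
  · rintro ⟨_, h⟩; exact ⟨h, hn.ne'⟩
  · rintro ⟨h, _⟩
    exact ⟨⟨Nat.pos_of_dvd_of_pos h hn, (Nat.le_of_dvd hn h).trans hN⟩, h⟩

lemma pptCount_sum (M : ℕ) :
    (pptCount M : ℤ) = ∑ d ∈ Finset.Icc 1 M,
      if Odd d then (ArithmeticFunction.moebius d : ℤ) * ((pairsOdd (M / d^2)).card : ℤ) else 0 := by
  rw [pptCount_eq, Finset.card_filter]
  push_cast
  have : ∀ p ∈ pairsOdd M, (if Nat.gcd p.1 p.2 = 1 then (1:ℤ) else 0) =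
      ∑ d ∈ Finset.Icc 1 M, if d ∣ Nat.gcd p.1 p.2 then (ArithmeticFunction.moebius d : ℤ) else 0 := by
    intro p hp
    rw [mem_pairsOdd] at hp
    obtain ⟨⟨h1, h2, h3⟩, h4⟩ := hp
    rw [sum_moebius]
    · exact Nat.gcd_pos_of_pos_right _ h1
    · have := Nat.gcd_le_right p.1 h1
      nlinarith
  rw [Finset.sum_congr rfl this, Finset.sum_comm]
  apply Finset.sum_congr rfl
  intro d hd
  rw [← Finset.sum_filter, Finset.sum_const, card_dvd M d (Finset.mem_Icc.1 hd).1]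
  split_ifs <;> simp [mul_comm]

lemma pptCount_tsum (M : ℕ) :
    (pptCount M : ℝ) / M = ∑' d : ℕ,
      if Odd d then (ArithmeticFunction.moebius d : ℝ) * (((pairsOdd (M / d^2)).card : ℝ) / M) else 0 := by
  have h : (pptCount M : ℝ) = ∑ d ∈ Finset.Icc 1 M,
      if Odd d then (ArithmeticFunction.moebius d : ℝ) * ((pairsOdd (M / d^2)).card : ℝ) else 0 := by
    have := congrArg (fun x : ℤ => (x:ℝ)) (pptCount_sum M)
    simpa using this
  rw [h, Finset.sum_div, tsum_eq_sum (s := Finset.Icc 1 M)]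
  · apply Finset.sum_congr rfl
    intro d hd
    split_ifs
    · ring
    · simp
  · intro d hd
    split_ifs with ho
    · have h0 : d ≠ 0 := by rintro rfl; simp at ho
      have h1 : M < d := by
        simp only [Finset.mem_Icc, not_and, not_le] at hd
        exact hd (by omega)
      have h2 : M / d^2 = 0 := Nat.div_eq_of_lt (by nlinarith)
      have h3 := card_pairsOdd_le 0
      rw [h2]
      have : (pairsOdd 0).card = 0 := by omega
      simp [this]
    · rfl

lemma tendsto_div_comp (f : ℕ → ℕ) (c : ℝ)
    (hf : Tendsto (fun n : ℕ => (f n : ℝ) / n) atTop (nhds c)) (k : ℕ) (hk : 0 < k) :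
    Tendsto (fun n : ℕ => (f (n / k) : ℝ) / n) atTop (nhds (c / k)) := by
  have h1 : Tendsto (fun n : ℕ => n / k) atTop atTop := Nat.tendsto_div_const_atTop hk.ne'
  have h2 : Tendsto (fun n : ℕ => ((n / k : ℕ) : ℝ) / n) atTop (nhds (1 / k)) := by
    have := (tendsto_nat_floor_mul_div_atTop (R := ℝ) (a := 1 / k) (by positivity)).comp
      tendsto_natCast_atTop_atTop
    refine this.congr (fun n => ?_)
    simp only [Function.comp]
    rw [one_div_mul_eq_div, Nat.floor_div_natCast, Nat.floor_natCast]
  have h3 := (hf.comp h1).mul h2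
  rw [mul_one_div] at h3
  refine h3.congr' ?_
  filter_upwards [h1.eventually_ge_atTop 1, eventually_ge_atTop 1] with n hn hn'
  have a : ((n/k : ℕ) : ℝ) ≠ 0 := by positivity
  simp only [Function.comp]
  field_simp

lemma tendsto_pptCount
    (hT : Tendsto (fun n : ℕ => ((pairsAll n).card : ℝ) / n) atTop (nhds (Real.pi / 8)))
    (hmu : ∑' d : ℕ, (if Odd d then (ArithmeticFunction.moebius d : ℝ) / (d:ℝ)^2 else 0)
      = 8 / Real.pi ^ 2) :
    Tendsto (fun M : ℕ => (pptCount M : ℝ) / M) atTop (nhds (1 / (2 * Real.pi))) := by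
  have hA : Tendsto (fun n : ℕ => ((pairsOdd n).card : ℝ) / n) atTop (nhds (Real.pi / 16)) := by
    have h := hT.sub (tendsto_div_comp (fun n => (pairsAll n).card) _ hT 2 (by norm_num))
    have e : Real.pi / 8 - Real.pi / 8 / (2:ℕ) = Real.pi / 16 := by push_cast; ring
    rw [e] at h
    refine h.congr (fun n => ?_)
    rw [← card_pairs n]
    push_cast
    ring
  have key : Tendsto (fun M : ℕ => ∑' d : ℕ,
      if Odd d then (ArithmeticFunction.moebius d : ℝ) * (((pairsOdd (M / d^2)).card : ℝ) / M) else 0)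
      atTop (nhds (∑' d : ℕ, (if Odd d then (ArithmeticFunction.moebius d : ℝ) / (d:ℝ)^2 else 0) * (Real.pi / 16))) := by
    refine tendsto_tsum_of_dominated_convergence (bound := fun d : ℕ => 1 / (d:ℝ)^2) ?_ ?_ ?_
    · exact Real.summable_one_div_nat_pow.2 (by norm_num)
    · intro d
      split_ifs with ho
      · have hd : 0 < d := ho.pos
        have := (tendsto_div_comp (fun n => (pairsOdd n).card) _ hA (d^2) (by positivity)).const_mul
          (ArithmeticFunction.moebius d : ℝ)
        convert this using 2
        push_cast; ring
      · simp
    · refine Eventually.of_forall (fun M d => ?_)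
      split_ifs with ho
      · have hd : 0 < d := ho.pos
        rw [norm_mul]
        have h1 : ‖((ArithmeticFunction.moebius d : ℤ) : ℝ)‖ ≤ 1 := by
          rw [Real.norm_eq_abs]
          exact_mod_cast ArithmeticFunction.abs_moebius_le_one (n := d)
        have h2 : ‖((pairsOdd (M / d^2)).card : ℝ) / M‖ ≤ 1 / (d:ℝ)^2 := by
          rw [Real.norm_of_nonneg (by positivity)]
          rcases Nat.eq_zero_or_pos M with rfl | hM
          · simp
          rw [div_le_div_iff₀ (by positivity) (by positivity), one_mul]
          have := (Nat.mul_le_mul_right (d^2) (card_pairsOdd_le (M/d^2))).trans (Nat.div_mul_le_self _ _)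
          exact_mod_cast this
        calc _ ≤ 1 * (1 / (d:ℝ)^2) := mul_le_mul h1 h2 (norm_nonneg _) zero_le_one
          _ = _ := one_mul _
      · simp only [norm_zero]; positivity
  rw [tsum_mul_right, hmu] at key
  have e : 8 / Real.pi ^ 2 * (Real.pi / 16) = 1 / (2 * Real.pi) := by
    have := Real.pi_ne_zero
    field_simp; norm_num
  rw [e] at key
  exact key.congr (fun M => (pptCount_tsum M).symm)

lemma polar_mem (r θ : ℝ) (hr : 0 < r) (h1 : -Real.pi < θ) (h2 : θ < Real.pi) :
    (0 < r * Real.sin θ ∧ r * Real.sin θ < r * Real.cos θ ∧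
      (r * Real.cos θ)^2 + (r * Real.sin θ)^2 ≤ 1) ↔
    (0 < r ∧ r ≤ 1) ∧ 0 < θ ∧ θ < Real.pi / 4 := by
  have hpi := Real.pi_pos
  have e : (r * Real.cos θ)^2 + (r * Real.sin θ)^2 = r^2 := by
    have := Real.sin_sq_add_cos_sq θ
    linear_combination r^2 * this
  rw [e, mul_pos_iff_of_pos_left hr, mul_lt_mul_iff_right₀ hr, sq_le_one_iff₀ hr.le]
  constructor
  · rintro ⟨a, b, c⟩
    have h0 : 0 < θ := by
      by_contra hc
      exact absurd (Real.sin_nonpos_of_nonpos_of_neg_pi_le (not_lt.1 hc) h1.le) (not_le.2 a)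
    refine ⟨⟨hr, c⟩, h0, ?_⟩
    by_contra hc
    push Not at hc
    have hcos : Real.cos θ ≤ Real.cos (Real.pi/4) :=
      Real.cos_le_cos_of_nonneg_of_le_pi (by positivity) h2.le hc
    have hcpos : Real.cos θ > 0 := a.trans b
    have hθ : θ < Real.pi / 2 := by
      by_contra hh
      push Not at hh
      exact absurd (Real.cos_nonpos_of_pi_div_two_le_of_le hh (by linarith)) (not_le.2 hcpos)
    have hsin : Real.sin (Real.pi/4) ≤ Real.sin θ :=
      Real.sin_le_sin_of_le_of_le_pi_div_two (by linarith) hθ.le hc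
    rw [Real.sin_pi_div_four] at hsin
    rw [Real.cos_pi_div_four] at hcos
    linarith
  · rintro ⟨⟨_, c⟩, h0, h4⟩
    refine ⟨Real.sin_pos_of_pos_of_lt_pi h0 h2, ?_, c⟩
    have hcos : Real.cos (Real.pi/4) < Real.cos θ :=
      Real.cos_lt_cos_of_nonneg_of_le_pi h0.le (by linarith) h4
    have hsin : Real.sin θ < Real.sin (Real.pi/4) :=
      Real.sin_lt_sin_of_lt_of_le_pi_div_two (by linarith) (by linarith) h4
    rw [Real.sin_pi_div_four] at hsin
    rw [Real.cos_pi_div_four] at hcos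
    linarith

def sector2 : Set (ℝ × ℝ) := {p | 0 < p.2 ∧ p.2 < p.1 ∧ p.1^2 + p.2^2 ≤ 1}

lemma measurableSet_sector2 : MeasurableSet sector2 := by
  apply MeasurableSet.inter
  · exact measurableSet_lt measurable_const measurable_snd
  apply MeasurableSet.inter
  · exact measurableSet_lt measurable_snd measurable_fst
  · exact measurableSet_le (f := fun p : ℝ × ℝ => p.1^2 + p.2^2) (by fun_prop) measurable_const

open MeasureTheory in
lemma volume_sector2 : volume.real sector2 = Real.pi / 8 := by
  rw [← integral_indicator_one measurableSet_sector2, ← integral_comp_polarCoord_symm]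
  have hms : MeasurableSet (Set.Ioc (0:ℝ) 1 ×ˢ Set.Ioo (0:ℝ) (Real.pi/4)) :=
    measurableSet_Ioc.prod measurableSet_Ioo
  have e : ∫ p in polarCoord.target, p.1 • (sector2.indicator 1 (polarCoord.symm p) : ℝ) =
      ∫ p in polarCoord.target,
        (Set.Ioc (0:ℝ) 1 ×ˢ Set.Ioo (0:ℝ) (Real.pi/4)).indicator (fun p : ℝ × ℝ => p.1 * (1:ℝ)) p := by
    refine setIntegral_congr_fun polarCoord.open_target.measurableSet ?_
    rintro ⟨r, θ⟩ ⟨hr, hθ⟩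
    have := polar_mem r θ hr hθ.1 hθ.2
    by_cases h : (0 < r ∧ r ≤ 1) ∧ 0 < θ ∧ θ < Real.pi / 4
    · have hm : polarCoord.symm (r, θ) ∈ sector2 := this.2 h
      have hm' : (r, θ) ∈ (Set.Ioc (0:ℝ) 1 ×ˢ Set.Ioo (0:ℝ) (Real.pi/4)) := h
      simp only [Set.indicator_of_mem hm, Set.indicator_of_mem hm']
      simp
    · have hm : polarCoord.symm (r, θ) ∉ sector2 := fun hh => h (this.1 hh)
      have hm' : (r, θ) ∉ (Set.Ioc (0:ℝ) 1 ×ˢ Set.Ioo (0:ℝ) (Real.pi/4)) := h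
      simp only [Set.indicator_of_notMem hm, Set.indicator_of_notMem hm']
      simp
  rw [e, setIntegral_indicator hms]
  have hsub : polarCoord.target ∩ (Set.Ioc (0:ℝ) 1 ×ˢ Set.Ioo (0:ℝ) (Real.pi/4)) =
      (Set.Ioc (0:ℝ) 1 ×ˢ Set.Ioo (0:ℝ) (Real.pi/4)) := by
    apply Set.inter_eq_right.2
    rintro ⟨r, θ⟩ ⟨hr, hθ⟩
    have hpi := Real.pi_pos
    have := hθ.1
    have := hθ.2
    simp only at *
    exact ⟨hr.1, by simp only; linarith, by simp only; linarith⟩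
  rw [hsub, Measure.volume_eq_prod]
  rw [setIntegral_prod_mul (fun x : ℝ => x) (fun _ : ℝ => (1:ℝ)) (Set.Ioc (0:ℝ) 1) (Set.Ioo (0:ℝ) (Real.pi/4))]
  rw [← intervalIntegral.integral_of_le zero_le_one]
  have hpi := Real.pi_pos
  simp [Real.volume_real_Ioo_of_le (show (0:ℝ) ≤ Real.pi/4 by positivity)]
  ring

def sector : Set (Fin 2 → ℝ) := {v | 0 < v 1 ∧ v 1 < v 0 ∧ (v 0)^2 + (v 1)^2 ≤ 1}

open MeasureTheory in
lemma volume_sector : volume.real sector = Real.pi / 8 := by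
  rw [← volume_sector2, Measure.real, Measure.real,
    ← (volume_preserving_finTwoArrow ℝ).measure_preimage measurableSet_sector2.nullMeasurableSet]
  rfl

lemma measurableSet_sector : MeasurableSet sector :=
  (MeasurableEquiv.finTwoArrow (α := ℝ)).measurable measurableSet_sector2

lemma convex_sector : Convex ℝ sector := by
  rintro v ⟨h1, h2, h3⟩ w ⟨k1, k2, k3⟩ a b ha hb hab
  simp only [sector, Set.mem_ofPred_eq, Pi.add_apply, Pi.smul_apply, smul_eq_mul]
  refine ⟨?_, ?_, ?_⟩
  · rcases ha.eq_or_lt with rfl | ha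
    · obtain rfl : b = 1 := by linarith
      simpa using k1
    · have := mul_pos ha h1
      have := mul_nonneg hb k1.le
      linarith
  · rcases ha.eq_or_lt with rfl | ha
    · obtain rfl : b = 1 := by linarith
      simpa using k2
    · have := mul_lt_mul_of_pos_left h2 ha
      have := mul_le_mul_of_nonneg_left k2.le hb
      linarith
  · obtain rfl : b = 1 - a := by linarith
    have := mul_nonneg ha hb
    nlinarith [mul_nonneg this (sq_nonneg (v 0 - w 0)), mul_nonneg this (sq_nonneg (v 1 - w 1)),
      mul_le_mul_of_nonneg_left h3 ha, mul_le_mul_of_nonneg_left k3 hb]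

lemma bounded_sector : Bornology.IsBounded sector := by
  refine (Metric.isBounded_closedBall (x := (0 : Fin 2 → ℝ)) (r := 1)).subset ?_
  rintro v ⟨h1, h2, h3⟩
  rw [mem_closedBall_zero_iff, pi_norm_le_iff_of_nonneg zero_le_one]
  intro i
  rw [Real.norm_eq_abs, ← sq_le_one_iff_abs_le_one]
  have h0 : v 0 ^ 2 ≤ 1 := by nlinarith
  have h1' : v 1 ^ 2 ≤ 1 := by nlinarith
  fin_cases i
  · exact h0
  · exact h1'

open MeasureTheory Pointwise in
lemma tendsto_pairsAll :
    Tendsto (fun n : ℕ => ((pairsAll n).card : ℝ) / n) atTop (nhds (Real.pi / 8)) := by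
  have h := tendsto_card_div_pow_atTop_volume' sector bounded_sector measurableSet_sector
    (convex_sector.addHaar_frontier _) ?_
  · rw [volume_sector] at h
    have h2 := h.comp (Real.tendsto_sqrt_atTop.comp tendsto_natCast_atTop_atTop)
    refine h2.congr' ?_
    filter_upwards [eventually_ge_atTop 1] with n hn
    have hn0 : (0:ℝ) < n := by positivity
    have hs0 : 0 < √(n:ℝ) := Real.sqrt_pos.2 hn0
    simp only [Function.comp, Fintype.card_fin, Real.sq_sqrt hn0.le]
    congr 2
    have hinj : Function.Injective
        (fun p : ℕ × ℕ => (![(p.1:ℝ) / √(n:ℝ), (p.2:ℝ) / √(n:ℝ)] : Fin 2 → ℝ)) := by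
      rintro ⟨a, b⟩ ⟨c, d⟩ hh
      have h0 := congrFun hh 0
      have h1 := congrFun hh 1
      simp [div_left_inj' hs0.ne'] at h0 h1
      rw [h0, h1]
    rw [Nat.card_coe_set_eq, ← Set.ncard_coe_finset, ← Set.ncard_image_of_injective _ hinj]
    congr 1
    ext v
    have hsq : √(n:ℝ)^2 = n := Real.sq_sqrt hn0.le
    rw [Set.mem_inter_iff, Set.mem_smul_set_iff_inv_smul_mem₀ (inv_ne_zero hs0.ne'), inv_inv,
      SetLike.mem_coe, Module.Basis.mem_span_iff_repr_mem]
    simp only [Pi.basisFun_repr, Pi.smul_apply, smul_eq_mul, Set.mem_range, Set.mem_image,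
      Finset.mem_coe, mem_pairsAll, Prod.exists, Fin.forall_fin_two]
    constructor
    · rintro ⟨⟨h1, h2, h3⟩, ⟨a, ha⟩, ⟨b, hb⟩⟩
      simp only [algebraMap_int_eq, eq_intCast] at ha hb
      have hb0 : 0 < b := by
        have : (0:ℝ) < b := by rw [hb]; positivity
        exact_mod_cast this
      have hab : b < a := by
        have : (b:ℝ) < a := by rw [ha, hb]; gcongr
        exact_mod_cast this
      have hn : a^2 + b^2 ≤ n := by
        have : (a:ℝ)^2 + (b:ℝ)^2 ≤ n := by rw [ha, hb, mul_pow, mul_pow, hsq]; nlinarith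
        exact_mod_cast this
      lift a to ℕ using by omega
      lift b to ℕ using by omega
      refine ⟨a, b, ⟨by omega, by omega, by exact_mod_cast hn⟩, ?_⟩
      ext i
      fin_cases i
      · simp only [Int.cast_natCast] at ha; simp [ha]; field_simp
      · simp only [Int.cast_natCast] at hb; simp [hb]; field_simp
    · rintro ⟨a, b, ⟨h1, h2, h3⟩, rfl⟩
      simp only [Matrix.cons_val_zero, Matrix.cons_val_one]
      have h3' : (a:ℝ)^2 + (b:ℝ)^2 ≤ n := by exact_mod_cast h3
      refine ⟨⟨?_, ?_, ?_⟩, ⟨a, ?_⟩, ⟨b, ?_⟩⟩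
      · simp; positivity
      · simp; gcongr
      · simp only [Matrix.cons_val_zero, Matrix.cons_val_one, div_pow, hsq]
        rw [← add_div, div_le_one hn0]; exact h3'
      · simp; field_simp
      · simp; field_simp
  · rintro x y hx hxy _ ⟨v, ⟨h1, h2, h3⟩, rfl⟩
    have hy : 0 < y := hx.trans_le hxy
    have hq : 0 < x / y := by positivity
    have hq1 : x / y ≤ 1 := (div_le_one hy).2 hxy
    refine ⟨(x / y) • v, ⟨?_, ?_, ?_⟩, ?_⟩
    · simp only [Pi.smul_apply, smul_eq_mul]; positivity
    · simp only [Pi.smul_apply, smul_eq_mul]; gcongr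
    · simp only [Pi.smul_apply, smul_eq_mul]
      rw [mul_pow, mul_pow, ← mul_add]
      exact mul_le_one₀ (pow_le_one₀ hq.le hq1) (by positivity) h3
    · simp only [smul_smul]
      congr 1
      field_simp

/-- **Lehmer's theorem.**  If `z : ℕ_{≥1} → ℕ` is the nondecreasing enumeration with
multiplicity of the hypotenuses of primitive Pythagorean triples, i.e. `z` is monotone
nondecreasing on `{N ≥ 1}` and `|{N ≥ 1 : z N ≤ M}| = C M` for every `M`, then
`lim_{N→∞} z(N)/N = 2π`. -/
theorem lehmer_hypotenuse_asymptotic (z : ℕ → ℕ)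
    (hmono : ∀ N M : ℕ, 1 ≤ N → N ≤ M → z N ≤ z M)
    (hcount : ∀ M : ℕ, {N : ℕ | 1 ≤ N ∧ z N ≤ M}.ncard = pptCount M) :
    Tendsto (fun N : ℕ => (z N : ℝ) / N) atTop (nhds (2 * Real.pi)) := by
  exact final_step pptCount z (tendsto_pptCount tendsto_pairsAll tsum_odd_moebius) hmono hcount
end

section
/- For real numbers 0 ≤ α < β ≤ 1, let P(N;α,β) = {(m,n) ∈ ℕ×ℕ : gcd(m,n) = 1, m ≥ 1, n ≥ 1, α ≤ n/m ≤ β, m − n odd, m² + n² ≤ N}. Then lim_{N→∞} (1/N)·|P(N;α,β)| = (2/π²)·arctan((β−α)/(1+αβ)). -/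
open Filter

open MeasureTheory in
theorem sector_volume (α β : ℝ) (hα : 0 ≤ α) (hαβ : α < β) :
    volume.real {x : Fin 2 → ℝ | x ∈ {x : Fin 2 → ℝ | 0 < x 0 ∧ 0 < x 1 ∧ α * x 0 ≤ x 1 ∧ x 1 ≤ β * x 0} ∧
      x 0 ^ 2 + x 1 ^ 2 ≤ 1} = (Real.arctan β - Real.arctan α) / 2 := by
  set K : Set (ℝ × ℝ) := {x | 0 < x.1 ∧ 0 < x.2 ∧ α * x.1 ≤ x.2 ∧ x.2 ≤ β * x.1 ∧ 
    x.1 ^ 2 + x.2 ^ 2 ≤ 1} with hK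
  have hKm : MeasurableSet K := by
    simp only [hK]
    measurability
  have h1 : volume.real {x : Fin 2 → ℝ | x ∈ {x : Fin 2 → ℝ | 0 < x 0 ∧ 0 < x 1 ∧ α * x 0 ≤ x 1 ∧ x 1 ≤ β * x 0} ∧
      x 0 ^ 2 + x 1 ^ 2 ≤ 1} = volume.real K := by
    rw [← (volume_preserving_finTwoArrow ℝ).measureReal_preimage hKm.nullMeasurableSet]
    congr 1
    ext x
    simp [hK, and_assoc]
  rw [h1]
  have h2 : volume.real K = ∫ p, K.indicator (fun _ => (1:ℝ)) p := by
    rw [integral_indicator hKm]; simp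
  rw [h2, ← integral_comp_polarCoord_symm]
  set J : Set (ℝ × ℝ) := Set.Ioc (0:ℝ) 1 ×ˢ (Set.Icc (Real.arctan α) (Real.arctan β) ∩ Set.Ioi 0) with hJ
  have hJm : MeasurableSet J := measurableSet_Ioc.prod (measurableSet_Icc.inter measurableSet_Ioi)
  have hbp := Real.arctan_lt_pi_div_two β
  have hpi := Real.pi_pos
  have h3 : ∀ p ∈ polarCoord.target, p.1 • K.indicator (fun _ => (1:ℝ)) (polarCoord.symm p)
      = J.indicator (fun p => p.1 * 1) p := by
    rintro ⟨r, φ⟩ hp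
    have hr : 0 < r := hp.1
    have hφ1 : -Real.pi < φ := hp.2.1
    have hφ2 : φ < Real.pi := hp.2.2
    have hiff : polarCoord.symm (r, φ) ∈ K ↔ (r, φ) ∈ J := by
      simp only [hK, hJ, polarCoord_symm_apply, Set.mem_ofPred_eq, Set.mem_prod, Set.mem_Ioc,
        Set.mem_inter_iff, Set.mem_Icc, Set.mem_Ioi]
      have hsq : (r * Real.cos φ) ^ 2 + (r * Real.sin φ) ^ 2 = r ^ 2 := by
        have := Real.sin_sq_add_cos_sq φ
        linear_combination r ^ 2 * this
      rw [hsq]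
      have hr2 : r ^ 2 ≤ 1 ↔ r ≤ 1 := by
        constructor <;> intro h <;> nlinarith
      rw [hr2, mul_pos_iff_of_pos_left hr, mul_pos_iff_of_pos_left hr]
      constructor
      · rintro ⟨hc, hs, ha, hb, h⟩
        have hφ0 : 0 < φ := by
          by_contra hcon
          have := Real.sin_nonpos_of_nonpos_of_neg_pi_le (not_lt.mp hcon) hφ1.le
          linarith
        have hφh : φ < Real.pi / 2 := by
          by_contra hcon
          have := Real.cos_nonpos_of_pi_div_two_le_of_le (not_lt.mp hcon) (by linarith)
          linarith
        have ht : φ = Real.arctan (Real.tan φ) := (Real.arctan_tan (by linarith) hφh).symm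
        refine ⟨⟨hr, h⟩, ⟨?_, ?_⟩, hφ0⟩
        · rw [ht]
          apply Real.arctan_mono
          rw [Real.tan_eq_sin_div_cos, le_div_iff₀ hc]
          nlinarith
        · rw [ht]
          apply Real.arctan_mono
          rw [Real.tan_eq_sin_div_cos, div_le_iff₀ hc]
          nlinarith
      · rintro ⟨⟨-, h⟩, ⟨ha, hb⟩, h0⟩
        have hφh : φ < Real.pi / 2 := by linarith
        have hc : 0 < Real.cos φ := Real.cos_pos_of_mem_Ioo ⟨by linarith, hφh⟩
        have ht : φ = Real.arctan (Real.tan φ) := (Real.arctan_tan (by linarith) hφh).symm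
        rw [ht] at ha hb
        have ha' := Real.arctan_strictMono.le_iff_le.mp ha
        have hb' := Real.arctan_strictMono.le_iff_le.mp hb
        rw [Real.tan_eq_sin_div_cos, le_div_iff₀ hc] at ha'
        rw [Real.tan_eq_sin_div_cos, div_le_iff₀ hc] at hb'
        refine ⟨hc, Real.sin_pos_of_pos_of_lt_pi h0 hφ2, by nlinarith, by nlinarith, h⟩
    by_cases h : (r, φ) ∈ J
    · rw [Set.indicator_of_mem h, Set.indicator_of_mem (hiff.mpr h)]; simp
    · rw [Set.indicator_of_notMem h, Set.indicator_of_notMem (fun h' => h (hiff.mp h'))]; simp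
  rw [setIntegral_congr_fun (polarCoord.open_target.measurableSet) h3,
    setIntegral_indicator hJm]
  have h4 : polarCoord.target ∩ J = J := by
    apply Set.inter_eq_right.mpr
    rintro ⟨r, φ⟩ ⟨h1, h2, h3⟩
    have := h2.1
    have := h2.2
    have h0 : (0:ℝ) < φ := h3
    exact ⟨h1.1, by simp only at *; linarith, by simp only at *; linarith⟩
  rw [h4, hJ, Measure.volume_eq_prod, setIntegral_prod_mul (fun r : ℝ => r) (fun _ : ℝ => (1:ℝ))]
  have h5 : (∫ x in Set.Ioc (0:ℝ) 1, x) = 1 / 2 := by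
    rw [← intervalIntegral.integral_of_le zero_le_one]; simp
  have h6 : (∫ x in Set.Icc (Real.arctan α) (Real.arctan β) ∩ Set.Ioi 0, (1:ℝ)) =
      Real.arctan β - Real.arctan α := by
    have h0 : 0 ≤ Real.arctan α := by simpa using hα
    have hlt : Real.arctan α < Real.arctan β := Real.arctan_strictMono hαβ
    have : (Set.Icc (Real.arctan α) (Real.arctan β) ∩ Set.Ioi 0 : Set ℝ) =ᵐ[volume]
        Set.Icc (Real.arctan α) (Real.arctan β) := by
      have h7 : (Set.Ioi (0:ℝ)) =ᵐ[volume] Set.Ici 0 := Ioi_ae_eq_Ici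
      have h8 := (ae_eq_refl (Set.Icc (Real.arctan α) (Real.arctan β))).inter h7
      refine h8.trans ?_
      have h9 : Set.Icc (Real.arctan α) (Real.arctan β) ∩ Set.Ici 0 =
          Set.Icc (Real.arctan α) (Real.arctan β) :=
        Set.inter_eq_left.mpr fun x hx => h0.trans hx.1
      rw [h9]
      exact ae_eq_refl _
    rw [setIntegral_congr_set this]
    simp [hlt.le]
  rw [h5, h6]; ring

open MeasureTheory in
theorem sector_lattice (α β : ℝ) (hα : 0 ≤ α) (hαβ : α < β)
    (b : Module.Basis (Fin 2) ℝ (Fin 2 → ℝ)) :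
    Tendsto (fun c : ℝ => (Nat.card ({x : Fin 2 → ℝ | x ∈ {x : Fin 2 → ℝ | 0 < x 0 ∧ 0 < x 1 ∧
      α * x 0 ≤ x 1 ∧ x 1 ≤ β * x 0} ∧ x 0 ^ 2 + x 1 ^ 2 ≤ c} ∩
        (Submodule.span ℤ (Set.range b)) : Set (Fin 2 → ℝ)) : ℝ) / c)
      atTop (nhds ((Real.arctan β - Real.arctan α) / 2 / |(Matrix.of b).det|)) := by
  have hco : ZLattice.covolume (Submodule.span ℤ (Set.range b)) = |(Matrix.of b).det| := by
    rw [ZLattice.covolume_eq_measure_fundamentalDomain _ volume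
      (ZSpan.isAddFundamentalDomain b volume), ZSpan.volume_real_fundamentalDomain]
  rw [← hco, ← sector_volume α β hα hαβ]
  have hconv : Convex ℝ {x : Fin 2 → ℝ | x ∈ {x : Fin 2 → ℝ | 0 < x 0 ∧ 0 < x 1 ∧
      α * x 0 ≤ x 1 ∧ x 1 ≤ β * x 0} ∧ x 0 ^ 2 + x 1 ^ 2 ≤ 1} := by
    rintro x ⟨⟨x1, x2, x3, x4⟩, x5⟩ y ⟨⟨y1, y2, y3, y4⟩, y5⟩ s t hs ht hst
    have hst' : 0 < s ∨ 0 < t := by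
      by_contra! h
      linarith
    simp only [Set.mem_ofPred_eq, Pi.add_apply, Pi.smul_apply, smul_eq_mul]
    have t1 : t = 1 - s := by linarith
    refine ⟨⟨?_, ?_, ?_, ?_⟩, ?_⟩
    · rcases hst' with h | h <;> positivity
    · rcases hst' with h | h <;> positivity
    · nlinarith
    · nlinarith
    · have e1 : (s * x 0 + t * y 0) ^ 2 + (s * x 1 + t * y 1) ^ 2 =
        s * (x 0 ^ 2 + x 1 ^ 2) + t * (y 0 ^ 2 + y 1 ^ 2) -
          s * t * ((x 0 - y 0) ^ 2 + (x 1 - y 1) ^ 2) := by subst t1; ring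
      have : 0 ≤ s * t * ((x 0 - y 0) ^ 2 + (x 1 - y 1) ^ 2) := by positivity
      nlinarith
  refine ZLattice.covolume.tendsto_card_le_div (Submodule.span ℤ (Set.range b))
    (X := {x : Fin 2 → ℝ | 0 < x 0 ∧ 0 < x 1 ∧ α * x 0 ≤ x 1 ∧ x 1 ≤ β * x 0})
    (F := fun x => x 0 ^ 2 + x 1 ^ 2) ?_ ?_ ?_ ?_ ?_
  · rintro x r ⟨x1, x2, x3, x4⟩ hr
    simp only [Set.mem_ofPred_eq, Pi.smul_apply, smul_eq_mul]
    refine ⟨by positivity, by positivity, by nlinarith, by nlinarith⟩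
  · intro x r hr
    simp; ring
  · refine (Metric.isBounded_closedBall (x := (0 : Fin 2 → ℝ)) (r := 1)).subset ?_
    rintro x ⟨-, hx⟩
    rw [mem_closedBall_zero_iff, pi_norm_le_iff_of_nonneg zero_le_one]
    intro i
    rw [Real.norm_eq_abs, ← sq_le_one_iff_abs_le_one]
    fin_cases i
    · change x 0 ^ 2 ≤ 1
      nlinarith [sq_nonneg (x 1)]
    · change x 1 ^ 2 ≤ 1
      nlinarith [sq_nonneg (x 0)]
  · measurability
  · exact hconv.addHaar_frontier _

theorem odd_moebius_tsum :
    ∑' d : ℕ, (if Odd d then (ArithmeticFunction.moebius d : ℝ) else 0) / (d : ℝ) ^ 2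
      = 8 / Real.pi ^ 2 := by
  have hs : (1:ℝ) < (2:ℂ).re := by norm_num
  have h1 := DirichletCharacter.LSeries.mul_mu_eq_one (1 : DirichletCharacter ℂ 2) hs
  have h2 := DirichletCharacter.LFunctionTrivChar_eq_mul_riemannZeta (N := 2) (s := 2) (by norm_num)
  rw [DirichletCharacter.LFunctionTrivChar, DirichletCharacter.LFunction_eq_LSeries _ hs,
    riemannZeta_two, Nat.prime_two.primeFactors, Finset.prod_singleton] at h2
  rw [h2] at h1
  have h3 : LSeries ((fun n : ℕ => (1 : DirichletCharacter ℂ 2) (n : ZMod 2)) *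
      (fun n : ℕ => ((ArithmeticFunction.moebius n : ℤ) : ℂ))) 2 =
      ((∑' d : ℕ, (if Odd d then (ArithmeticFunction.moebius d : ℝ) else 0) / (d : ℝ) ^ 2 : ℝ) : ℂ) := by
    rw [LSeries, Complex.ofReal_tsum]
    congr 1
    ext d
    rcases Nat.eq_zero_or_pos d with rfl | hd
    · simp
    rw [LSeries.term_of_ne_zero hd.ne']
    have : ((d : ℂ) ^ (2:ℂ)) = (d:ℂ) ^ 2 := by
      exact_mod_cast Complex.cpow_natCast (d : ℂ) 2
    rw [this]
    push_cast
    congr 1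
    by_cases h : Odd d
    · have : IsUnit (d : ZMod 2) := by
        rw [ZMod.isUnit_iff_coprime]; exact (Nat.coprime_two_right).mpr h
      simp [h, MulChar.one_apply this]
    · have : ¬ IsUnit (d : ZMod 2) := by
        rw [ZMod.isUnit_iff_coprime]; exact fun h' => h ((Nat.coprime_two_right).mp h')
      simp [h, MulChar.map_nonunit _ this]
  rw [h3] at h1
  have h4 : ((2:ℕ) : ℂ) ^ (-2 : ℂ) = 1 / 4 := by
    rw [Complex.cpow_neg]
    have : (((2:ℕ):ℂ) ^ (2:ℂ)) = 4 := by
      have := Complex.cpow_natCast ((2:ℕ) : ℂ) 2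
      push_cast at this ⊢
      rw [this]; norm_num
    rw [this]; norm_num
  rw [h4] at h1
  have h5 : ((1 - 1/4 : ℝ) * (Real.pi ^ 2 / 6)) * (∑' d : ℕ, (if Odd d then (ArithmeticFunction.moebius d : ℝ) else 0) / (d : ℝ) ^ 2) = 1 := by
    generalize (∑' d : ℕ, (if Odd d then (ArithmeticFunction.moebius d : ℝ) else 0) / (d : ℝ) ^ 2) = S at h1
    apply Complex.ofReal_injective
    push_cast
    exact h1
  have := Real.pi_pos
  rw [eq_div_iff (by positivity)]
  linarith

theorem moebius_ind (n : ℕ) (hn : n ≠ 0) :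
    ∑ d ∈ n.divisors, (ArithmeticFunction.moebius d : ℝ) = if n = 1 then 1 else 0 := by
  have := congrArg (fun f : ArithmeticFunction ℝ => f n)
    (ArithmeticFunction.coe_moebius_mul_coe_zeta (R := ℝ))
  simp only [ArithmeticFunction.coe_mul_zeta_apply, ArithmeticFunction.one_apply] at this
  exact this

def secAll (α β c : ℝ) : Set (ℕ × ℕ) :=
  {p | 1 ≤ p.1 ∧ 1 ≤ p.2 ∧ α * p.1 ≤ p.2 ∧ (p.2 : ℝ) ≤ β * p.1 ∧ (p.1 : ℝ) ^ 2 + (p.2 : ℝ) ^ 2 ≤ c}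

def secOdd (α β c : ℝ) : Set (ℕ × ℕ) := {p | p ∈ secAll α β c ∧ Odd (p.1 + p.2)}

def secEven (α β c : ℝ) : Set (ℕ × ℕ) := {p | p ∈ secAll α β c ∧ Even (p.1 + p.2)}

theorem secAll_subset (α β c : ℝ) :
    secAll α β c ⊆ ((Finset.Icc 1 ⌊√c⌋₊ ×ˢ Finset.Icc 1 ⌊√c⌋₊ : Finset (ℕ × ℕ)) : Set (ℕ × ℕ)) := by
  rintro ⟨m, n⟩ ⟨h1, h2, -, -, h5⟩
  simp only [Finset.coe_product, Finset.coe_Icc, Set.mem_prod, Set.mem_Icc] at *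
  refine ⟨⟨h1, ?_⟩, ⟨h2, ?_⟩⟩
  · apply Nat.le_floor
    apply Real.le_sqrt_of_sq_le
    nlinarith [sq_nonneg (n : ℝ)]
  · apply Nat.le_floor
    apply Real.le_sqrt_of_sq_le
    nlinarith [sq_nonneg (m : ℝ)]

theorem secAll_finite (α β c : ℝ) : (secAll α β c).Finite :=
  (Finset.finite_toSet _).subset (secAll_subset α β c)

theorem secOdd_finite (α β c : ℝ) : (secOdd α β c).Finite :=
  (secAll_finite α β c).subset fun _ h => h.1

theorem secEven_finite (α β c : ℝ) : (secEven α β c).Finite :=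
  (secAll_finite α β c).subset fun _ h => h.1

theorem secAll_ncard_le (α β c : ℝ) (hc : 0 ≤ c) : ((secAll α β c).ncard : ℝ) ≤ c := by
  have h := Set.ncard_le_ncard (secAll_subset α β c) (Finset.finite_toSet _)
  rw [Set.ncard_coe_finset, Finset.card_product, Nat.card_Icc, Nat.add_sub_cancel] at h
  have h2 : (⌊√c⌋₊ : ℝ) ≤ √c := Nat.floor_le (Real.sqrt_nonneg c)
  have h3 : ((secAll α β c).ncard : ℝ) ≤ (⌊√c⌋₊ : ℝ) * ⌊√c⌋₊ := by exact_mod_cast h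
  have h4 := Real.mul_self_sqrt hc
  have h5 : (0:ℝ) ≤ ⌊√c⌋₊ := Nat.cast_nonneg _
  nlinarith

theorem secOdd_ncard_le (α β c : ℝ) (hc : 0 ≤ c) : ((secOdd α β c).ncard : ℝ) ≤ c := by
  refine le_trans ?_ (secAll_ncard_le α β c hc)
  have hsub : secOdd α β c ⊆ secAll α β c := fun _ h => h.1
  exact_mod_cast Set.ncard_le_ncard hsub (secAll_finite α β c)

theorem sec_split (α β c : ℝ) :
    (secAll α β c).ncard = (secOdd α β c).ncard + (secEven α β c).ncard := by
  rw [← Set.ncard_union_eq _ (secOdd_finite α β c) (secEven_finite α β c)]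
  · congr 1
    ext p
    simp only [secOdd, secEven, Set.mem_union, Set.mem_ofPred_eq]
    have := Nat.even_or_odd (p.1 + p.2)
    tauto
  · rw [Set.disjoint_left]
    rintro p ⟨-, h⟩ ⟨-, h'⟩
    exact (Nat.not_even_iff_odd.mpr h) h'

def pairVec (p : ℕ × ℕ) : Fin 2 → ℝ := ![(p.1 : ℝ), (p.2 : ℝ)]

theorem pairVec_inj : Function.Injective pairVec := by
  rintro ⟨a, b⟩ ⟨c, d⟩ h
  have h0 := congrFun h 0
  have h1 := congrFun h 1
  simp [pairVec] at h0 h1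
  simp [h0, h1]

theorem secAll_tendsto (α β : ℝ) (hα : 0 ≤ α) (hαβ : α < β) :
    Tendsto (fun c : ℝ => ((secAll α β c).ncard : ℝ) / c) atTop
      (nhds ((Real.arctan β - Real.arctan α) / 2)) := by
  have h := sector_lattice α β hα hαβ (Pi.basisFun ℝ (Fin 2))
  have hdet : (Matrix.of (Pi.basisFun ℝ (Fin 2))).det = 1 := by
    rw [Matrix.det_fin_two]; simp
  rw [hdet, abs_one, div_one] at h
  refine h.congr fun c => ?_
  congr 2
  rw [Nat.card_coe_set_eq, ← Set.ncard_image_of_injective (secAll α β c) pairVec_inj]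
  congr 1
  ext x
  simp only [Set.mem_inter_iff, Set.mem_ofPred_eq, SetLike.mem_coe,
    Module.Basis.mem_span_iff_repr_mem, Pi.basisFun_repr, Set.mem_image, secAll]
  constructor
  · rintro ⟨⟨⟨h1, h2, h3, h4⟩, h5⟩, h6⟩
    obtain ⟨u, hu⟩ := h6 0
    obtain ⟨v, hv⟩ := h6 1
    simp only [algebraMap_int_eq, eq_intCast] at hu hv
    rw [← hu] at h1 h3 h4 h5
    rw [← hv] at h2 h3 h4 h5
    have hu0 : 0 < u := by exact_mod_cast h1
    have hv0 : 0 < v := by exact_mod_cast h2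
    lift u to ℕ using hu0.le
    lift v to ℕ using hv0.le
    simp only [Int.cast_natCast] at *
    refine ⟨(u, v), ⟨by simp only; omega, by simp only; omega, h3, h4, h5⟩, ?_⟩
    ext i
    fin_cases i <;> simp [pairVec, hu, hv]
  · rintro ⟨⟨m, n⟩, ⟨h1, h2, h3, h4, h5⟩, rfl⟩
    simp only at h1 h2
    refine ⟨⟨⟨?_, ?_, h3, h4⟩, h5⟩, ?_⟩
    · simp [pairVec]; omega
    · simp [pairVec]; omega
    · intro i
      fin_cases i
      · exact ⟨m, by simp [pairVec]⟩
      · exact ⟨n, by simp [pairVec]⟩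

noncomputable def rotEquiv : (Fin 2 → ℝ) ≃ₗ[ℝ] (Fin 2 → ℝ) where
  toFun x := ![x 0 + x 1, x 0 - x 1]
  invFun x := ![(x 0 + x 1) / 2, (x 0 - x 1) / 2]
  map_add' x y := by ext i; fin_cases i <;> simp <;> ring
  map_smul' r x := by ext i; fin_cases i <;> simp <;> ring
  left_inv x := by ext i; fin_cases i <;> simp <;> ring
  right_inv x := by ext i; fin_cases i <;> simp <;> ring

theorem secEven_tendsto (α β : ℝ) (hα : 0 ≤ α) (hαβ : α < β) :
    Tendsto (fun c : ℝ => ((secEven α β c).ncard : ℝ) / c) atTop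
      (nhds ((Real.arctan β - Real.arctan α) / 4)) := by
  have h := sector_lattice α β hα hαβ ((Pi.basisFun ℝ (Fin 2)).map rotEquiv)
  have hdet : (Matrix.of ((Pi.basisFun ℝ (Fin 2)).map rotEquiv)).det = -2 := by
    rw [Matrix.det_fin_two]; simp [rotEquiv]; norm_num
  rw [hdet] at h
  have e : (Real.arctan β - Real.arctan α) / 2 / |(-2:ℝ)| =
    (Real.arctan β - Real.arctan α) / 4 := by rw [abs_neg, abs_two]; ring
  rw [e] at h
  refine h.congr fun c => ?_
  congr 2
  rw [Nat.card_coe_set_eq, ← Set.ncard_image_of_injective (secEven α β c) pairVec_inj]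
  congr 1
  ext x
  simp only [Set.mem_inter_iff, Set.mem_ofPred_eq, SetLike.mem_coe,
    Module.Basis.mem_span_iff_repr_mem, Module.Basis.map_repr, LinearEquiv.trans_apply,
    Pi.basisFun_repr, Set.mem_image, secAll, secEven]
  have r0 : ∀ x : Fin 2 → ℝ, rotEquiv.symm x 0 = (x 0 + x 1) / 2 := fun x => rfl
  have r1 : ∀ x : Fin 2 → ℝ, rotEquiv.symm x 1 = (x 0 - x 1) / 2 := fun x => rfl
  constructor
  · rintro ⟨⟨⟨h1, h2, h3, h4⟩, h5⟩, h6⟩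
    obtain ⟨u, hu⟩ := h6 0
    obtain ⟨v, hv⟩ := h6 1
    simp only [algebraMap_int_eq, eq_intCast, r0, r1] at hu hv
    have e0 : x 0 = ((u + v : ℤ) : ℝ) := by push_cast; linarith
    have e1 : x 1 = ((u - v : ℤ) : ℝ) := by push_cast; linarith
    have hpar : Even ((u + v) + (u - v)) := ⟨u, by ring⟩
    generalize u + v = m at *
    generalize u - v = n at *
    rw [e0] at h1 h3 h4 h5
    rw [e1] at h2 h3 h4 h5
    have hu0 : 0 < m := by exact_mod_cast h1
    have hv0 : 0 < n := by exact_mod_cast h2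
    lift m to ℕ using hu0.le
    lift n to ℕ using hv0.le
    simp only [Int.cast_natCast] at *
    refine ⟨(m, n), ⟨⟨by simp only; omega, by simp only; omega, h3, h4, h5⟩, ?_⟩, ?_⟩
    · exact_mod_cast hpar
    ext i
    fin_cases i <;> simp [pairVec, e0, e1]
  · rintro ⟨⟨m, n⟩, ⟨⟨h1, h2, h3, h4, h5⟩, h6⟩, rfl⟩
    simp only at h1 h2
    refine ⟨⟨⟨?_, ?_, h3, h4⟩, h5⟩, ?_⟩
    · simp [pairVec]; omega
    · simp [pairVec]; omega
    · obtain ⟨k, hk⟩ := h6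
      simp only at hk
      have hk' : (m : ℝ) + n = k + k := by exact_mod_cast hk
      intro i
      fin_cases i
      · refine ⟨k, ?_⟩
        change _ = rotEquiv.symm _ 0
        rw [r0]
        simp [pairVec]; linarith
      · refine ⟨k - n, ?_⟩
        change _ = rotEquiv.symm _ 1
        rw [r1]
        simp [pairVec]; linarith

theorem secOdd_tendsto (α β : ℝ) (hα : 0 ≤ α) (hαβ : α < β) :
    Tendsto (fun c : ℝ => ((secOdd α β c).ncard : ℝ) / c) atTop
      (nhds ((Real.arctan β - Real.arctan α) / 4)) := by
  have h := (secAll_tendsto α β hα hαβ).sub (secEven_tendsto α β hα hαβ)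
  have e : (Real.arctan β - Real.arctan α) / 2 - (Real.arctan β - Real.arctan α) / 4 =
    (Real.arctan β - Real.arctan α) / 4 := by ring
  rw [e] at h
  refine h.congr fun c => ?_
  rw [sec_split]; push_cast; ring

/-- pairs divisible by an odd `d` correspond to the scaled sector -/
theorem secOdd_dvd (α β c : ℝ) (d : ℕ) (hd : Odd d) :
    {p | p ∈ secOdd α β c ∧ d ∣ Nat.gcd p.1 p.2}.ncard = (secOdd α β (c / (d : ℝ) ^ 2)).ncard := by
  have hd0 : 0 < d := hd.pos
  have hdR : (0:ℝ) < d := by exact_mod_cast hd0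
  have hinj : Function.Injective (fun p : ℕ × ℕ => (d * p.1, d * p.2)) := by
    rintro ⟨a, b⟩ ⟨a', b'⟩ h
    simp only [Prod.mk.injEq] at h ⊢
    exact ⟨Nat.eq_of_mul_eq_mul_left hd0 h.1, Nat.eq_of_mul_eq_mul_left hd0 h.2⟩
  rw [← Set.ncard_image_of_injective (secOdd α β (c / (d : ℝ) ^ 2)) hinj]
  congr 1
  have key : ∀ a b : ℕ, (d * a, d * b) ∈ secOdd α β c ↔ (a, b) ∈ secOdd α β (c / (d : ℝ) ^ 2) := by
    intro a b
    simp only [secOdd, secAll, Set.mem_ofPred_eq]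
    rw [le_div_iff₀ (by positivity), ← mul_add, Nat.odd_mul]
    push_cast
    have i1 : α * (d * a) ≤ d * b ↔ α * a ≤ b := by
      rw [mul_left_comm]; exact mul_le_mul_iff_right₀ hdR
    have i2 : (d * b : ℝ) ≤ β * (d * a) ↔ (b : ℝ) ≤ β * a := by
      rw [mul_left_comm]; exact mul_le_mul_iff_right₀ hdR
    have i3 : (d * a : ℝ) ^ 2 + (d * b) ^ 2 = ((a:ℝ) ^ 2 + b ^ 2) * d ^ 2 := by ring
    have i4 : ∀ a : ℕ, 1 ≤ d * a ↔ 1 ≤ a := by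
      intro a
      rw [Nat.one_le_iff_ne_zero, Nat.one_le_iff_ne_zero]
      simp [hd0.ne']
    rw [i1, i2, i3, i4, i4]
    tauto
  ext ⟨m, n⟩
  simp only [Set.mem_ofPred_eq, Set.mem_image, Nat.dvd_gcd_iff, Prod.exists, Prod.mk.injEq]
  constructor
  · rintro ⟨h, ⟨a, rfl⟩, ⟨b, rfl⟩⟩
    exact ⟨a, b, (key a b).mp h, rfl, rfl⟩
  · rintro ⟨a, b, h, rfl, rfl⟩
    exact ⟨(key a b).mpr h, Dvd.intro _ rfl, Dvd.intro _ rfl⟩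

theorem secOdd_coprime (α β : ℝ) (c : ℝ) :
    (({p | p ∈ secOdd α β c ∧ Nat.gcd p.1 p.2 = 1}.ncard : ℕ) : ℝ) =
      ∑' d : ℕ, (if Odd d then (ArithmeticFunction.moebius d : ℝ) else 0) *
        (secOdd α β (c / (d : ℝ) ^ 2)).ncard := by
  classical
  set Q := (secOdd_finite α β c).toFinset with hQ
  have hmem : ∀ p, p ∈ Q ↔ p ∈ secOdd α β c := fun p => by simp [hQ]
  set D := Q.biUnion (fun p => (Nat.gcd p.1 p.2).divisors) with hD
  have hpos : ∀ p ∈ Q, Nat.gcd p.1 p.2 ≠ 0 := by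
    intro p hp
    have h1 : 1 ≤ p.1 := ((hmem p).mp hp).1.1
    exact (Nat.gcd_pos_of_pos_left _ h1).ne'
  have hset : ∀ d : ℕ, {p | p ∈ secOdd α β c ∧ d ∣ Nat.gcd p.1 p.2}.ncard =
      (Q.filter (fun p => d ∣ Nat.gcd p.1 p.2)).card := by
    intro d
    rw [← Set.ncard_coe_finset]
    congr 1
    ext p
    simp [hmem]
  have hterm : ∀ d : ℕ, (if Odd d then (ArithmeticFunction.moebius d : ℝ) else 0) *
        (secOdd α β (c / (d : ℝ) ^ 2)).ncard = (ArithmeticFunction.moebius d : ℝ) *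
        ((Q.filter (fun p => d ∣ Nat.gcd p.1 p.2)).card : ℝ) := by
    intro d
    by_cases hd : Odd d
    · rw [if_pos hd, ← secOdd_dvd α β c d hd, hset]
    · have : Q.filter (fun p => d ∣ Nat.gcd p.1 p.2) = ∅ := by
        rw [Finset.filter_eq_empty_iff]
        intro p hp hdvd
        have h1 := ((hmem p).mp hp).2
        have h2 : 2 ∣ d := (Nat.not_odd_iff_even.mp hd).two_dvd
        have h3 := h2.trans hdvd
        have h4 := h3.trans (Nat.gcd_dvd_left _ _)
        have h5 := h3.trans (Nat.gcd_dvd_right _ _)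
        have h6 : Even (p.1 + p.2) := even_iff_two_dvd.mpr (dvd_add h4 h5)
        exact (Nat.not_even_iff_odd.mpr h1) h6
      simp [hd, this]
  simp_rw [hterm]
  rw [tsum_eq_sum (s := D)]
  · have h1 : {p | p ∈ secOdd α β c ∧ Nat.gcd p.1 p.2 = 1}.ncard =
      (Q.filter (fun p => Nat.gcd p.1 p.2 = 1)).card := by
      rw [← Set.ncard_coe_finset]
      congr 1
      ext p
      simp [hmem]
    rw [h1, Finset.card_filter]
    push_cast
    have h2 : ∀ p ∈ Q, (if Nat.gcd p.1 p.2 = 1 then (1:ℝ) else 0) =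
        ∑ d ∈ D, if d ∣ Nat.gcd p.1 p.2 then (ArithmeticFunction.moebius d : ℝ) else 0 := by
      intro p hp
      rw [← moebius_ind _ (hpos p hp), ← Finset.sum_filter]
      apply Finset.sum_congr _ fun _ _ => rfl
      ext d
      simp only [Finset.mem_filter, Nat.mem_divisors, hD, Finset.mem_biUnion]
      constructor
      · rintro ⟨h, h'⟩
        exact ⟨⟨p, hp, h, h'⟩, h⟩
      · rintro ⟨-, h⟩
        exact ⟨h, hpos p hp⟩
    rw [Finset.sum_congr rfl h2, Finset.sum_comm]
    apply Finset.sum_congr rfl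
    intro d _
    rw [← Finset.sum_filter, Finset.sum_const, nsmul_eq_mul, mul_comm]
  · intro d hd
    have : Q.filter (fun p => d ∣ Nat.gcd p.1 p.2) = ∅ := by
      rw [Finset.filter_eq_empty_iff]
      intro p hp hdvd
      apply hd
      simp only [hD, Finset.mem_biUnion, Nat.mem_divisors]
      exact ⟨p, hp, hdvd, hpos p hp⟩
    simp [this]

theorem secOdd_coprime_tendsto (α β : ℝ) (hα : 0 ≤ α) (hαβ : α < β) :
    Tendsto (fun N : ℕ => (1 : ℝ) / N *
      (({p | p ∈ secOdd α β N ∧ Nat.gcd p.1 p.2 = 1}.ncard : ℕ) : ℝ)) atTop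
      (nhds (2 / Real.pi ^ 2 * (Real.arctan β - Real.arctan α))) := by
  set θ := Real.arctan β - Real.arctan α with hθ
  have hlim : 2 / Real.pi ^ 2 * θ =
      ∑' d : ℕ, (if Odd d then (ArithmeticFunction.moebius d : ℝ) else 0) / (d : ℝ) ^ 2 * (θ / 4) := by
    rw [tsum_mul_right, odd_moebius_tsum]; ring
  rw [hlim]
  have hmu : ∀ d : ℕ, |(if Odd d then (ArithmeticFunction.moebius d : ℝ) else 0)| ≤ 1 := by
    intro d
    split_ifs
    · exact_mod_cast ArithmeticFunction.abs_moebius_le_one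
    · simp
  have hcong : ∀ N : ℕ, (1 : ℝ) / N *
      (({p | p ∈ secOdd α β N ∧ Nat.gcd p.1 p.2 = 1}.ncard : ℕ) : ℝ) =
      ∑' d : ℕ, (1 : ℝ) / N * ((if Odd d then (ArithmeticFunction.moebius d : ℝ) else 0) *
        (secOdd α β ((N : ℝ) / (d : ℝ) ^ 2)).ncard) := by
    intro N
    rw [secOdd_coprime, tsum_mul_left]
  simp_rw [hcong]
  refine tendsto_tsum_of_dominated_convergence (bound := fun d : ℕ => 1 / (d : ℝ) ^ 2)
    (Real.summable_one_div_nat_pow.mpr one_lt_two) ?_ ?_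
  · intro d
    by_cases hd : Odd d
    · have hdR : (0:ℝ) < d := by exact_mod_cast hd.pos
      have h1 : Tendsto (fun N : ℕ => (N : ℝ) / (d : ℝ) ^ 2) atTop atTop :=
        tendsto_natCast_atTop_atTop.atTop_div_const (by positivity)
      have h2 := ((secOdd_tendsto α β hα hαβ).comp h1).const_mul
        ((if Odd d then (ArithmeticFunction.moebius d : ℝ) else 0) / (d : ℝ) ^ 2)
      refine h2.congr fun N => ?_
      simp only [Function.comp]
      rcases Nat.eq_zero_or_pos N with rfl | hN
      · simp
      have : (0:ℝ) < N := by exact_mod_cast hN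
      field_simp
    · simp [hd]
  · filter_upwards [eventually_gt_atTop 0] with N hN d
    have hNR : (0:ℝ) < N := by exact_mod_cast hN
    rw [Real.norm_eq_abs, abs_mul, abs_mul]
    have h1 := secOdd_ncard_le α β ((N : ℝ) / (d : ℝ) ^ 2) (by positivity)
    rw [Nat.abs_cast, abs_of_pos (by positivity : (0:ℝ) < 1 / N)]
    calc (1:ℝ) / N * (|(if Odd d then (ArithmeticFunction.moebius d : ℝ) else 0)| *
        (secOdd α β ((N : ℝ) / (d : ℝ) ^ 2)).ncard)
        ≤ 1 / N * (1 * ((N : ℝ) / (d : ℝ) ^ 2)) := by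
          gcongr
          exact hmu d
      _ = 1 / (d : ℝ) ^ 2 := by field_simp


/-- **Counting coprime pairs of different parity in a circular sector.**  For
`0 ≤ α < β ≤ 1`, the number of coprime pairs `(m,n)` of positive integers with `m - n` odd,
`α ≤ n/m ≤ β` and `m² + n² ≤ N` satisfies
`lim_{N→∞} (1/N)·|P(N;α,β)| = (2/π²)·arctan((β−α)/(1+αβ))`. -/
theorem coprime_pairs_sector_count (α β : ℝ) (hα : 0 ≤ α) (hαβ : α < β) (hβ : β ≤ 1) :
    Tendsto
      (fun N : ℕ =>
        (1 : ℝ) / N *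
          ({p : ℕ × ℕ | Nat.gcd p.1 p.2 = 1 ∧ 1 ≤ p.1 ∧ 1 ≤ p.2 ∧
              α ≤ (p.2 : ℝ) / (p.1 : ℝ) ∧ (p.2 : ℝ) / (p.1 : ℝ) ≤ β ∧
              Odd (p.1 - p.2) ∧ p.1 ^ 2 + p.2 ^ 2 ≤ N}.ncard : ℝ))
      atTop (nhds (2 / Real.pi ^ 2 * Real.arctan ((β - α) / (1 + α * β)))) := by
  have hpos : (0:ℝ) < 1 + α * β := by nlinarith
  have hat : Real.arctan ((β - α) / (1 + α * β)) = Real.arctan β - Real.arctan α := by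
    have h := Real.arctan_add (x := β) (y := -α) (by nlinarith)
    rw [Real.arctan_neg] at h
    rw [sub_eq_add_neg (Real.arctan β), h]
    congr 1
    ring
  rw [hat]
  refine (secOdd_coprime_tendsto α β hα hαβ).congr fun N => ?_
  congr 3
  ext ⟨m, n⟩
  simp only [secOdd, secAll, Set.mem_ofPred_eq]
  have hcast : (m : ℝ) ^ 2 + (n : ℝ) ^ 2 ≤ (N : ℝ) ↔ m ^ 2 + n ^ 2 ≤ N := by
    exact_mod_cast Iff.rfl
  rw [hcast]
  by_cases hm : 1 ≤ m
  · have hmR : (0:ℝ) < m := by exact_mod_cast hm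
    rw [le_div_iff₀ hmR, div_le_iff₀ hmR]
    have hodd : (n : ℝ) ≤ β * m → (Odd (m - n) ↔ Odd (m + n)) := by
      intro h
      have h1 : (n : ℝ) ≤ m := by nlinarith
      have h2 : n ≤ m := by exact_mod_cast h1
      rw [Nat.odd_sub h2, Nat.odd_add]
    tauto
  · tauto
end

section
/- Let A = {(cos t, sin t) : θ₁ ≤ t ≤ θ₂} be an arc of the unit circle, where 0 < θ₂ − θ₁ ≤ 2π. Then lim_{H→∞} (1/H)·|{(p,q) ∈ A ∩ ℚ² : h(p,q) ≤ H}| = 2(θ₂−θ₁)/π²; that is, the number of rational points on A of height at most H is asymptotic to (2·length(A)/π²)·H as H → ∞. -/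
open Filter

/-- The height of a rational point `(p,q)`: the minimal positive integer `h` such that
`(hp, hq) ∈ ℤ²`. -/
noncomputable def height (p q : ℚ) : ℕ :=
  sInf {h : ℕ | 0 < h ∧ (∃ a : ℤ, (h : ℚ) * p = a) ∧ (∃ b : ℤ, (h : ℚ) * q = b)}

open MeasureTheory

def WW (m η x y : ℝ) : Prop :=
  Real.cos η * (x^2+y^2) ≤ Real.cos m * (x^2-y^2) + Real.sin m * (2*x*y)

noncomputable def gg (η ψ : ℝ) : ℝ := Set.indicator {t | Real.cos η ≤ Real.cos t} (fun _ => (1:ℝ)) ψ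

lemma gg_meas (η : ℝ) : Measurable (gg η) := by
  unfold gg
  refine measurable_const.indicator ?_
  exact (isClosed_le continuous_const Real.continuous_cos).measurableSet

lemma gg_int (η a b : ℝ) : IntervalIntegrable (gg η) volume a b := by
  refine (intervalIntegrable_const (c := (1:ℝ))).mono_fun' (gg_meas η).aestronglyMeasurable ?_
  refine Filter.Eventually.of_forall fun x => ?_
  simp only [gg, Set.indicator]
  split_ifs <;> simp

lemma gg_per (η : ℝ) : Function.Periodic (gg η) (2 * Real.pi) := by
  intro x
  simp [gg, Set.indicator]

lemma gg_base (η : ℝ) (h0 : 0 < η) (h1 : η ≤ Real.pi) :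
    ∫ x in (-Real.pi)..Real.pi, gg η x = 2 * η := by
  have hpi := Real.pi_pos
  rw [intervalIntegral.integral_of_le (by linarith), ← integral_Icc_eq_integral_Ioc]
  have : ∫ x in Set.Icc (-Real.pi) Real.pi, gg η x
      = ∫ x in Set.Icc (-Real.pi) Real.pi, Set.indicator (Set.Icc (-η) η) (fun _ => (1:ℝ)) x := by
    refine setIntegral_congr_fun measurableSet_Icc ?_
    intro x hx
    have hx' : |x| ≤ Real.pi := abs_le.2 hx
    have : (Real.cos η ≤ Real.cos x) ↔ x ∈ Set.Icc (-η) η := by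
      rw [← Real.cos_abs x, Set.mem_Icc, ← abs_le]
      exact Real.strictAntiOn_cos.le_iff_ge ⟨h0.le, h1⟩ ⟨abs_nonneg _, hx'⟩
    simp only [gg, Set.indicator, Set.mem_ofPred_eq, this]
  rw [this, setIntegral_indicator measurableSet_Icc, Set.inter_eq_right.2 (Set.Icc_subset_Icc (by linarith) h1)]
  simp
  rw [max_eq_left (by linarith)]; ring

lemma gg_full (m η : ℝ) (h0 : 0 < η) (h1 : η ≤ Real.pi) :
    ∫ x in (-Real.pi)..Real.pi, gg η (2 * x - m) = 2 * η := by
  rw [intervalIntegral.integral_comp_mul_sub (gg η) two_ne_zero]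
  have e1 : 2 * Real.pi - m = (2 * -Real.pi - m) + (2:ℤ) • (2 * Real.pi) := by simp; ring
  rw [e1, (gg_per η).intervalIntegral_add_zsmul_eq 2 _ (fun a b => gg_int η a b)]
  have e2 := (gg_per η).intervalIntegral_add_eq (2 * -Real.pi - m) (-Real.pi)
  rw [show -Real.pi + 2 * Real.pi = Real.pi by ring, gg_base η h0 h1] at e2
  rw [e2]
  simp

lemma WW_polar (m η r φ : ℝ) (hr : 0 < r) :
    WW m η (r * Real.cos φ) (r * Real.sin φ) ↔ Real.cos η ≤ Real.cos (2 * φ - m) := by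
  unfold WW
  have h := Real.sin_sq_add_cos_sq φ
  have e1 : Real.cos η * ((r * Real.cos φ)^2 + (r * Real.sin φ)^2) = r^2 * Real.cos η := by
    linear_combination (r^2 * Real.cos η) * h
  have e2 : Real.cos m * ((r * Real.cos φ)^2 - (r * Real.sin φ)^2) + Real.sin m * (2 * (r * Real.cos φ) * (r * Real.sin φ)) = r^2 * Real.cos (2 * φ - m) := by
    rw [Real.cos_sub, Real.cos_two_mul, Real.sin_two_mul]
    linear_combination (-r^2 * Real.cos m) * h
  rw [e1, e2]
  exact mul_le_mul_iff_right₀ (by positivity)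

lemma WW_closed2 (m η : ℝ) : IsClosed {p : ℝ × ℝ | WW m η p.1 p.2 ∧ p.1^2+p.2^2 ≤ 1} := by
  unfold WW
  rw [Set.ofPred_and]
  apply IsClosed.inter <;> apply isClosed_le <;> fun_prop

lemma vol2 (m η : ℝ) (h0 : 0 < η) (h1 : η ≤ Real.pi) :
    volume.real {p : ℝ × ℝ | WW m η p.1 p.2 ∧ p.1^2+p.2^2 ≤ 1} = η := by
  rw [← integral_indicator_one (WW_closed2 m η).measurableSet, ← integral_comp_polarCoord_symm]
  rw [polarCoord_target]
  have : ∫ (p : ℝ × ℝ) in Set.Ioi (0:ℝ) ×ˢ Set.Ioo (-Real.pi) Real.pi,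
      p.1 • {p : ℝ × ℝ | WW m η p.1 p.2 ∧ p.1^2+p.2^2 ≤ 1}.indicator (1 : ℝ × ℝ → ℝ) (polarCoord.symm p)
      = ∫ (p : ℝ × ℝ) in Set.Ioi (0:ℝ) ×ˢ Set.Ioo (-Real.pi) Real.pi,
       (Set.indicator (Set.Iic 1) (fun r => r) p.1) * gg η (2 * p.2 - m) := by
    refine setIntegral_congr_fun (measurableSet_Ioi.prod measurableSet_Ioo) ?_
    rintro ⟨r, φ⟩ ⟨hr, hφ⟩
    have hr : 0 < r := hr
    have hh : (r * Real.cos φ)^2 + (r * Real.sin φ)^2 ≤ 1 ↔ r ≤ 1 := by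
      have : (r * Real.cos φ)^2 + (r * Real.sin φ)^2 = r^2 := by
        linear_combination (r^2) * Real.sin_sq_add_cos_sq φ
      rw [this]
      exact sq_le_one_iff₀ hr.le
    simp only [polarCoord_symm_apply, Set.indicator, Set.mem_ofPred_eq, WW_polar _ _ _ _ hr, hh, gg, Set.mem_Iic]
    split_ifs <;> simp_all
  rw [this, Measure.volume_eq_prod, setIntegral_prod_mul (Set.indicator (Set.Iic 1) (fun r => r)) (fun φ => gg η (2 * φ - m)), ← integral_Ioc_eq_integral_Ioo, 
    ← intervalIntegral.integral_of_le (by linarith [Real.pi_pos]), gg_full m η h0 h1,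
    setIntegral_indicator measurableSet_Iic, Set.Ioi_inter_Iic, 
    ← intervalIntegral.integral_of_le (by norm_num), integral_id]
  ring

def SS (m η : ℝ) : Set (Fin 2 → ℝ) := {v | WW m η (v 0) (v 1) ∧ (v 0)^2+(v 1)^2 ≤ 1}

lemma volSS (m η : ℝ) (h0 : 0 < η) (h1 : η ≤ Real.pi) :
    volume.real (SS m η) = η := by
  refine Eq.trans ?_ (vol2 m η h0 h1)
  have := (volume_preserving_finTwoArrow ℝ).measure_preimage (WW_closed2 m η).measurableSet.nullMeasurableSet
  unfold Measure.real
  rw [← this]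
  rfl

lemma lin_null (a b : ℝ) (h : a^2+b^2 = 1) : volume {v : Fin 2 → ℝ | v 1 * a - v 0 * b = 0} = 0 := by
  let f : (Fin 2 → ℝ) →ₗ[ℝ] ℝ := a • LinearMap.proj 1 - b • LinearMap.proj 0
  have : {v : Fin 2 → ℝ | v 1 * a - v 0 * b = 0} = (LinearMap.ker f : Set (Fin 2 → ℝ)) := by
    ext v; simp [f, mul_comm]
  rw [this]
  apply Measure.addHaar_submodule
  intro h'
  have : (![-b, a] : Fin 2 → ℝ) ∈ LinearMap.ker f := by rw [h']; trivial
  simp [f] at this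
  nlinarith

lemma WW_factor (α β x y : ℝ) : Real.cos (α+β) * (x^2-y^2) + Real.sin (α+β) * (2*x*y) - Real.cos (β-α) * (x^2+y^2)
   = -2 * ((y * Real.cos α - x * Real.sin α) * (y * Real.cos β - x * Real.sin β)) := by
  rw [Real.cos_add, Real.sin_add, Real.cos_sub]
  ring

lemma frontSS (m η : ℝ) : volume (frontier (SS m η)) = 0 := by
  have hs : SS m η = {v | WW m η (v 0) (v 1)} ∩ {v | (v 0)^2+(v 1)^2 ≤ 1} := rfl
  have h1 : frontier {v : Fin 2 → ℝ | WW m η (v 0) (v 1)} ⊆ 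
     {v : Fin 2 → ℝ | v 1 * Real.cos ((m-η)/2) - v 0 * Real.sin ((m-η)/2) = 0} ∪
     {v : Fin 2 → ℝ | v 1 * Real.cos ((m+η)/2) - v 0 * Real.sin ((m+η)/2) = 0} := by
    refine (frontier_le_subset_eq (by fun_prop) (by fun_prop)).trans ?_
    intro v hv
    have := WW_factor ((m-η)/2) ((m+η)/2) (v 0) (v 1)
    rw [show (m-η)/2+(m+η)/2 = m by ring, show (m+η)/2 - (m-η)/2 = η by ring] at this
    simp only [Set.mem_ofPred_eq] at hv
    rw [← hv, sub_self] at this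
    have := (mul_eq_zero.1 this.symm).resolve_left (by norm_num)
    exact mul_eq_zero.1 this
  have h2 : volume (frontier {v : Fin 2 → ℝ | (v 0)^2+(v 1)^2 ≤ 1}) = 0 := by
    apply Convex.addHaar_frontier
    have : ConvexOn ℝ Set.univ (fun v : Fin 2 → ℝ => (v 0)^2+(v 1)^2) := by
      have hc : ConvexOn ℝ Set.univ (fun x : ℝ => x^2) := even_two.convexOn_pow
      exact (hc.comp_linearMap (LinearMap.proj 0 : (Fin 2 → ℝ) →ₗ[ℝ] ℝ)).add
        (hc.comp_linearMap (LinearMap.proj 1 : (Fin 2 → ℝ) →ₗ[ℝ] ℝ))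
    simpa using this.convex_le 1
  refine measure_mono_null (t := frontier {v : Fin 2 → ℝ | WW m η (v 0) (v 1)} ∪ frontier {v : Fin 2 → ℝ | (v 0)^2+(v 1)^2 ≤ 1}) ?_ ?_
  · rw [hs]
    exact (frontier_inter_subset _ _).trans (Set.union_subset_union Set.inter_subset_left Set.inter_subset_right)
  · refine measure_union_null (measure_mono_null h1 (measure_union_null ?_ ?_)) h2
    · exact lin_null _ _ (Real.cos_sq_add_sin_sq _)
    · exact lin_null _ _ (Real.cos_sq_add_sin_sq _)

lemma WW_smul (m η x y c : ℝ) (hc : 0 < c) : WW m η (c * x) (c * y) ↔ WW m η x y := by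
  unfold WW
  rw [show Real.cos η * ((c*x)^2+(c*y)^2) = c^2 * (Real.cos η * (x^2+y^2)) by ring,
    show Real.cos m * ((c*x)^2-(c*y)^2) + Real.sin m * (2*(c*x)*(c*y)) = c^2 * (Real.cos m * (x^2-y^2) + Real.sin m * (2*x*y)) by ring]
  exact mul_le_mul_iff_right₀ (by positivity)

def FS (m η R : ℝ) : Set (ℤ × ℤ) := {z | WW m η z.1 z.2 ∧ (z.1:ℝ)^2 + (z.2:ℝ)^2 ≤ R}

open Pointwise in
lemma mem_smul_SS (m η c : ℝ) (hc : 0 < c) (v : Fin 2 → ℝ) : v ∈ c • SS m η ↔ WW m η (v 0) (v 1) ∧ (v 0)^2+(v 1)^2 ≤ c^2 := by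
  rw [Set.mem_smul_set_iff_inv_smul_mem₀ hc.ne']
  simp only [SS, Set.mem_ofPred_eq, Pi.smul_apply, smul_eq_mul, WW_smul _ _ _ _ _ (inv_pos.2 hc)]
  rw [show (c⁻¹ * v 0)^2+(c⁻¹ * v 1)^2 = (c^2)⁻¹ * ((v 0)^2+(v 1)^2) by ring, inv_mul_le_iff₀ (by positivity), mul_one]

open Pointwise in
lemma FS_tendsto (m η : ℝ) (h0 : 0 < η) (h1 : η ≤ Real.pi) :
    Tendsto (fun R : ℝ => ((FS m η R).ncard : ℝ) / R) atTop (nhds η) := by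
  have key := tendsto_card_div_pow_atTop_volume' (SS m η) ?_ ?_ (frontSS m η) ?_
  · rw [volSS m η h0 h1] at key
    have := key.comp (Real.tendsto_sqrt_atTop)
    refine this.congr' ?_
    filter_upwards [eventually_gt_atTop 0] with R hR
    have hs : 0 < Real.sqrt R := Real.sqrt_pos.2 hR
    simp only [Function.comp, Fintype.card_fin, Real.sq_sqrt hR.le]
    congr 2
    rw [← Nat.card_coe_set_eq]
    have hmem : ∀ z : FS m η R, (Real.sqrt R)⁻¹ • ![(z.1.1:ℝ), (z.1.2:ℝ)] ∈ SS m η ∩ (Real.sqrt R)⁻¹ • (Submodule.span ℤ (Set.range (Pi.basisFun ℝ (Fin 2))) : Set (Fin 2 → ℝ)) := by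
      intro z
      constructor
      · have hz : WW m η z.1.1 z.1.2 ∧ (z.1.1:ℝ)^2 + (z.1.2:ℝ)^2 ≤ R := z.2
        have := (mem_smul_SS m η _ hs ![(z.1.1:ℝ), (z.1.2:ℝ)]).2 (by simpa [Real.sq_sqrt hR.le] using hz)
        rwa [Set.mem_smul_set_iff_inv_smul_mem₀ hs.ne'] at this
      · refine Set.smul_mem_smul_set ?_
        rw [SetLike.mem_coe, Module.Basis.mem_span_iff_repr_mem]
        intro i
        fin_cases i <;> simp
    refine (Nat.card_congr (Equiv.ofBijective (fun z : FS m η R => ⟨(Real.sqrt R)⁻¹ • ![(z.1.1:ℝ), (z.1.2:ℝ)], hmem z⟩) ⟨?_, ?_⟩)).symm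
    · intro z w h
      simp only [Subtype.mk.injEq] at h
      have h' := smul_right_injective (Fin 2 → ℝ) (inv_ne_zero hs.ne') h
      have a := congrFun h' 0
      have b := congrFun h' 1
      simp at a b
      exact Subtype.ext (Prod.ext a b)
    · rintro ⟨v, hv1, hv2⟩
      obtain ⟨w, hw, rfl⟩ := hv2
      rw [SetLike.mem_coe, Module.Basis.mem_span_iff_repr_mem] at hw
      obtain ⟨a, ha⟩ := hw 0
      obtain ⟨b, hb⟩ := hw 1
      simp at ha hb
      have hw : w = ![(a:ℝ), (b:ℝ)] := by
        ext i; fin_cases i <;> simp [ha, hb]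
      subst hw
      refine ⟨⟨(a,b), ?_⟩, rfl⟩
      rw [← Set.mem_smul_set_iff_inv_smul_mem₀ hs.ne', mem_smul_SS _ _ _ hs] at hv1
      simpa [FS, Real.sq_sqrt hR.le] using hv1
  · refine (Metric.isBounded_closedBall (x := (0 : Fin 2 → ℝ)) (r := 1)).subset ?_
    intro v hv
    rw [mem_closedBall_zero_iff, pi_norm_le_iff_of_nonneg zero_le_one]
    have := hv.2
    intro i
    rw [Real.norm_eq_abs, ← sq_le_one_iff_abs_le_one]
    fin_cases i
    · change v 0 ^ 2 ≤ 1; nlinarith [sq_nonneg (v 1)]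
    · change v 1 ^ 2 ≤ 1; nlinarith [sq_nonneg (v 0)]
  · refine IsClosed.measurableSet ?_
    unfold SS WW
    rw [Set.ofPred_and]
    apply IsClosed.inter <;> apply isClosed_le <;> fun_prop
  · intro x y hx hxy v hv
    rw [mem_smul_SS _ _ _ hx] at hv
    rw [mem_smul_SS _ _ _ (hx.trans_le hxy)]
    exact ⟨hv.1, hv.2.trans (by gcongr)⟩

open ArithmeticFunction in
lemma moebius_sum : ∑' d : ℕ, (moebius d : ℝ) / (d:ℝ)^2 = 6 / Real.pi^2 := by
  have h := LSeries_one_mul_Lseries_moebius (s := 2) (by norm_num)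
  rw [LSeries_one_eq_riemannZeta (by norm_num), riemannZeta_two] at h
  have e : LSeries (fun n => ((moebius n : ℤ) : ℂ)) 2 = ((∑' d : ℕ, (moebius d : ℝ) / (d:ℝ)^2 : ℝ) : ℂ) := by
    rw [LSeries, Complex.ofReal_tsum]
    refine tsum_congr fun n => ?_
    rcases eq_or_ne n 0 with rfl | hn
    · simp
    · rw [LSeries.term_of_ne_zero hn]
      push_cast
      norm_cast
  rw [e] at h
  have h' : (Real.pi^2/6) * (∑' d : ℕ, (moebius d : ℝ) / (d:ℝ)^2 : ℝ) = 1 := by exact_mod_cast h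
  have := Real.pi_pos
  field_simp
  field_simp at h'
  linarith

open ArithmeticFunction in
lemma moebius_summable : Summable fun d : ℕ => (moebius d : ℝ) / (d:ℝ)^2 := by
  refine Summable.of_norm_bounded (g := fun d : ℕ => 1 / (d:ℝ)^2) (Real.summable_one_div_nat_pow.2 (by norm_num)) fun d => ?_
  rw [norm_div, norm_pow, Real.norm_natCast]
  gcongr
  rw [Real.norm_eq_abs]
  exact_mod_cast abs_moebius_le_one

open ArithmeticFunction in
lemma moebius_two_mul_odd (k : ℕ) : moebius (2 * (2 * k + 1)) = - moebius (2 * k + 1) := by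
  rw [isMultiplicative_moebius.map_mul_of_coprime (by simp), moebius_apply_prime Nat.prime_two]
  ring

open ArithmeticFunction in
lemma moebius_two_mul_even (k : ℕ) : moebius (2 * (2 * k)) = 0 := by
  apply moebius_eq_zero_of_not_squarefree
  intro h
  have := h 2 ⟨k, by ring⟩
  norm_num at this

open ArithmeticFunction in
lemma moebius_odd_sum' : ∑' k : ℕ, (moebius (2*k+1) : ℝ) / ((2*k+1 : ℕ):ℝ)^2 = 8 / Real.pi^2 := by
  set f : ℕ → ℝ := fun d : ℕ => (moebius d : ℝ) / (d:ℝ)^2 with hf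
  have hs : Summable f := moebius_summable
  have i1 : Function.Injective (fun k : ℕ => 2 * k) := fun a b h => by simpa using h
  have i2 : Function.Injective (fun k : ℕ => 2 * k + 1) := fun a b h => by simpa using h
  have s1 : Summable fun k => f (2 * k) := hs.comp_injective i1
  have s2 : Summable fun k => f (2 * k + 1) := hs.comp_injective i2
  have t := tsum_even_add_odd s1 s2
  rw [moebius_sum] at t
  have t2 := tsum_even_add_odd (f := fun k => f (2 * k)) (s1.comp_injective i1) (s1.comp_injective i2)
  have a1 : ∑' k, f (2 * (2 * k)) = 0 := by
    simp [hf, moebius_two_mul_even]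
  have a2 : ∑' k, f (2 * (2 * k + 1)) = - (1/4) * ∑' k, f (2 * k + 1) := by
    rw [← tsum_mul_left]
    refine tsum_congr fun k => ?_
    simp only [hf, moebius_two_mul_odd]
    push_cast
    field_simp
    ring
  rw [a1, a2] at t2
  change ∑' k, f (2*k+1) = _
  have : (8:ℝ) / Real.pi^2 = (4/3) * (6 / Real.pi^2) := by ring
  linarith

open ArithmeticFunction in
lemma moebius_odd_sum : ∑' d : ℕ, (if d % 2 = 1 then (moebius d : ℝ) / (d:ℝ)^2 else 0) = 8 / Real.pi^2 := by
  rw [← moebius_odd_sum']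
  set g : ℕ → ℝ := fun d : ℕ => (if d % 2 = 1 then (moebius d : ℝ) / (d:ℝ)^2 else 0) with hg
  have hs : Summable g := by
    refine (moebius_summable.norm).of_norm_bounded fun d => ?_
    simp only [hg]
    split_ifs
    · exact le_rfl
    · simp only [norm_zero]; positivity
  have i1 : Function.Injective (fun k : ℕ => 2 * k) := fun a b h => by simpa using h
  have i2 : Function.Injective (fun k : ℕ => 2 * k + 1) := fun a b h => by simpa using h
  rw [← tsum_even_add_odd (hs.comp_injective i1) (hs.comp_injective i2)]
  simp [hg, Nat.add_mod]

lemma FS_subset (m η R : ℝ) (hR : 0 ≤ R) : FS m η R ⊆ 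
   ((Finset.Icc (-(⌊Real.sqrt R⌋₊:ℤ)) ⌊Real.sqrt R⌋₊ ×ˢ Finset.Icc (-(⌊Real.sqrt R⌋₊:ℤ)) ⌊Real.sqrt R⌋₊ : Finset (ℤ × ℤ)) : Set (ℤ × ℤ)) := by
  rintro ⟨x, y⟩ ⟨-, h⟩
  simp only at h
  have key : ∀ t : ℤ, (t:ℝ)^2 ≤ R → t ∈ Finset.Icc (-(⌊Real.sqrt R⌋₊:ℤ)) ⌊Real.sqrt R⌋₊ := by
    intro t ht
    rw [Finset.mem_Icc, ← abs_le]
    have : |(t:ℝ)| ≤ Real.sqrt R := Real.abs_le_sqrt ht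
    have h2 : ((t.natAbs : ℕ) : ℝ) ≤ Real.sqrt R := by
      rw [Nat.cast_natAbs]; push_cast; exact this
    have := Nat.le_floor h2
    rw [Int.abs_eq_natAbs]
    exact_mod_cast this
  rw [Finset.mem_coe, Finset.mem_product]
  exact ⟨key x (by nlinarith [sq_nonneg (y:ℝ)]), key y (by nlinarith [sq_nonneg (x:ℝ)])⟩

lemma FS_finite (m η R : ℝ) : (FS m η R).Finite := by
  rcases le_or_gt 0 R with h | h
  · exact (Finset.finite_toSet _).subset (FS_subset m η R h)
  · convert Set.finite_empty
    ext z
    simp only [FS, Set.mem_ofPred_eq, Set.mem_empty_iff_false, iff_false, not_and, not_le]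
    intro _
    nlinarith [sq_nonneg (z.1:ℝ), sq_nonneg (z.2:ℝ)]

def OS (m η R : ℝ) : Set (ℤ × ℤ) := {z | z ∈ FS m η R ∧ (z.1 + z.2) % 2 = 1}

lemma OS_finite (m η R : ℝ) : (OS m η R).Finite := (FS_finite m η R).subset fun _ h => h.1

lemma OS_empty (m η R : ℝ) (hR : R < 1) : OS m η R = ∅ := by
  ext ⟨x, y⟩
  simp only [OS, FS, Set.mem_ofPred_eq, Set.mem_empty_iff_false, iff_false]
  rintro ⟨⟨-, h⟩, h2⟩
  have h3 : ((x^2 + y^2 : ℤ):ℝ) < (1:ℤ) := by push_cast; linarith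
  have h4 : x^2+y^2 < 1 := by exact_mod_cast h3
  have hx : x = 0 := by
    have : x^2 = 0 := by nlinarith [sq_nonneg x, sq_nonneg y]
    exact pow_eq_zero_iff two_ne_zero |>.1 this
  have hy : y = 0 := by
    have : y^2 = 0 := by nlinarith [sq_nonneg x, sq_nonneg y]
    exact pow_eq_zero_iff two_ne_zero |>.1 this
  subst hx hy
  simp at h2

lemma OS_bound (m η R : ℝ) (hR : 0 ≤ R) : ((OS m η R).ncard : ℝ) ≤ 9 * R := by
  rcases lt_or_ge R 1 with h | h
  · rw [OS_empty m η R h]; simpa using hR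
  have h1 : (OS m η R).ncard ≤ _ := Set.ncard_le_ncard (Set.Subset.trans (fun _ h => h.1) (FS_subset m η R hR)) (Finset.finite_toSet _)
  rw [Set.ncard_coe_finset, Finset.card_product, Int.card_Icc] at h1
  set k := ⌊Real.sqrt R⌋₊
  have h2 : ((k:ℤ) + 1 - -(k:ℤ)).toNat = 2 * k + 1 := by omega
  rw [h2] at h1
  have hk : (k:ℝ) ≤ Real.sqrt R := Nat.floor_le (Real.sqrt_nonneg _)
  have hs : 1 ≤ Real.sqrt R := by rwa [Real.one_le_sqrt]
  have h3 : ((OS m η R).ncard : ℝ) ≤ (2 * k + 1) * (2 * k + 1) := by exact_mod_cast h1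
  have h4 := Real.sq_sqrt hR
  have h5 : (0:ℝ) ≤ k := Nat.cast_nonneg _
  nlinarith

lemma even_card (m η R : ℝ) : {z | z ∈ FS m η R ∧ ¬ (z.1 + z.2) % 2 = 1}.ncard = (FS (Real.pi/2 - m) η (R/2)).ncard := by
  symm
  have hW : ∀ s t : ℝ, WW m η (s+t) (s-t) ↔ WW (Real.pi/2-m) η s t := by
    intro s t
    unfold WW
    rw [Real.cos_pi_div_two_sub, Real.sin_pi_div_two_sub]
    constructor <;> intro h <;> linarith
  refine Set.ncard_congr (fun z _ => (z.1+z.2, z.1-z.2)) ?_ ?_ ?_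
  · rintro ⟨s, t⟩ ⟨h1, h2⟩
    refine ⟨⟨?_, ?_⟩, ?_⟩
    · push_cast; exact (hW _ _).2 h1
    · push_cast; simp only at h2; linarith
    · simp only; omega
  · rintro ⟨s, t⟩ ⟨s', t'⟩ - - h
    simp only [Prod.mk.injEq] at h ⊢
    omega
  · rintro ⟨x, y⟩ ⟨⟨h1, h2⟩, h3⟩
    simp only at h1 h2 h3
    obtain ⟨s, hs⟩ : ∃ s, x + y = 2 * s := ⟨(x+y)/2, by omega⟩
    obtain ⟨t, ht⟩ : ∃ t, x - y = 2 * t := ⟨(x-y)/2, by omega⟩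
    have hx : x = s + t := by omega
    have hy : y = s - t := by omega
    subst hx hy
    refine ⟨(s, t), ⟨?_, ?_⟩, rfl⟩
    · push_cast at h1; exact (hW _ _).1 h1
    · push_cast at h2; simp only; linarith

lemma OS_card (m η R : ℝ) : ((OS m η R).ncard : ℝ) = (FS m η R).ncard - (FS (Real.pi/2 - m) η (R/2)).ncard := by
  rw [← even_card]
  have h := Set.ncard_union_eq (s := OS m η R) (t := {z | z ∈ FS m η R ∧ ¬ (z.1 + z.2) % 2 = 1}) ?_ (OS_finite _ _ _) ((FS_finite m η R).subset fun _ h => h.1)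
  · have e : OS m η R ∪ {z | z ∈ FS m η R ∧ ¬ (z.1 + z.2) % 2 = 1} = FS m η R := by
      ext z
      simp only [OS, Set.mem_union, Set.mem_ofPred_eq]
      tauto
    rw [e] at h
    rw [h]; push_cast; ring
  · rw [Set.disjoint_left]
    exact fun z h1 h2 => h2.2 h1.2

lemma OS_tendsto (m η : ℝ) (h0 : 0 < η) (h1 : η ≤ Real.pi) :
    Tendsto (fun R : ℝ => ((OS m η R).ncard : ℝ) / R) atTop (nhds (η/2)) := by
  have a := FS_tendsto m η h0 h1
  have b := (FS_tendsto (Real.pi/2-m) η h0 h1).comp (tendsto_id.atTop_div_const (two_pos : (0:ℝ) < 2))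
  have c := a.sub (b.div_const 2)
  rw [show η - η/2 = η/2 by ring] at c
  refine c.congr' ?_
  filter_upwards [eventually_gt_atTop 0] with R hR
  rw [OS_card]
  simp only [Function.comp, id]
  field_simp

def QS (m η R : ℝ) : Set (ℤ × ℤ) := {z | z ∈ OS m η R ∧ Int.gcd z.1 z.2 = 1}

lemma OS_dvd (m η R : ℝ) (d : ℕ) (hd : d % 2 = 1) :
    {z | z ∈ OS m η R ∧ d ∣ Int.gcd z.1 z.2}.ncard = (OS m η (R / (d:ℝ)^2)).ncard := by
  symm
  have hd0 : 0 < (d:ℝ) := by exact_mod_cast (by omega : 0 < d)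
  have hdz : (d:ℤ) ≠ 0 := by omega
  have hpar : ∀ x y : ℤ, ((d:ℤ) * x + d * y) % 2 = 1 ↔ (x + y) % 2 = 1 := by
    intro x y
    rw [← mul_add, Int.mul_emod, show (d:ℤ) % 2 = 1 by omega]
    omega
  refine Set.ncard_congr (fun z _ => ((d:ℤ) * z.1, (d:ℤ) * z.2)) ?_ ?_ ?_
  · rintro ⟨x, y⟩ ⟨⟨h1, h2⟩, h3⟩
    simp only at h1 h2 h3
    refine ⟨⟨⟨?_, ?_⟩, ?_⟩, ?_⟩
    · push_cast; exact (WW_smul _ _ _ _ _ hd0).2 h1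
    · push_cast
      rw [le_div_iff₀ (by positivity)] at h2
      linarith
    · exact (hpar x y).2 h3
    · simp only [Int.gcd_mul_left, Int.natAbs_natCast]; exact dvd_mul_right _ _
  · rintro ⟨s, t⟩ ⟨s', t'⟩ - - h
    simp only [Prod.mk.injEq] at h ⊢
    exact ⟨mul_left_cancel₀ hdz h.1, mul_left_cancel₀ hdz h.2⟩
  · rintro ⟨x, y⟩ ⟨⟨⟨h1, h2⟩, h3⟩, h4⟩
    simp only at h1 h2 h3 h4
    have hx : (d:ℤ) ∣ x := (Int.natCast_dvd_natCast.2 h4).trans (Int.gcd_dvd_left _ _)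
    have hy : (d:ℤ) ∣ y := (Int.natCast_dvd_natCast.2 h4).trans (Int.gcd_dvd_right _ _)
    obtain ⟨s, rfl⟩ := hx
    obtain ⟨t, rfl⟩ := hy
    refine ⟨(s, t), ⟨⟨?_, ?_⟩, ?_⟩, rfl⟩
    · push_cast at h1; exact (WW_smul _ _ _ _ _ hd0).1 h1
    · push_cast at h2
      simp only
      rw [le_div_iff₀ (by positivity)]
      linarith
    · exact (hpar s t).1 h3

open ArithmeticFunction in
lemma QS_card (m η R : ℝ) (hR : 0 ≤ R) : ((QS m η R).ncard : ℝ) = 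
    ∑' d : ℕ, (if d % 2 = 1 then (moebius d : ℝ) * ((OS m η (R / (d:ℝ)^2)).ncard : ℝ) else 0) := by
  classical
  set D := ⌊R⌋₊ + 1 with hD
  rw [tsum_eq_sum (s := Finset.range D)]
  swap
  · intro d hd
    split_ifs with h
    · rw [OS_empty]
      · simp
      · have h1 : R < d := by
          rw [Finset.mem_range, not_lt] at hd
          exact (Nat.lt_floor_add_one R).trans_le (by exact_mod_cast hd)
        have h2 : (1:ℝ) ≤ d := by exact_mod_cast (by omega : 1 ≤ d)
        rw [div_lt_one (by positivity)]
        nlinarith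
    · rfl
  set o := (OS_finite m η R).toFinset with ho
  have hmem : ∀ z, z ∈ o ↔ z ∈ OS m η R := fun z => Set.Finite.mem_toFinset _
  have hq : (QS m η R).ncard = (o.filter (fun z => Int.gcd z.1 z.2 = 1)).card := by
    rw [← Set.ncard_coe_finset]
    congr 1
    ext z
    simp [QS, hmem]
  have hdv : ∀ d : ℕ, d % 2 = 1 → (OS m η (R / (d:ℝ)^2)).ncard = (o.filter (fun z => d ∣ Int.gcd z.1 z.2)).card := by
    intro d hd
    rw [← OS_dvd m η R d hd, ← Set.ncard_coe_finset]
    congr 1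
    ext z
    simp [hmem]
  have step : ∀ d : ℕ, (if d % 2 = 1 then (moebius d : ℝ) * ((OS m η (R / (d:ℝ)^2)).ncard : ℝ) else 0)
      = ∑ z ∈ o, if d ∣ Int.gcd z.1 z.2 then (moebius d : ℝ) else 0 := by
    intro d
    split_ifs with h
    · rw [hdv d h, ← Finset.sum_filter, Finset.sum_const, nsmul_eq_mul, mul_comm]
    · symm
      refine Finset.sum_eq_zero fun z hz => ?_
      rw [if_neg]
      intro hdvd
      have hz := ((hmem z).1 hz).2
      have h2 : 2 ∣ Int.gcd z.1 z.2 := dvd_trans (by omega) hdvd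
      have hx : (2:ℤ) ∣ z.1 := (Int.natCast_dvd_natCast.2 h2).trans (Int.gcd_dvd_left _ _)
      have hy : (2:ℤ) ∣ z.2 := (Int.natCast_dvd_natCast.2 h2).trans (Int.gcd_dvd_right _ _)
      omega
  simp_rw [step]
  rw [Finset.sum_comm, hq, Finset.card_filter]
  push_cast
  refine Finset.sum_congr rfl fun z hz => ?_
  have hz' := (hmem z).1 hz
  set g := Int.gcd z.1 z.2 with hg
  have hg0 : g ≠ 0 := by
    intro h
    rw [hg, Int.gcd_eq_zero_iff] at h
    have := hz'.2
    rw [h.1, h.2] at this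
    simp at this
  have hgD : g < D := by
    rw [hD, Nat.lt_succ_iff]
    apply Nat.le_floor
    have hle : (g:ℤ)^2 ≤ z.1^2 + z.2^2 := by
      have h1 : (g:ℤ)^2 ∣ z.1^2 + z.2^2 := dvd_add (pow_dvd_pow_of_dvd (Int.gcd_dvd_left _ _) 2) (pow_dvd_pow_of_dvd (Int.gcd_dvd_right _ _) 2)
      apply Int.le_of_dvd _ h1
      rcases eq_or_ne z.1 0 with h | h
      · have : z.2 ≠ 0 := by
          intro h'
          exact hg0 (by rw [hg, h, h']; rfl)
        positivity
      · positivity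
    have hle' : (g:ℝ)^2 ≤ (z.1:ℝ)^2 + (z.2:ℝ)^2 := by exact_mod_cast hle
    have h3 : (1:ℝ) ≤ g := by exact_mod_cast Nat.one_le_iff_ne_zero.2 hg0
    have h4 := hz'.1.2
    nlinarith
  have e : (Finset.range D).filter (fun d => d ∣ g) = g.divisors := by
    ext d
    simp only [Finset.mem_filter, Finset.mem_range, Nat.mem_divisors]
    constructor
    · exact fun h => ⟨h.2, hg0⟩
    · exact fun h => ⟨(Nat.le_of_dvd (Nat.pos_of_ne_zero hg0) h.1).trans_lt hgD, h.1⟩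
  rw [← Finset.sum_filter, e]
  have := congrArg (fun f : ArithmeticFunction ℤ => f g) moebius_mul_coe_zeta
  simp only [coe_mul_zeta_apply, one_apply] at this
  have h5 := congrArg (fun t : ℤ => (t:ℝ)) this
  push_cast at h5
  rw [← h5]

open ArithmeticFunction in
lemma QS_tendsto (m η : ℝ) (h0 : 0 < η) (h1 : η ≤ Real.pi) :
    Tendsto (fun R : ℝ => ((QS m η R).ncard : ℝ) / R) atTop (nhds (4 * η / Real.pi^2)) := by
  have key := tendsto_tsum_of_dominated_convergence (𝓕 := (atTop : Filter ℝ))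
    (f := fun R d => (if d % 2 = 1 then (moebius d : ℝ) * ((OS m η (R / (d:ℝ)^2)).ncard : ℝ) else 0) / R)
    (g := fun d : ℕ => (if d % 2 = 1 then (moebius d : ℝ) / (d:ℝ)^2 else 0) * (η/2))
    (bound := fun d : ℕ => 9 * (1 / (d:ℝ)^2)) ?_ ?_ ?_
  · rw [tsum_mul_right, moebius_odd_sum, show 8 / Real.pi^2 * (η/2) = 4 * η / Real.pi^2 by ring] at key
    refine key.congr' ?_
    filter_upwards [eventually_gt_atTop 0] with R hR
    rw [tsum_div_const, QS_card m η R hR.le]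
  · exact (Real.summable_one_div_nat_pow.2 (by norm_num)).mul_left 9
  · intro d
    by_cases h : d % 2 = 1
    · simp only [h, if_true]
      have hd0 : 0 < (d:ℝ) := by exact_mod_cast (by omega : 0 < d)
      have := ((OS_tendsto m η h0 h1).comp (tendsto_id.atTop_div_const (show (0:ℝ) < (d:ℝ)^2 by positivity))).const_mul ((moebius d : ℝ) / (d:ℝ)^2)
      refine this.congr' ?_
      filter_upwards [eventually_gt_atTop 0] with R hR
      simp only [Function.comp, id]
      field_simp
    · simp only [h, if_false, zero_div, zero_mul]
      exact tendsto_const_nhds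
  · filter_upwards [eventually_gt_atTop 0] with R hR
    intro d
    split_ifs with h
    · have hd0 : 0 < (d:ℝ) := by exact_mod_cast (by omega : 0 < d)
      rw [norm_div, norm_mul, Real.norm_natCast, Real.norm_of_nonneg hR.le, div_le_iff₀ hR]
      have hb := OS_bound m η (R / (d:ℝ)^2) (by positivity)
      have hm : ‖(moebius d : ℝ)‖ ≤ 1 := by
        rw [Real.norm_eq_abs]; exact_mod_cast abs_moebius_le_one
      calc _ ≤ 1 * (9 * (R / (d:ℝ)^2)) := by gcongr
        _ = _ := by ring
    · rw [zero_div, norm_zero]; positivity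

lemma height_swap (p q : ℚ) : height p q = height q p := by
  unfold height
  congr 1
  ext h
  simp only [Set.mem_ofPred_eq]
  tauto

lemma height_eq (a b n : ℤ) (hn : 0 < n) (hc : IsCoprime a n) :
    (height ((a:ℚ)/n) ((b:ℚ)/n) : ℤ) = n := by
  lift n to ℕ using hn.le
  have hn' : 0 < n := by exact_mod_cast hn
  have hq : (n:ℚ) ≠ 0 := by positivity
  rw [Int.cast_natCast, Nat.cast_inj]
  unfold height
  apply le_antisymm
  · apply Nat.sInf_le
    refine ⟨hn', ⟨a, ?_⟩, ⟨b, ?_⟩⟩ <;> field_simp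
  · apply le_csInf
    · refine ⟨n, hn', ⟨a, ?_⟩, ⟨b, ?_⟩⟩ <;> field_simp
    · rintro h ⟨h0, ⟨c, hc'⟩, -⟩
      field_simp at hc'
      have e : (h:ℤ) * a = n * c := by exact_mod_cast hc'
      have : (n:ℤ) ∣ h := hc.symm.dvd_of_dvd_mul_right ⟨c, e⟩
      exact Nat.le_of_dvd h0 (by exact_mod_cast this)

lemma cop_iff (a b n : ℤ) (h : a^2+b^2 = n^2) : IsCoprime a n ↔ IsCoprime a b := by
  rw [← IsCoprime.pow_right_iff (y := n) (m := 2) (by norm_num), ← h, 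
    ← IsCoprime.pow_right_iff (y := b) (m := 2) (by norm_num)]
  rw [show a^2 + b^2 = b^2 + a * a by ring]
  exact IsCoprime.add_mul_left_right_iff

lemma exists_triple (p q : ℚ) (h : p^2+q^2 = 1) : ∃ a b n : ℤ, 0 < n ∧ p = a / n ∧ q = b / n ∧ a^2+b^2=n^2
    ∧ IsCoprime a n := by
  have hd : (p.den:ℚ) ≠ 0 := by exact_mod_cast p.den_nz
  have hp : p = (p.num:ℚ) / p.den := (Rat.num_div_den p).symm
  have e : (q * p.den)^2 = (((p.den:ℤ)^2 - p.num^2 : ℤ) : ℚ) := by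
    push_cast
    have : p * p.den = p.num := Rat.mul_den_eq_num p
    rw [← this]
    linear_combination (p.den:ℚ)^2 * h
  have hden : (q * p.den).den = 1 := by
    have := congrArg Rat.den e
    rw [Rat.den_pow, Rat.den_intCast] at this
    simpa using this
  have hb : q * p.den = ((q * p.den).num : ℚ) := ((Rat.den_eq_one_iff _).1 hden).symm
  refine ⟨p.num, (q * p.den).num, p.den, by exact_mod_cast p.den_pos, by simpa using hp, ?_, ?_, ?_⟩
  · rw [← hb]; push_cast; field_simp
  · rw [hb] at e
    have e' : (q * p.den).num^2 = (p.den:ℤ)^2 - p.num^2 := by exact_mod_cast e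
    linarith
  · rw [Int.isCoprime_iff_gcd_eq_one]
    have := p.reduced
    simpa [Int.gcd, Nat.Coprime] using this

def psi (z : ℤ × ℤ) : ℚ × ℚ := (((z.1^2-z.2^2 : ℤ):ℚ) / ((z.1^2+z.2^2 : ℤ):ℚ), ((2*z.1*z.2 : ℤ):ℚ) / ((z.1^2+z.2^2 : ℤ):ℚ))

lemma norm_pos' (z : ℤ × ℤ) (h : (z.1+z.2) % 2 = 1) : 0 < z.1^2+z.2^2 := by
  rcases eq_or_ne z.1 0 with h1 | h1
  · have : z.2 ≠ 0 := by intro h2; rw [h1, h2] at h; simp at h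
    positivity
  · positivity

lemma psi_cop (z : ℤ × ℤ) (h : (z.1+z.2) % 2 = 1) (hg : Int.gcd z.1 z.2 = 1) :
    IsCoprime (z.1^2-z.2^2) (z.1^2+z.2^2) := by
  have := (PythagoreanTriple.coprime_classification (x := z.1^2-z.2^2) (y := 2*z.1*z.2) (z := z.1^2+z.2^2)).2
    ⟨z.1, z.2, Or.inl ⟨rfl, rfl⟩, Or.inl rfl, hg, by omega⟩
  rw [cop_iff _ (2*z.1*z.2) _ (by ring), Int.isCoprime_iff_gcd_eq_one]
  exact this.2

lemma psi_height (z : ℤ × ℤ) (h : (z.1+z.2) % 2 = 1) (hg : Int.gcd z.1 z.2 = 1) :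
    (height (psi z).1 (psi z).2 : ℤ) = z.1^2+z.2^2 :=
  height_eq _ _ _ (norm_pos' z h) (psi_cop z h hg)

lemma psi_fiber (z w : ℤ × ℤ) (h : (z.1+z.2) % 2 = 1) (hg : Int.gcd z.1 z.2 = 1)
    (h' : (w.1+w.2) % 2 = 1) (hg' : Int.gcd w.1 w.2 = 1) (e : psi z = psi w) : z = w ∨ z = -w := by
  have hN : z.1^2+z.2^2 = w.1^2+w.2^2 := by
    rw [← psi_height z h hg, ← psi_height w h' hg', e]
  have hp := norm_pos' w h'
  have hq : ((w.1^2+w.2^2 : ℤ):ℚ) ≠ 0 := by exact_mod_cast hp.ne'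
  unfold psi at e
  rw [hN, Prod.mk.injEq, div_left_inj' hq, div_left_inj' hq] at e
  obtain ⟨e1, e2⟩ := e
  have e1 : z.1^2-z.2^2 = w.1^2-w.2^2 := by exact_mod_cast e1
  have e2 : 2*z.1*z.2 = 2*w.1*w.2 := by exact_mod_cast e2
  have a1 : z.1^2 = w.1^2 := by linarith
  have a2 : z.2^2 = w.2^2 := by linarith
  rcases sq_eq_sq_iff_eq_or_eq_neg.1 a1 with b1 | b1 <;> rcases sq_eq_sq_iff_eq_or_eq_neg.1 a2 with b2 | b2
  · exact Or.inl (Prod.ext b1 b2)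
  · rw [b1, b2] at e2
    have : w.1 * w.2 = 0 := by linarith
    rcases mul_eq_zero.1 this with c | c
    · right; ext <;> simp [b1, b2, c]
    · left; ext <;> simp [b1, b2, c]
  · rw [b1, b2] at e2
    have : w.1 * w.2 = 0 := by linarith
    rcases mul_eq_zero.1 this with c | c
    · left; ext <;> simp [b1, b2, c]
    · right; ext <;> simp [b1, b2, c]
  · exact Or.inr (Prod.ext b1 b2)

lemma QS_neg (m η R : ℝ) (z : ℤ × ℤ) (h : z ∈ QS m η R) : -z ∈ QS m η R := by
  obtain ⟨⟨⟨h1, h2⟩, h3⟩, h4⟩ := h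
  refine ⟨⟨⟨?_, ?_⟩, ?_⟩, ?_⟩
  · unfold WW at h1 ⊢
    simp only [Prod.fst_neg, Prod.snd_neg]
    push_cast
    linarith
  · simp only [Prod.fst_neg, Prod.snd_neg]
    push_cast
    linarith
  · simp only [Prod.fst_neg, Prod.snd_neg]; omega
  · simpa using h4

lemma QS_finite (m η R : ℝ) : (QS m η R).Finite := (OS_finite m η R).subset fun _ h => h.1

lemma psi_card (m η R : ℝ) : (QS m η R).ncard = 2 * (psi '' QS m η R).ncard := by
  classical
  set o := (QS_finite m η R).toFinset with ho
  have hmem : ∀ z, z ∈ o ↔ z ∈ QS m η R := fun z => Set.Finite.mem_toFinset _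
  have hQ : QS m η R = (o : Set (ℤ × ℤ)) := by ext z; simp [hmem]
  rw [hQ, ← Finset.coe_image, Set.ncard_coe_finset, Set.ncard_coe_finset, Finset.card_eq_sum_card_image psi o]
  rw [Finset.sum_const_nat (m := 2), mul_comm]
  intro b hb
  obtain ⟨w, hw, rfl⟩ := Finset.mem_image.1 hb
  have hw' := (hmem w).1 hw
  have : o.filter (fun z => psi z = psi w) = {w, -w} := by
    ext z
    simp only [Finset.mem_filter, Finset.mem_insert, Finset.mem_singleton]
    constructor
    · rintro ⟨hz, e⟩
      have hz' := (hmem z).1 hz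
      exact psi_fiber z w hz'.1.2 hz'.2 hw'.1.2 hw'.2 e
    · rintro (rfl | rfl)
      · exact ⟨hw, rfl⟩
      · exact ⟨(hmem _).2 (QS_neg _ _ _ _ hw'), by simp [psi]⟩
  rw [this, Finset.card_pair]
  intro e
  have e1 := congrArg Prod.fst e
  have e2 := congrArg Prod.snd e
  simp only [Prod.fst_neg, Prod.snd_neg] at e1 e2
  have := hw'.1.2
  omega

lemma arc_iff (θ₁ θ₂ p q : ℝ) (h₁ : 0 < θ₂ - θ₁) (h₂ : θ₂ - θ₁ ≤ 2 * Real.pi) :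
    (∃ t : ℝ, θ₁ ≤ t ∧ t ≤ θ₂ ∧ p = Real.cos t ∧ q = Real.sin t) ↔
    p^2+q^2 = 1 ∧ Real.cos ((θ₂-θ₁)/2) ≤ Real.cos ((θ₁+θ₂)/2) * p + Real.sin ((θ₁+θ₂)/2) * q := by
  set m := (θ₁+θ₂)/2 with hm
  set η := (θ₂-θ₁)/2 with hη
  constructor
  · rintro ⟨t, ht1, ht2, rfl, rfl⟩
    refine ⟨Real.cos_sq_add_sin_sq t, ?_⟩
    have : Real.cos m * Real.cos t + Real.sin m * Real.sin t = Real.cos |t - m| := by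
      rw [Real.cos_abs, Real.cos_sub]; ring
    rw [this]
    apply Real.cos_le_cos_of_nonneg_of_le_pi (abs_nonneg _) (by linarith)
    rw [abs_le]
    constructor <;> linarith
  · rintro ⟨h, hc⟩
    set c := Real.cos m * p + Real.sin m * q with hcdef
    set d := Real.cos m * q - Real.sin m * p with hddef
    have hms := Real.cos_sq_add_sin_sq m
    have hcd : c^2 + d^2 = 1 := by
      rw [hcdef, hddef]
      linear_combination (p^2+q^2) * hms + h
    have hp : p = c * Real.cos m - d * Real.sin m := by
      rw [hcdef, hddef]; linear_combination (-p) * hms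
    have hq : q = c * Real.sin m + d * Real.cos m := by
      rw [hcdef, hddef]; linear_combination (-q) * hms
    have hc1 : -1 ≤ c := by nlinarith [sq_nonneg d]
    have hc2 : c ≤ 1 := by nlinarith [sq_nonneg d]
    have ha0 := Real.arccos_nonneg c
    have ha : Real.arccos c ≤ η := by
      rw [← Real.arccos_cos (x := η) (by linarith) (by linarith)]
      exact Real.antitone_arccos hc
    have hsin : Real.sin (Real.arccos c) = |d| := by
      rw [Real.sin_arccos, ← Real.sqrt_sq_eq_abs]
      congr 1; linarith
    rcases le_total 0 d with hd | hd
    · rw [abs_of_nonneg hd] at hsin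
      refine ⟨m + Real.arccos c, by linarith, by linarith, ?_, ?_⟩
      · rw [Real.cos_add, Real.cos_arccos hc1 hc2, hsin, hp]; ring
      · rw [Real.sin_add, Real.cos_arccos hc1 hc2, hsin, hq]; ring
    · rw [abs_of_nonpos hd] at hsin
      refine ⟨m - Real.arccos c, by linarith, by linarith, ?_, ?_⟩
      · rw [Real.cos_sub, Real.cos_arccos hc1 hc2, hsin, hp]; ring
      · rw [Real.sin_sub, Real.cos_arccos hc1 hc2, hsin, hq]; ring

lemma WW_psi (m η : ℝ) (z : ℤ × ℤ) (h : 0 < z.1^2+z.2^2) : WW m η z.1 z.2 ↔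
    Real.cos η ≤ Real.cos m * (((psi z).1 : ℚ) : ℝ) + Real.sin m * (((psi z).2 : ℚ) : ℝ) := by
  have h' : (0:ℝ) < (z.1:ℝ)^2+(z.2:ℝ)^2 := by exact_mod_cast h
  unfold WW psi
  push_cast
  rw [← mul_div_assoc, ← mul_div_assoc, ← add_div, le_div_iff₀ h']

def PS (m η : ℝ) (H : ℕ) : Set (ℚ × ℚ) := {pq | ((pq.1:ℝ)^2+(pq.2:ℝ)^2 = 1 ∧
   Real.cos η ≤ Real.cos m * (pq.1:ℝ) + Real.sin m * (pq.2:ℝ)) ∧ height pq.1 pq.2 ≤ H}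

lemma psi_circle (z : ℤ × ℤ) (h : 0 < z.1^2+z.2^2) : (psi z).1^2+(psi z).2^2 = 1 := by
  have h' : ((z.1:ℚ)^2+(z.2:ℚ)^2) ≠ 0 := by exact_mod_cast h.ne'
  unfold psi
  push_cast
  field_simp
  ring

lemma psi_mem (m η : ℝ) (H : ℕ) (z : ℤ × ℤ) (h : (z.1+z.2) % 2 = 1) (hg : Int.gcd z.1 z.2 = 1) :
    psi z ∈ PS m η H ↔ z ∈ QS m η H := by
  have hp := norm_pos' z h
  have h1 : ((psi z).1:ℝ)^2+((psi z).2:ℝ)^2 = 1 := by exact_mod_cast psi_circle z hp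
  have h2 : height (psi z).1 (psi z).2 ≤ H ↔ (z.1:ℝ)^2+(z.2:ℝ)^2 ≤ H := by
    have := psi_height z h hg
    rw [← Int.ofNat_le]
    have e : (z.1:ℝ)^2+(z.2:ℝ)^2 ≤ H ↔ z.1^2+z.2^2 ≤ (H:ℤ) := by
      rw [← Int.cast_le (R := ℝ)]; push_cast; rfl
    rw [e, ← this]
  simp only [PS, QS, OS, FS, Set.mem_ofPred_eq, h1, h2, h, hg, WW_psi m η z hp]
  tauto

lemma PS_swap (m η : ℝ) (H : ℕ) (x : ℚ × ℚ) : x.swap ∈ PS m η H ↔ x ∈ PS (Real.pi/2-m) η H := by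
  simp only [PS, Set.mem_ofPred_eq, Prod.fst_swap, Prod.snd_swap, height_swap x.2 x.1,
    Real.cos_pi_div_two_sub, Real.sin_pi_div_two_sub]
  rw [add_comm ((x.2:ℝ)^2), add_comm (Real.cos m * _)]

lemma PS_eq (m η : ℝ) (H : ℕ) : PS m η H = psi '' QS m η H ∪ Prod.swap '' (psi '' QS (Real.pi/2-m) η H) := by
  ext x
  constructor
  · intro hx
    have hc : x.1^2+x.2^2 = 1 := by exact_mod_cast hx.1.1
    obtain ⟨a, b, n, hn, hp, hq, hab, hco⟩ := exists_triple _ _ hc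
    have hg : Int.gcd a b = 1 := by
      rw [← Int.isCoprime_iff_gcd_eq_one]
      exact (cop_iff _ _ _ hab).1 hco
    obtain ⟨s, t, h1, h2, h3, h4⟩ := PythagoreanTriple.coprime_classification.1 (⟨by unfold PythagoreanTriple; linarith, hg⟩ : PythagoreanTriple a b n ∧ Int.gcd a b = 1)
    have hn' : n = s^2+t^2 := by
      rcases h2 with h | h
      · exact h
      · nlinarith [sq_nonneg s, sq_nonneg t]
    have hpar : (s + t) % 2 = 1 := by omega
    rcases h1 with ⟨rfl, rfl⟩ | ⟨rfl, rfl⟩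
    · have : x = psi (s, t) := by
        subst hn'
        exact Prod.ext hp hq
      left
      refine ⟨(s,t), ?_, this.symm⟩
      rw [← psi_mem m η H (s,t) hpar h3, ← this]
      exact hx
    · have : x.swap = psi (s, t) := by
        subst hn'
        exact Prod.ext hq hp
      right
      refine ⟨x.swap, ⟨(s,t), ?_, this.symm⟩, Prod.swap_swap x⟩
      rw [← psi_mem _ η H (s,t) hpar h3, ← this, ← PS_swap, Prod.swap_swap]
      exact hx
  · rintro (⟨z, hz, rfl⟩ | ⟨_, ⟨z, hz, rfl⟩, rfl⟩)
    · exact (psi_mem m η H z hz.1.2 hz.2).2 hz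
    · rw [PS_swap]
      exact (psi_mem _ η H z hz.1.2 hz.2).2 hz

lemma PS_disj (m m' η R : ℝ) : Disjoint (psi '' QS m η R) (Prod.swap '' (psi '' QS m' η R)) := by
  rw [Set.disjoint_left]
  rintro _ ⟨z, hz, rfl⟩ ⟨_, ⟨w, hw, rfl⟩, e⟩
  have h1 := psi_height z hz.1.2 hz.2
  have h2 := psi_height w hw.1.2 hw.2
  rw [← e, Prod.fst_swap, Prod.snd_swap, height_swap, h2] at h1
  have hp := norm_pos' z hz.1.2
  have hq : ((z.1^2+z.2^2 : ℤ):ℚ) ≠ 0 := by exact_mod_cast hp.ne'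
  have e1 := congrArg Prod.snd e
  simp only [Prod.snd_swap, psi] at e1
  rw [h1, div_left_inj' hq] at e1
  have e2 : w.1^2-w.2^2 = 2*z.1*z.2 := by exact_mod_cast e1
  have hpar := hw.1.2
  have : (w.1+w.2)*(w.1-w.2) = 2*(z.1*z.2) := by linarith
  have h3 : ((w.1+w.2)*(w.1-w.2)) % 2 = 1 := by
    rw [Int.mul_emod, hpar, show (w.1-w.2) % 2 = 1 by omega]; rfl
  omega

lemma PS_card (m η : ℝ) (H : ℕ) : ((PS m η H).ncard : ℝ) = ((QS m η H).ncard + (QS (Real.pi/2-m) η H).ncard : ℝ) / 2 := by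
  have f1 : (psi '' QS m η H).Finite := (QS_finite _ _ _).image _
  have f2 : (psi '' QS (Real.pi/2-m) η H).Finite := (QS_finite _ _ _).image _
  rw [PS_eq, Set.ncard_union_eq (PS_disj _ _ _ _) f1 (f2.image _), Set.ncard_image_of_injective _ Prod.swap_injective,
    psi_card, psi_card]
  push_cast
  ring

theorem rational_points_on_arc_count (θ₁ θ₂ : ℝ)
    (h₁ : 0 < θ₂ - θ₁) (h₂ : θ₂ - θ₁ ≤ 2 * Real.pi) :
    Tendsto
      (fun H : ℕ =>
        (1 : ℝ) / H *
          ({pq : ℚ × ℚ |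
              (∃ t : ℝ, θ₁ ≤ t ∧ t ≤ θ₂ ∧
                (pq.1 : ℝ) = Real.cos t ∧ (pq.2 : ℝ) = Real.sin t) ∧
              height pq.1 pq.2 ≤ H}.ncard : ℝ))
      atTop (nhds (2 * (θ₂ - θ₁) / Real.pi ^ 2)) := by
  simp_rw [arc_iff θ₁ θ₂ _ _ h₁ h₂]
  have a := (QS_tendsto ((θ₁+θ₂)/2) ((θ₂-θ₁)/2) (by linarith) (by linarith)).comp tendsto_natCast_atTop_atTop
  have b := (QS_tendsto (Real.pi/2 - (θ₁+θ₂)/2) ((θ₂-θ₁)/2) (by linarith) (by linarith)).comp tendsto_natCast_atTop_atTop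
  have c := (a.add b).div_const 2
  have e : (4 * ((θ₂-θ₁)/2) / Real.pi^2 + 4 * ((θ₂-θ₁)/2) / Real.pi^2) / 2 = 2 * (θ₂ - θ₁) / Real.pi ^ 2 := by ring
  rw [e] at c
  refine c.congr fun H => ?_
  have := PS_card ((θ₁+θ₂)/2) ((θ₂-θ₁)/2) H
  unfold PS at this
  rw [this]
  simp only [Function.comp]
  ring
end
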